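/- Let U be a bounded connected open set in ℂ^m, let F : B^m(0,1) → U be an injective holomorphic map, and let 0 < s < 1 and ε > 0. Then there exists an injective holomorphic map F′ : B^m(0,1) → U such that F′(B^m(0,1)) ⊇ F(B^m(0,s)) and vol(F′(B^m(0,1))) ≥ vol(F(B^m(0,1))) + (ρ_m/(2·32^{2m}))·(vol(U) − vol(F(B^m(0,1)))) − ε. -/

import Mathlib

/-!
The volume of the image can be brought arbitrarily close to that of `U`, which suffices since
`ρ_m ≤ 1`.

The derivative of an injective holomorphic map between spaces of equal dimension is invertible
(Osgood), so that images of such maps are open. Let `F` be holomorphic and injective near the closed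
unit ball, let the distance `d > 0` from its image to a point `p` be attained at `F e` with
`‖e‖ = 1`, and let `n` be the unit vector pointing from `F e` to `p`. Add to `F` the pole
`κ (1 - ⟨e, z⟩) ^ (-1/2) n + (κ / 4) (1 - ⟨e, z⟩)⁻¹ T z`,
where `T` is the isometric factor in the polar decomposition of the derivative of `F` at `e`,
restricted to the complex tangent space of the sphere. For small `κ` and on a slightly smaller ball
the sum is injective: neither in the normal nor in the tangential directions can the difference
quotients of the pole cancel those of the linear part of `F`. The sum stays in any given
neighbourhood of `F(closed ball) ∪ ball(p, d)`, covers any given compact part of the image of the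
open ball, and covers the closed ball of radius `d / 100` around `p`.

In a connected open set every point can therefore be covered. Since removing a closed ball does not
disconnect the set, finitely many disjoint closed balls avoided by the image can be filled one after
the other, each up to the factor `1 / 100` in the radius. By Besicovitch's covering theorem such
balls make up half of the complement of the image, so that a fixed proportion of its volume can be
gained, and the supremum of the volumes of the images is the volume of `U`.
-/

open Metric MeasureTheory

noncomputable instance {m : ℕ} : MeasurableSpace (EuclideanSpace ℂ (Fin m)) := borel _
instance {m : ℕ} : BorelSpace (EuclideanSpace ℂ (Fin m)) := ⟨rfl⟩
noncomputable instance {m : ℕ} : InnerProductSpace ℝ (EuclideanSpace ℂ (Fin m)) :=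
  InnerProductSpace.rclikeToReal ℂ _

/-- Lebesgue measure on `ℂ^m ≅ ℝ^{2m}`. -/
noncomputable instance {m : ℕ} : MeasureSpace (EuclideanSpace ℂ (Fin m)) :=
  measureSpaceOfInnerProductSpace

/-- `ρ_m`: the ratio of the volume of a maximal ball inscribed in a cube of `ℝ^{2m}` to the
volume of the cube, i.e. the volume of a ball of radius `1/2` in `ℂ^m ≅ ℝ^{2m}` (the unit
cube having volume `1`). -/
noncomputable def rhoConst (m : ℕ) : ℝ :=
  (volume (ball (0 : EuclideanSpace ℂ (Fin m)) (1 / 2))).toReal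

namespace BallFilling

open Set Filter Topology

universe u

/-! ### Holomorphic functions in several variables -/

section Regularity
variable {E F : Type*} [NormedAddCommGroup E] [NormedSpace ℂ E]
  [NormedAddCommGroup F] [NormedSpace ℂ F] {f : E → F} {Ω : Set E} {z v : E}

lemma hasDerivAt_comp_line {t : ℂ} (h : DifferentiableAt ℂ f (z + t • v)) :
    HasDerivAt (fun t : ℂ => f (z + t • v)) (fderiv ℂ f (z + t • v) v) t := by
  have hline : HasDerivAt (fun t : ℂ => z + t • v) v t := by
    simpa using ((hasDerivAt_id t).smul_const v).const_add z
  exact h.hasFDerivAt.comp_hasDerivAt t hline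

lemma hasDerivAt_comp_line_zero (h : DifferentiableAt ℂ f z) :
    HasDerivAt (fun t : ℂ => f (z + t • v)) (fderiv ℂ f z v) 0 := by
  have h' : DifferentiableAt ℂ f (z + (0 : ℂ) • v) := by simpa using h
  simpa using hasDerivAt_comp_line h'

lemma differentiableOn_comp_line (hΩ : IsOpen Ω) (hf : DifferentiableOn ℂ f Ω) (z v : E) :
    DifferentiableOn ℂ (fun t : ℂ => f (z + t • v)) {t | z + t • v ∈ Ω} := fun _ ht =>
  (hasDerivAt_comp_line (hf.differentiableAt (hΩ.mem_nhds ht))).differentiableAt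
    |>.differentiableWithinAt

lemma hasFDerivAt_comp_add {c x : E} (hΩ : IsOpen Ω) (hf : DifferentiableOn ℂ f Ω)
    (hx : x + c ∈ Ω) : HasFDerivAt (fun x => f (x + c)) (fderiv ℂ f (x + c)) x := by
  simpa [Function.comp_def] using (hf.differentiableAt (hΩ.mem_nhds hx)).hasFDerivAt.comp x
    ((hasFDerivAt_id x).add_const c)

lemma norm_fderiv_le_of_forall_mem_sphere_norm_le {r C : ℝ} (hr : 0 < r)
    (hd : DifferentiableAt ℂ f z) (hf : DiffContOnCl ℂ f (ball z r)) (hC0 : 0 ≤ C)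
    (hC : ∀ x ∈ sphere z r, ‖f x‖ ≤ C) : ‖fderiv ℂ f z‖ ≤ C / r := by
  refine ContinuousLinearMap.opNorm_le_bound _ (by positivity) fun v => ?_
  rcases eq_or_ne v 0 with rfl | hv
  · simp
  have hv' : 0 < ‖v‖ := norm_pos_iff.2 hv
  have hmaps : MapsTo (fun t : ℂ => z + t • v) (ball 0 (r / ‖v‖)) (ball z r) := fun t ht => by
    simpa [dist_eq_norm, norm_smul] using (lt_div_iff₀ hv').1 (mem_ball_zero_iff.1 ht)
  have hline : Differentiable ℂ fun t : ℂ => z + t • v := by fun_prop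
  have key := Complex.norm_deriv_le_of_forall_mem_sphere_norm_le (div_pos hr hv')
    (hf.comp hline.diffContOnCl hmaps) (fun t ht => hC _ (by
      rw [mem_sphere_zero_iff_norm] at ht
      simp [norm_smul, ht, hv'.ne']))
  rw [Function.comp_def, (hasDerivAt_comp_line_zero hd).deriv] at key
  exact key.trans_eq (by field_simp)

lemma exists_ball_norm_fderiv_le (hΩ : IsOpen Ω) (hf : DifferentiableOn ℂ f Ω) (hz : z ∈ Ω) :
    ∃ r > 0, ball z r ⊆ Ω ∧ ∃ C, 0 ≤ C ∧ ∀ x ∈ ball z r, ‖fderiv ℂ f x‖ ≤ C := by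
  have hbdd : ∀ᶠ x in 𝓝 z, ‖f x‖ ≤ ‖f z‖ + 1 :=
    ((hf.continuousOn.continuousAt (hΩ.mem_nhds hz)).norm.eventually_lt_const
      (lt_add_one _)).mono fun _ => le_of_lt
  obtain ⟨r, hr, hball⟩ := Metric.eventually_nhds_iff_ball.1 ((hΩ.eventually_mem hz).and hbdd)
  refine ⟨r / 2, by positivity, fun x hx => (hball x (ball_subset_ball (by linarith) hx)).1,
    (‖f z‖ + 1) / (r / 3), by positivity, fun x hx => ?_⟩
  have hsub : closedBall x (r / 3) ⊆ ball z r :=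
    closedBall_subset_ball' (by linarith [mem_ball.1 hx])
  have hd : DifferentiableOn ℂ f (closedBall x (r / 3)) := hf.mono fun y hy => (hball y (hsub hy)).1
  refine norm_fderiv_le_of_forall_mem_sphere_norm_le (by positivity)
    (hf.differentiableAt (hΩ.mem_nhds (hball x (hsub (mem_closedBall_self (by positivity)))).1))
    (hd.diffContOnCl_ball subset_rfl) (by positivity)
    fun y hy => (hball y (hsub (sphere_subset_closedBall hy))).2

/-- Local Lipschitz continuity of the derivative comes from the Cauchy estimate for the difference
of the map and its translates. -/
lemma continuousOn_fderiv (hΩ : IsOpen Ω) (hf : DifferentiableOn ℂ f Ω) :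
    ContinuousOn (fderiv ℂ f) Ω := by
  intro z hz
  obtain ⟨r, hr, hrΩ, C, hC0, hC⟩ := exists_ball_norm_fderiv_le hΩ hf hz
  have hlip : ∀ x ∈ ball z r, ∀ y ∈ ball z r, ‖f y - f x‖ ≤ C * ‖y - x‖ := fun x hx y hy =>
    (convex_ball z r).norm_image_sub_le_of_norm_fderiv_le
      (fun x hx => hf.differentiableAt (hΩ.mem_nhds (hrΩ hx))) hC hx hy
  refine (continuousAt_of_locally_lipschitz (show 0 < r / 2 by positivity) (C / (r / 3))
    fun w hw => ?_).continuousWithinAt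
  have hshift : ∀ x ∈ closedBall z (r / 3), x + (w - z) ∈ ball z r := fun x hx => by
    have hadd : dist (x + (w - z)) z ≤ dist x z + dist w z := by
      simpa only [dist_eq_norm, sub_add_eq_add_sub] using norm_add_le (x - z) (w - z)
    rw [mem_closedBall] at hx
    rw [mem_ball]
    linarith
  have hsub : closedBall z (r / 3) ⊆ ball z r := closedBall_subset_ball (by linarith)
  have hd : ∀ x ∈ closedBall z (r / 3), HasFDerivAt (fun x => f (x + (w - z)) - f x)
      (fderiv ℂ f (x + (w - z)) - fderiv ℂ f x) x := fun x hx =>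
    (hasFDerivAt_comp_add hΩ hf (hrΩ (hshift x hx))).sub
      (hf.differentiableAt (hΩ.mem_nhds (hrΩ (hsub hx)))).hasFDerivAt
  have hz' := hd z (mem_closedBall_self (by positivity))
  have key := norm_fderiv_le_of_forall_mem_sphere_norm_le (C := C * ‖w - z‖)
    (show 0 < r / 3 by positivity) hz'.differentiableAt
    (DifferentiableOn.diffContOnCl_ball (fun x hx =>
      (hd x hx).differentiableAt.differentiableWithinAt) subset_rfl) (by positivity) fun x hx => by
      have hx' := sphere_subset_closedBall hx
      simpa using hlip x (hsub hx') _ (hshift x hx')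
  rw [hz'.fderiv, add_sub_cancel] at key
  rw [dist_eq_norm, dist_eq_norm]
  exact key.trans_eq (by ring)

lemma contDiffAt_one_of_differentiableOn (hΩ : IsOpen Ω) (hf : DifferentiableOn ℂ f Ω)
    (hz : z ∈ Ω) : ContDiffAt ℂ 1 f z :=
  contDiffAt_one_iff.2 ⟨fderiv ℂ f, Ω, hΩ.mem_nhds hz, continuousOn_fderiv hΩ hf,
    fun _ hx => (hf.differentiableAt (hΩ.mem_nhds hx)).hasFDerivAt⟩

lemma hasStrictFDerivAt_of_differentiableOn (hΩ : IsOpen Ω) (hf : DifferentiableOn ℂ f Ω)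
    (hz : z ∈ Ω) : HasStrictFDerivAt f (fderiv ℂ f z) z :=
  (contDiffAt_one_of_differentiableOn hΩ hf hz).hasStrictFDerivAt one_ne_zero

lemma add_smul_mem_ball {r ρ : ℝ} {x : E} {t : ℂ} (hx : x ∈ ball z (r / 2))
    (hρ : ρ * (‖v‖ + 1) ≤ r / 2) (ht : ‖t‖ ≤ ρ) : x + t • v ∈ ball z r := by
  have htv : ‖t • v‖ ≤ r / 2 := by
    rw [norm_smul]
    nlinarith [norm_nonneg v, norm_nonneg t]
  have hadd : dist (x + t • v) z ≤ dist x z + ‖t • v‖ := by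
    simpa only [dist_eq_norm, sub_add_eq_add_sub] using norm_add_le (x - z) (t • v)
  rw [mem_ball] at hx ⊢
  linarith

lemma differentiableAt_circleIntegral_smul_line {ρ δ C : ℝ} {k : ℂ → ℂ} (hΩ : IsOpen Ω)
    (hf : DifferentiableOn ℂ f Ω) (hk : ContinuousOn k (sphere 0 |ρ|)) (hδ : 0 < δ)
    (hsub : ∀ x ∈ ball z δ, ∀ t ∈ sphere (0 : ℂ) |ρ|, x + t • v ∈ Ω)
    (hC : ∀ x ∈ ball z δ, ∀ t ∈ sphere (0 : ℂ) |ρ|, ‖fderiv ℂ f (x + t • v)‖ ≤ C) :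
    DifferentiableAt ℂ (fun x => ∮ t in C(0, ρ), k t • f (x + t • v)) z := by
  set κ : ℝ → ℂ := fun θ => deriv (circleMap 0 ρ) θ * k (circleMap 0 ρ θ) with hκ
  have hmem := circleMap_mem_sphere' (0 : ℂ) ρ
  have hκc : Continuous κ := by
    simp only [hκ, deriv_circleMap]
    exact (by fun_prop : Continuous fun θ => circleMap 0 ρ θ * Complex.I).mul
      (hk.comp_continuous (continuous_circleMap 0 ρ) hmem)
  have hz : z ∈ ball z δ := mem_ball_self hδ
  have hcont : ∀ x ∈ ball z δ, Continuous fun θ => κ θ • f (x + circleMap 0 ρ θ • v) :=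
    fun x hx => hκc.smul
      (hf.continuousOn.comp_continuous (by fun_prop) fun θ => hsub x hx _ (hmem θ))
  have hcont' : Continuous fun θ => κ θ • fderiv ℂ f (z + circleMap 0 ρ θ • v) :=
    hκc.smul ((continuousOn_fderiv hΩ hf).comp_continuous (by fun_prop)
      fun θ => hsub z hz _ (hmem θ))
  have hint := intervalIntegral.hasFDerivAt_integral_of_dominated_of_fderiv_le (𝕜 := ℂ)
    (μ := volume) (a := 0) (b := 2 * Real.pi)
    (F := fun x θ => κ θ • f (x + circleMap 0 ρ θ • v))
    (F' := fun x θ => κ θ • fderiv ℂ f (x + circleMap 0 ρ θ • v))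
    (bound := fun θ => ‖κ θ‖ * C) (isOpen_ball.mem_nhds hz)
    (by
      filter_upwards [isOpen_ball.mem_nhds hz] with x hx
      exact (hcont x hx).aestronglyMeasurable)
    ((hcont z hz).intervalIntegrable _ _) hcont'.aestronglyMeasurable
    (Eventually.of_forall fun θ _ x hx => by
      rw [norm_smul]
      gcongr
      exact hC x hx _ (hmem θ))
    ((hκc.norm.mul continuous_const).intervalIntegrable _ _)
    (Eventually.of_forall fun θ _ x hx =>
      (hasFDerivAt_comp_add hΩ hf (hsub x hx _ (hmem θ))).const_smul _)
  simpa only [circleIntegral, smul_smul] using hint.differentiableAt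

variable [CompleteSpace F]

lemma fderiv_apply_eq_circleIntegral {ρ : ℝ} (hΩ : IsOpen Ω) (hf : DifferentiableOn ℂ f Ω)
    (hρ : 0 < ρ) (hsub : ∀ t : ℂ, ‖t‖ ≤ ρ → z + t • v ∈ Ω) :
    fderiv ℂ f z v = (2 * Real.pi * Complex.I : ℂ)⁻¹ •
      ∮ t in C(0, ρ), ((t - 0) ^ 2)⁻¹ • f (z + t • v) := by
  have hcauchy := Complex.two_pi_I_inv_smul_circleIntegral_sub_sq_inv_smul_of_differentiable
    (hΩ.preimage (show Continuous fun t : ℂ => z + t • v by fun_prop)) (c := 0) (w₀ := 0) (R := ρ)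
    (fun t ht => hsub t (by simpa using ht)) (differentiableOn_comp_line hΩ hf z v)
    (mem_ball_self hρ)
  have hz : z ∈ Ω := by simpa using hsub 0 (by simpa using hρ.le)
  rw [hcauchy, (hasDerivAt_comp_line_zero (hf.differentiableAt (hΩ.mem_nhds hz))).deriv]

lemma differentiableOn_fderiv_apply (hΩ : IsOpen Ω) (hf : DifferentiableOn ℂ f Ω) (v : E) :
    DifferentiableOn ℂ (fun z => fderiv ℂ f z v) Ω := by
  intro z hz
  obtain ⟨r, hr, hrΩ, C, -, hC⟩ := exists_ball_norm_fderiv_le hΩ hf hz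
  set ρ : ℝ := r / 2 / (‖v‖ + 1) with hρ
  have hρ0 : 0 < ρ := by positivity
  have hρv : ρ * (‖v‖ + 1) ≤ r / 2 := by rw [hρ, div_mul_cancel₀ _ (by positivity)]
  have hsphere : ∀ x ∈ ball z (r / 2), ∀ t ∈ sphere (0 : ℂ) |ρ|, x + t • v ∈ ball z r :=
    fun x hx t ht => add_smul_mem_ball hx hρv (by
      rw [mem_sphere_zero_iff_norm.1 ht, abs_of_pos hρ0])
  have hk : ContinuousOn (fun t : ℂ => ((t - 0) ^ 2)⁻¹) (sphere 0 |ρ|) :=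
    ContinuousOn.inv₀ (by fun_prop) fun t ht => by
      simpa using ne_zero_of_mem_sphere (abs_pos.2 hρ0.ne').ne' ⟨t, ht⟩
  refine (((differentiableAt_circleIntegral_smul_line hΩ hf hk (half_pos hr)
    (fun x hx t ht => hrΩ (hsphere x hx t ht)) fun x hx t ht => hC _ (hsphere x hx t ht)).const_smul
    (2 * Real.pi * Complex.I : ℂ)⁻¹).congr_of_eventuallyEq ?_).differentiableWithinAt
  filter_upwards [ball_mem_nhds z (half_pos hr)] with x hx
  exact fderiv_apply_eq_circleIntegral hΩ hf hρ0 fun t ht => hrΩ (add_smul_mem_ball hx hρv ht)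

end Regularity

section OneVariable
variable {φ : ℂ → ℂ} {z : ℂ} {k : ℕ}

lemma exists_analyticAt_pow_eq {h : ℂ → ℂ} (hh : AnalyticAt ℂ h z) (hz : h z ≠ 0) (hk : k ≠ 0) :
    ∃ r : ℂ → ℂ, AnalyticAt ℂ r z ∧ r z ≠ 0 ∧ ∀ w, r w ^ k = h w := by
  have hroot : (h z ^ ((k : ℂ)⁻¹)) ^ k = h z := Complex.cpow_nat_inv_pow _ hk
  refine ⟨fun w => h z ^ ((k : ℂ)⁻¹) * (h w / h z) ^ ((k : ℂ)⁻¹),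
    analyticAt_const.mul ((hh.div analyticAt_const hz).cpow analyticAt_const (by simp [hz])),
    by simp [hz], fun w => ?_⟩
  rw [mul_pow, hroot, Complex.cpow_nat_inv_pow _ hk]
  field_simp

lemma exists_eventually_eq_pow_of_analyticOrderAt (hφ : AnalyticAt ℂ φ z)
    (hord : analyticOrderAt φ z = k) (hk : k ≠ 0) :
    ∃ χ : ℂ → ℂ, ∃ a ≠ 0, HasStrictDerivAt χ a z ∧ χ z = 0 ∧ ∀ᶠ w in 𝓝 z, φ w = χ w ^ k := by
  obtain ⟨h, hh, hhz, heq⟩ := hφ.analyticOrderAt_eq_natCast.1 hord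
  obtain ⟨r, hr, hrz, hrk⟩ := exists_analyticAt_pow_eq hh hhz hk
  have hχ : HasStrictDerivAt (fun w => (w - z) * r w) (r z) z := by
    simpa using HasStrictDerivAt.fun_mul ((hasStrictDerivAt_id z).sub_const z) hr.hasStrictDerivAt
  refine ⟨_, r z, hrz, hχ, by simp, heq.mono fun w hw => ?_⟩
  rw [hw, smul_eq_mul, mul_pow, hrk]

/-- A local coordinate `χ` takes both values `η` and `ζ η`, `ζ` a primitive `k`-th root of unity. -/
lemma not_injOn_of_eventually_eq_pow {χ : ℂ → ℂ} {a : ℂ} {V : Set ℂ} (hV : V ∈ 𝓝 z)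
    (ha : a ≠ 0) (hχ : HasStrictDerivAt χ a z) (hχz : χ z = 0) (hk : 2 ≤ k)
    (heq : ∀ᶠ w in 𝓝 z, φ w = χ w ^ k) : ¬ InjOn φ V := by
  intro hinj
  obtain ⟨ζ, hζ⟩ : ∃ ζ : ℂ, IsPrimitiveRoot ζ k :=
    ⟨_, Complex.isPrimitiveRoot_exp k (by omega)⟩
  have himg : ∀ᶠ η in 𝓝 (0 : ℂ), η ∈ χ '' {w | w ∈ V ∧ φ w = χ w ^ k} := by
    have := image_mem_map (m := χ) (inter_mem hV heq)
    rwa [hχ.map_nhds_eq ha, hχz] at this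
  have hmul : Tendsto (fun η : ℂ => ζ * η) (𝓝 0) (𝓝 0) := by
    simpa using (continuous_const_mul ζ).tendsto 0
  obtain ⟨η, ⟨⟨w₁, ⟨hw₁, e₁⟩, c₁⟩, ⟨w₂, ⟨hw₂, e₂⟩, c₂⟩⟩, hη⟩ :=
    (((himg.and (hmul.eventually himg)).filter_mono nhdsWithin_le_nhds).and
      (self_mem_nhdsWithin (s := {(0 : ℂ)}ᶜ))).exists
  have hval : φ w₁ = φ w₂ := by rw [e₁, e₂, c₁, c₂, mul_pow, hζ.pow_eq_one, one_mul]
  rw [← hinj hw₁ hw₂ hval, c₁] at c₂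
  exact hζ.ne_one (by omega) (mul_right_cancel₀ hη ((one_mul η).trans c₂)).symm

lemma deriv_ne_zero_of_injOn {V : Set ℂ} (hV : IsOpen V) (hd : DifferentiableOn ℂ φ V)
    (hinj : InjOn φ V) (hz : z ∈ V) : deriv φ z ≠ 0 := by
  set ψ : ℂ → ℂ := fun w => φ w - φ z with hψ
  have hinj' : InjOn ψ V := fun x hx y hy h => hinj hx hy (sub_left_injective h)
  have hψan : AnalyticAt ℂ ψ z := (hd.analyticAt (hV.mem_nhds hz)).sub analyticAt_const
  have hψz : ψ z = 0 := sub_self _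
  have hord : analyticOrderAt ψ z ≠ ⊤ := fun htop => by
    obtain ⟨w, ⟨hw, hwV⟩, hwz⟩ :=
      ((((analyticOrderAt_eq_top.1 htop).and (hV.eventually_mem hz)).filter_mono
        nhdsWithin_le_nhds).and (self_mem_nhdsWithin (s := {z}ᶜ))).exists
    exact hwz (hinj' hwV hz (hw.trans hψz.symm))
  obtain ⟨k, hk⟩ := ENat.ne_top_iff_exists.1 hord
  have hk0 : k ≠ 0 := fun h => hψan.analyticOrderAt_ne_zero.2 hψz (by rw [← hk, h, Nat.cast_zero])
  obtain ⟨χ, a, ha, hχ, hχz, heq⟩ := exists_eventually_eq_pow_of_analyticOrderAt hψan hk.symm hk0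
  obtain rfl | hk2 : k = 1 ∨ 2 ≤ k := by omega
  · have hψχ : ψ =ᶠ[𝓝 z] χ := heq.mono fun w hw => hw.trans (pow_one _)
    have hderiv : deriv ψ z = a := by rw [hψχ.deriv_eq, hχ.hasDerivAt.deriv]
    rwa [← deriv_sub_const (φ z), ← hψ, hderiv]
  · exact absurd hinj' (not_injOn_of_eventually_eq_pow (hV.mem_nhds hz) ha hχ hχz hk2 heq)

end OneVariable

section InjectiveDerivative

variable {E F : Type*} [NormedAddCommGroup E] [NormedSpace ℂ E] [FiniteDimensional ℂ E]
  [NormedAddCommGroup F] [NormedSpace ℂ F] {f : E → F} {f' : E →L[ℂ] F} {z : E}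

lemma exists_eventually_mul_norm_sub_le (hf : HasStrictFDerivAt f f' z)
    (hinj : Function.Injective f') :
    ∃ c > 0, ∀ᶠ q : E × E in 𝓝 (z, z), c * ‖q.1 - q.2‖ ≤ ‖f q.1 - f q.2‖ := by
  have hind : IsInducing f' :=
    (LinearMap.isClosedEmbedding_of_injective (LinearMap.ker_eq_bot.2 hinj)).isInducing
  obtain ⟨C, hC, hbound⟩ := (hf.isTheta_sub hind).2.exists_pos
  refine ⟨C⁻¹, inv_pos.2 hC, hbound.bound.mono fun q hq => ?_⟩
  rwa [inv_mul_le_iff₀ hC]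

lemma exists_injOn_nhds (hf : HasStrictFDerivAt f f' z) (hinj : Function.Injective f') :
    ∃ V ∈ 𝓝 z, InjOn f V := by
  obtain ⟨c, hc, h⟩ := exists_eventually_mul_norm_sub_le hf hinj
  rw [nhds_prod_eq] at h
  obtain ⟨V, hV, hVsub⟩ := mem_prod_self_iff.1 h
  refine ⟨V, hV, fun x hx y hy hxy => ?_⟩
  have hle : c * ‖x - y‖ ≤ ‖f x - f y‖ := hVsub (mk_mem_prod hx hy)
  rw [hxy, sub_self, norm_zero] at hle
  exact sub_eq_zero.1 (norm_le_zero_iff.1 (nonpos_of_mul_nonpos_right hle hc))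

variable [FiniteDimensional ℂ F]

lemma exists_fibre_parametrization (hf : ContDiffAt ℂ 1 f z) (hd : HasStrictFDerivAt f f' z)
    (hsurj : f'.range = ⊤) {K : Submodule ℂ E} (hK : f'.ker = K) :
    ∃ σ : K → E, σ 0 = z ∧ HasStrictFDerivAt σ K.subtypeL 0 ∧
      ∀ᶠ k in 𝓝 0, DifferentiableAt ℂ σ k ∧ f (σ k) = f z := by
  subst hK
  have : CompleteSpace E := FiniteDimensional.complete ℂ E
  have : CompleteSpace F := FiniteDimensional.complete ℂ F
  let φ := hd.implicitFunctionDataOfComplemented f f' hsurj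
    (Submodule.ClosedComplemented.of_finiteDimensional f'.ker)
  have hpt : φ.prodFun φ.pt = (f z, 0) := by simp [φ]
  have hsmooth : ContDiffAt ℂ 1 φ.implicitFunction.uncurry (f z, 0) := by
    rw [← hpt]
    refine φ.contDiffAt_implicitFunction hf ?_ one_ne_zero
    simp only [φ, HasStrictFDerivAt.implicitFunctionDataOfComplemented]
    fun_prop
  have htendsto : Tendsto (fun k : f'.ker => (f z, k)) (𝓝 0) (𝓝 (f z, 0)) :=
    (by fun_prop : Continuous fun k : f'.ker => (f z, k)).tendsto 0
  refine ⟨hd.implicitFunction f f' hsurj (f z), hd.implicitFunction_apply_image hsurj,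
    hd.to_implicitFunction hsurj, ?_⟩
  filter_upwards [htendsto.eventually (hsmooth.eventually (by simp)),
    htendsto.eventually (hd.map_implicitFunction_eq hsurj)] with k hdiff hfibre
  exact ⟨(hdiff.differentiableAt one_ne_zero).comp k (by fun_prop : DifferentiableAt ℂ
    (fun k : f'.ker => (f z, k)) k), hfibre⟩

end InjectiveDerivative

section LinearPart

variable {E F : Type*} [NormedAddCommGroup E] [NormedSpace ℂ E] [FiniteDimensional ℂ E]
  [NormedAddCommGroup F] [NormedSpace ℂ F] [FiniteDimensional ℂ F] {f : E → F} {Ω : Set E} {z : E}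
  {N : Submodule ℂ F}

lemma exists_kernel_parametrization (hΩ : IsOpen Ω) (hf : DifferentiableOn ℂ f Ω) (hz : z ∈ Ω)
    (hN : IsCompl (fderiv ℂ f z).range N) :
    ∃ σ : (fderiv ℂ f z).ker → E, σ 0 = z ∧
      HasStrictFDerivAt σ (fderiv ℂ f z).ker.subtypeL 0 ∧
      ∀ᶠ k in 𝓝 0, DifferentiableAt ℂ σ k ∧ f (σ k) - f z ∈ N := by
  set L := fderiv ℂ f z
  let π : F →L[ℂ] L.range := (L.range.projectionOnto N hN).toContinuousLinearMap
  have hπ (y : F) : π y = 0 ↔ y ∈ N := Submodule.projectionOnto_apply_eq_zero_iff hN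
  have hπL (x : E) : π (L x) = ⟨L x, x, rfl⟩ :=
    Submodule.projectionOnto_apply_left hN ⟨L x, x, rfl⟩
  have hker : (π ∘L L).ker = L.ker := by
    ext x
    simp [hπL, Subtype.ext_iff]
  have hsurj : (π ∘L L).range = ⊤ :=
    LinearMap.range_eq_top.2 fun ⟨y, x, hx⟩ => ⟨x, (hπL x).trans (Subtype.ext hx)⟩
  obtain ⟨σ, hσz, hσd, hσ⟩ := exists_fibre_parametrization
    (π.contDiff.contDiffAt.comp z (contDiffAt_one_of_differentiableOn hΩ hf hz))
    (π.hasStrictFDerivAt.comp z (hasStrictFDerivAt_of_differentiableOn hΩ hf hz)) hsurj hker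
  refine ⟨σ, hσz, hσd, hσ.mono fun k hk => ⟨hk.1, (hπ _).1 ?_⟩⟩
  rw [map_sub, sub_eq_zero]
  exact hk.2

/-- Restricting `f` to a fibre of the nondegenerate part of `f` and projecting the result to a
complement of the range of the derivative keeps it injective and kills the derivative. -/
lemma exists_injOn_fderiv_eq_zero (hΩ : IsOpen Ω) (hf : DifferentiableOn ℂ f Ω)
    (hinj : InjOn f Ω) (hz : z ∈ Ω) (hN : IsCompl (fderiv ℂ f z).range N) :
    ∃ (V : Set (fderiv ℂ f z).ker) (G : (fderiv ℂ f z).ker → N), IsOpen V ∧ 0 ∈ V ∧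
      DifferentiableOn ℂ G V ∧ InjOn G V ∧ fderiv ℂ G 0 = 0 := by
  obtain ⟨σ, hσz, hσd, hσ⟩ := exists_kernel_parametrization hΩ hf hz hN
  obtain ⟨W, hW, hσinj⟩ := exists_injOn_nhds hσd Subtype.val_injective
  have hσΩ : ∀ᶠ k in 𝓝 0, σ k ∈ Ω :=
    hσd.continuousAt.eventually_mem (hΩ.mem_nhds (hσz.symm ▸ hz))
  obtain ⟨V, hV, hVo, h0⟩ := _root_.eventually_nhds_iff.1
    (hσ.and (hσΩ.and (eventually_mem_set.2 hW)))
  let ν : F →L[ℂ] N := (N.projectionOnto _ hN.symm).toContinuousLinearMap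
  refine ⟨V, fun k => ν (f (σ k)), hVo, h0, fun k hk => ?_, fun k hk k' hk' hkk' => ?_, ?_⟩
  · have hfσ : DifferentiableAt ℂ f (σ k) := hf.differentiableAt (hΩ.mem_nhds (hV k hk).2.1)
    exact (ν.differentiableAt.comp k (hfσ.comp k (hV k hk).1.1)).differentiableWithinAt
  · have hmemN : f (σ k) - f (σ k') ∈ N := by
      simpa using N.sub_mem (hV k hk).1.2 (hV k' hk').1.2
    have hmemR : f (σ k) - f (σ k') ∈ (fderiv ℂ f z).range := by
      refine (Submodule.projectionOnto_apply_eq_zero_iff hN.symm).1 ?_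
      rw [map_sub, sub_eq_zero]
      exact hkk'
    have hfσ : f (σ k) = f (σ k') :=
      sub_eq_zero.1 (Submodule.disjoint_def.1 hN.disjoint _ hmemR hmemN)
    exact hσinj (hV k hk).2.2 (hV k' hk').2.2 (hinj (hV k hk).2.1 (hV k' hk').2.1 hfσ)
  · have hfd : HasFDerivAt f (fderiv ℂ f z) (σ 0) :=
      hσz.symm ▸ (hf.differentiableAt (hΩ.mem_nhds hz)).hasFDerivAt
    refine (ν.hasFDerivAt.comp 0 (hfd.comp 0 hσd.hasFDerivAt)).fderiv.trans ?_
    ext k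
    simp

/-- Osgood's theorem in dimension `k`: an injective holomorphic map between open subsets of
`k`-dimensional spaces has injective derivative everywhere. -/
def OsgoodInDim (k : ℕ) : Prop :=
  ∀ (E F : Type u) [NormedAddCommGroup E] [NormedSpace ℂ E] [FiniteDimensional ℂ E]
    [NormedAddCommGroup F] [NormedSpace ℂ F] [FiniteDimensional ℂ F],
    Module.finrank ℂ E = k → Module.finrank ℂ F = k →
    ∀ (Ω : Set E) (f : E → F), IsOpen Ω → DifferentiableOn ℂ f Ω → InjOn f Ω →
      ∀ z ∈ Ω, Function.Injective (fderiv ℂ f z)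

end LinearPart

section Dichotomy

variable {E F : Type u} [NormedAddCommGroup E] [NormedSpace ℂ E] [FiniteDimensional ℂ E]
  [NormedAddCommGroup F] [NormedSpace ℂ F] [FiniteDimensional ℂ F] {f : E → F} {Ω : Set E} {z : E}

lemma OsgoodInDim.fderiv_eq_zero_or_injective {n : ℕ} (ih : ∀ k < n, OsgoodInDim.{u} k)
    (hE : Module.finrank ℂ E = n) (hF : Module.finrank ℂ F = n) (hΩ : IsOpen Ω)
    (hf : DifferentiableOn ℂ f Ω) (hinj : InjOn f Ω) (hz : z ∈ Ω) :
    fderiv ℂ f z = 0 ∨ Function.Injective (fderiv ℂ f z) := by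
  set L := fderiv ℂ f z
  rw [or_iff_not_imp_left]
  intro hL
  obtain ⟨N, hN⟩ := Submodule.exists_isCompl L.range
  obtain ⟨V, G, hV, h0, hG, hGinj, hG0⟩ := exists_injOn_fderiv_eq_zero hΩ hf hinj hz hN
  have hrank := LinearMap.finrank_range_add_finrank_ker (L : E →ₗ[ℂ] F)
  have hcompl := Submodule.finrank_add_eq_of_isCompl hN
  have hpos : 0 < Module.finrank ℂ L.range := Nat.pos_iff_ne_zero.2 fun h =>
    hL (ContinuousLinearMap.coe_injective
      (LinearMap.range_eq_bot.1 (Submodule.finrank_eq_zero.1 h)))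
  have hinjG := ih _ (by omega) L.ker N rfl (by omega) V G hV hG hGinj 0 h0
  rw [hG0] at hinjG
  have : Subsingleton L.ker := ⟨fun a b => hinjG rfl⟩
  exact LinearMap.ker_eq_bot.1 (Submodule.subsingleton_iff_eq_bot.1 this)

end Dichotomy

/-! ### Osgood's theorem -/

section Hurwitz

lemma exists_mem_ball_eq_zero {φ : ℂ → ℂ} {c : ℂ} {r m : ℝ} (hr : 0 < r)
    (hφ : DifferentiableOn ℂ φ (closedBall c r)) (hm : ∀ w ∈ sphere c r, m ≤ ‖φ w‖)
    (hc : ‖φ c‖ < m) : ∃ w ∈ ball c r, φ w = 0 := by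
  by_contra! hne
  have hm0 : 0 < m := (norm_nonneg _).trans_lt hc
  have hne' : ∀ w ∈ closedBall c r, φ w ≠ 0 := by
    rw [← ball_union_sphere]
    rintro w (hw | hw)
    · exact hne w hw
    · exact norm_pos_iff.1 (hm0.trans_le (hm w hw))
  have hdiff : DiffContOnCl ℂ (fun w => (φ w)⁻¹) (ball c r) := by
    refine DifferentiableOn.diffContOnCl ?_
    rw [closure_ball _ hr.ne']
    exact hφ.fun_inv hne'
  have hmax : ‖(φ c)⁻¹‖ ≤ m⁻¹ := by
    refine Complex.norm_le_of_forall_mem_frontier_norm_le isBounded_ball hdiff ?_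
      (subset_closure (mem_ball_self hr))
    rw [frontier_ball _ hr.ne']
    intro w hw
    rw [norm_inv]
    exact inv_anti₀ hm0 (hm w hw)
  rw [norm_inv, inv_le_inv₀ (norm_pos_iff.2 (hne c (mem_ball_self hr))) hm0] at hmax
  exact hc.not_ge hmax

/-- Hurwitz's theorem. -/
lemma eventually_exists_mem_ball_eq_zero {X : Type*} [TopologicalSpace X] {G : X → ℂ → ℂ} {t₀ : X}
    {c : ℂ} {r : ℝ} (hr : 0 < r)
    (hcont : ∀ w ∈ closedBall c r, ContinuousAt (Function.uncurry G) (t₀, w))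
    (hdiff : ∀ᶠ t in 𝓝 t₀, DifferentiableOn ℂ (G t) (closedBall c r)) (hzero : G t₀ c = 0)
    (hne : ∀ w ∈ sphere c r, G t₀ w ≠ 0) : ∀ᶠ t in 𝓝 t₀, ∃ w ∈ ball c r, G t w = 0 := by
  have hslice : ContinuousOn (fun w => ‖G t₀ w‖) (sphere c r) := fun w hw =>
    ((hcont w (sphere_subset_closedBall hw)).comp (f := fun w => (t₀, w))
      (by fun_prop)).norm.continuousWithinAt
  obtain ⟨w₀, hw₀, hmin⟩ := (isCompact_sphere c r).exists_isMinOn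
    (NormedSpace.sphere_nonempty.2 hr.le) hslice
  obtain ⟨m, hm0, hm⟩ := exists_between (norm_pos_iff.2 (hne w₀ hw₀))
  have hsphere : ∀ᶠ t in 𝓝 t₀, ∀ w ∈ sphere c r, m ≤ ‖G t w‖ := by
    refine (isCompact_sphere c r).eventually_forall_of_forall_eventually fun w hw => ?_
    exact (hcont w (sphere_subset_closedBall hw)).norm.eventually_const_le (hm.trans_le (hmin hw))
  have hcentre : ∀ᶠ t in 𝓝 t₀, ‖G t c‖ < m := by
    have hct : ContinuousAt (fun t => ‖G t c‖) t₀ :=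
      ((hcont c (mem_closedBall_self hr.le)).comp (f := fun t => (t, c)) (by fun_prop)).norm
    exact hct.eventually_lt_const (by simpa [hzero] using hm0)
  filter_upwards [hdiff, hsphere, hcentre] with t ht htm htc
  exact exists_mem_ball_eq_zero hr ht htm htc

end Hurwitz

section DirectionalDerivatives

variable {E : Type*} [NormedAddCommGroup E] [NormedSpace ℂ E] {g : E → ℂ} {Ω : Set E} {z v e : E}

/-- The iterated derivatives of `g` in the fixed direction `v`. -/
noncomputable def dirDeriv (g : E → ℂ) (v : E) : ℕ → E → ℂ
  | 0 => g
  | j + 1 => fun z => fderiv ℂ (dirDeriv g v j) z v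

lemma differentiableOn_dirDeriv (hΩ : IsOpen Ω) (hg : DifferentiableOn ℂ g Ω) (v : E) (j : ℕ) :
    DifferentiableOn ℂ (dirDeriv g v j) Ω := by
  induction j with
  | zero => exact hg
  | succ j ih => exact differentiableOn_fderiv_apply hΩ ih v

lemma isOpen_setOf_add_smul_mem (hΩ : IsOpen Ω) (z v : E) : IsOpen {w : ℂ | z + w • v ∈ Ω} :=
  hΩ.preimage (by fun_prop : Continuous fun w : ℂ => z + w • v)

lemma convex_setOf_add_smul_mem (hΩ : Convex ℝ Ω) (z v : E) :
    Convex ℝ {w : ℂ | z + w • v ∈ Ω} :=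
  (hΩ.translate_preimage_right z).linear_preimage
    ((LinearMap.toSpanSingleton ℂ E v).restrictScalars ℝ)

lemma iteratedDeriv_comp_line (hΩ : IsOpen Ω) (hg : DifferentiableOn ℂ g Ω) (z v : E) (j : ℕ) :
    ∀ w : ℂ, z + w • v ∈ Ω →
      iteratedDeriv j (fun w : ℂ => g (z + w • v)) w = dirDeriv g v j (z + w • v) := by
  induction j with
  | zero => exact fun w _ => congrFun iteratedDeriv_zero w
  | succ j ih =>
    intro w hw
    have heq : iteratedDeriv j (fun w : ℂ => g (z + w • v)) =ᶠ[𝓝 w]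
        fun w => dirDeriv g v j (z + w • v) :=
      mem_of_superset ((isOpen_setOf_add_smul_mem hΩ z v).mem_nhds hw) ih
    rw [iteratedDeriv_succ, heq.deriv_eq]
    exact (hasDerivAt_comp_line
      ((differentiableOn_dirDeriv hΩ hg v j).differentiableAt (hΩ.mem_nhds hw))).deriv

lemma analyticOnNhd_comp_line (hΩ : IsOpen Ω) (hg : DifferentiableOn ℂ g Ω) (z v : E) :
    AnalyticOnNhd ℂ (fun w : ℂ => g (z + w • v)) {w : ℂ | z + w • v ∈ Ω} :=
  (differentiableOn_comp_line hΩ hg z v).analyticOnNhd (isOpen_setOf_add_smul_mem hΩ z v)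

lemma exists_dirDeriv_ne_zero (hΩ : IsOpen Ω) (hconv : Convex ℝ Ω) (hg : DifferentiableOn ℂ g Ω)
    (hz : z ∈ Ω) (hzv : z + v ∈ Ω) (hne : g (z + v) ≠ 0) : ∃ k, dirDeriv g v k z ≠ 0 := by
  by_contra! hall
  have h0 : (0 : ℂ) ∈ {w : ℂ | z + w • v ∈ Ω} := by simpa using hz
  have h1 : (1 : ℂ) ∈ {w : ℂ | z + w • v ∈ Ω} := by simpa using hzv
  have han := analyticOnNhd_comp_line hΩ hg z v
  have horder : analyticOrderAt (fun w : ℂ => g (z + w • v)) 0 = ⊤ := by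
    refine ENat.eq_top_iff_forall_ge.2 fun k => ?_
    rw [natCast_le_analyticOrderAt_iff_iteratedDeriv_eq_zero (han 0 h0)]
    intro i _
    simpa [iteratedDeriv_comp_line hΩ hg z v i 0 h0] using hall i
  have hzero := han.eqOn_zero_of_preconnected_of_eventuallyEq_zero
    (convex_setOf_add_smul_mem hconv z v).isPreconnected h0 (analyticOrderAt_eq_top.1 horder) h1
  exact hne (by simpa using hzero)

lemma eventually_add_smul_ne_zero (hΩ : IsOpen Ω) (hg : DifferentiableOn ℂ g Ω) (hz : z ∈ Ω)
    {k : ℕ} (hk : dirDeriv g v k z ≠ 0) : ∀ᶠ w : ℂ in 𝓝[≠] 0, g (z + w • v) ≠ 0 := by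
  have h0 : (0 : ℂ) ∈ {w : ℂ | z + w • v ∈ Ω} := by simpa using hz
  refine (analyticOnNhd_comp_line hΩ hg z v 0
    h0).eventually_eq_zero_or_eventually_ne_zero.resolve_left fun hzero => hk ?_
  have heq : (fun w : ℂ => g (z + w • v)) =ᶠ[𝓝 0] fun _ => (0 : ℂ) := hzero
  simpa [heq.iteratedDeriv_eq] using (iteratedDeriv_comp_line hΩ hg z v k 0 h0).symm

lemma exists_radius_add_smul_add_smul {p : E → Prop} (hp : ∀ᶠ y in 𝓝 z, p y) (e v : E) :
    ∃ r > 0, ∀ t ∈ closedBall (0 : ℂ) r, ∀ w ∈ closedBall (0 : ℂ) r, p (z + t • e + w • v) := by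
  have htendsto : Tendsto (fun q : ℂ × ℂ => z + q.1 • e + q.2 • v) (𝓝 (0, 0)) (𝓝 z) := by
    have hcont : Continuous fun q : ℂ × ℂ => z + q.1 • e + q.2 • v := by fun_prop
    simpa using hcont.tendsto (0, 0)
  obtain ⟨r, hr, h⟩ := Metric.nhds_basis_closedBall.eventually_iff.1 (htendsto.eventually hp)
  exact ⟨r, hr, fun t ht w hw => h (closedBall_prod_same (0 : ℂ) (0 : ℂ) r ▸ mk_mem_prod ht hw)⟩

lemma eventually_exists_add_smul_eq_zero (hΩ : IsOpen Ω) (hg : DifferentiableOn ℂ g Ω) (hz : z ∈ Ω)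
    (hgz : g z = 0) (hisol : ∀ᶠ w : ℂ in 𝓝[≠] 0, g (z + w • v) ≠ 0) (e : E) {δ : ℝ} (hδ : 0 < δ) :
    ∀ᶠ t : ℂ in 𝓝 0, ∃ w ∈ ball (0 : ℂ) δ,
      z + t • e + w • v ∈ Ω ∧ g (z + t • e + w • v) = 0 := by
  obtain ⟨r₁, hr₁, hΩr⟩ := exists_radius_add_smul_add_smul (hΩ.mem_nhds hz) e v
  obtain ⟨r₂, hr₂, hne⟩ := Metric.nhds_basis_closedBall.eventually_iff.1
    (eventually_nhdsWithin_iff.1 hisol)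
  obtain ⟨r, hr, hrlt⟩ := exists_between (lt_min (lt_min hr₁ hr₂) hδ)
  obtain ⟨⟨hrr₁, hrr₂⟩, hrδ⟩ := (lt_min_iff.1 hrlt).imp_left lt_min_iff.1
  have hmem : ∀ t ∈ closedBall (0 : ℂ) r, ∀ w ∈ closedBall (0 : ℂ) r, z + t • e + w • v ∈ Ω :=
    fun t ht w hw => hΩr t (closedBall_subset_closedBall hrr₁.le ht) w
      (closedBall_subset_closedBall hrr₁.le hw)
  have hdiff : ∀ t ∈ closedBall (0 : ℂ) r, ∀ w ∈ closedBall (0 : ℂ) r,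
      DifferentiableAt ℂ g (z + t • e + w • v) :=
    fun t ht w hw => hg.differentiableAt (hΩ.mem_nhds (hmem t ht w hw))
  have hzeros : ∀ᶠ t : ℂ in 𝓝 0, ∃ w ∈ ball (0 : ℂ) r, g (z + t • e + w • v) = 0 := by
    refine eventually_exists_mem_ball_eq_zero (G := fun t w => g (z + t • e + w • v)) hr
      (fun w hw => ?_) ?_ (by simpa using hgz) fun w hw => ?_
    · exact (hdiff 0 (mem_closedBall_self hr.le) w hw).continuousAt.comp
        (f := fun q : ℂ × ℂ => z + q.1 • e + q.2 • v) (by fun_prop)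
    · filter_upwards [closedBall_mem_nhds 0 hr] with t ht w hw
      exact (hasDerivAt_comp_line (hdiff t ht w hw)).differentiableAt.differentiableWithinAt
    · have hw0 : w ≠ 0 := ne_of_mem_sphere hw hr.ne'
      simpa using hne (closedBall_subset_closedBall hrr₂.le (sphere_subset_closedBall hw)) hw0
  filter_upwards [hzeros, closedBall_mem_nhds 0 hr] with t ⟨w, hw, hgw⟩ ht
  exact ⟨w, ball_subset_ball hrδ.le hw, hmem t ht w (ball_subset_closedBall hw), hgw⟩

lemma exists_implicit_curve {ψ : E → ℂ} (hψ : ContDiffAt ℂ 1 ψ z) (hv : fderiv ℂ ψ z v ≠ 0)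
    (e : E) : ∃ w : ℂ → ℂ, (∀ᶠ t in 𝓝 0, DifferentiableAt ℂ w t) ∧
      ∀ᶠ q : ℂ × ℂ in 𝓝 (0, 0), ψ (z + q.1 • e + q.2 • v) = ψ z → w q.1 = q.2 := by
  set H : ℂ × ℂ → ℂ := fun q => ψ (z + q.1 • e + q.2 • v)
  have hH : ContDiffAt ℂ 1 H (0, 0) := by
    refine ContDiffAt.comp (0, 0) (g := ψ) (f := fun q : ℂ × ℂ => z + q.1 • e + q.2 • v) ?_
      (by fun_prop)
    simpa using hψ
  have hpartial : fderiv ℂ H (0, 0) ∘L .inr ℂ ℂ ℂ =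
      ContinuousLinearMap.toSpanSingleton ℂ (fderiv ℂ ψ z v) := by
    have hslice : HasDerivAt (fun w : ℂ => H (0, w)) (fderiv ℂ ψ z v) 0 := by
      simpa [H] using hasDerivAt_comp_line_zero (hψ.differentiableAt one_ne_zero)
    have hchain : HasDerivAt (fun w : ℂ => H (0, w)) (fderiv ℂ H (0, 0) (0, 1)) 0 :=
      (hH.differentiableAt one_ne_zero).hasFDerivAt.comp_hasDerivAt 0
        ((hasDerivAt_const 0 0).prodMk (hasDerivAt_id 0))
    ext
    simpa using hchain.unique hslice
  have hinv : (fderiv ℂ H (0, 0) ∘L .inr ℂ ℂ ℂ).IsInvertible := by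
    rw [hpartial]
    exact ⟨ContinuousLinearEquiv.unitsEquivAut ℂ (Units.mk0 _ hv), by ext; simp⟩
  refine ⟨hH.implicitFunction one_ne_zero hinv, ?_, ?_⟩
  · have := hH.contDiffAt_implicitFunction one_ne_zero hinv
    filter_upwards [this.eventually (by simp)] with t ht using ht.differentiableAt one_ne_zero
  · filter_upwards [hH.eventually_apply_eq_iff_implicitFunction one_ne_zero hinv] with q hq h
    exact hq.1 (by simpa [H] using h)

/-- Take a zero of minimal multiplicity `k` along lines in direction `v`. By minimality all zeros
of `g` are zeros of its `(k-1)`-st derivative in direction `v`, which is transverse to `v`, so that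
the implicit function theorem applies to it. -/
lemma exists_zero_curve (hΩ : IsOpen Ω) (hconv : Convex ℝ Ω) (hg : DifferentiableOn ℂ g Ω)
    (hz : z ∈ Ω) (hzv : z + v ∈ Ω) (hgz : g z = 0) (hgzv : g (z + v) ≠ 0) (e : E) :
    ∃ (p : E) (w : ℂ → ℂ), ∀ᶠ t in 𝓝 0, DifferentiableAt ℂ w t ∧
      p + t • e + w t • v ∈ Ω ∧ g (p + t • e + w t • v) = 0 := by
  classical
  have hex : ∃ k, ∃ p ∈ Ω, g p = 0 ∧ dirDeriv g v k p ≠ 0 :=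
    (exists_dirDeriv_ne_zero hΩ hconv hg hz hzv hgzv).imp fun k hk => ⟨z, hz, hgz, hk⟩
  obtain ⟨k, ⟨p, hp, hgp, hkp⟩, hmin⟩ := Nat.findX hex
  obtain ⟨j, rfl⟩ : ∃ j, k = j + 1 := Nat.exists_eq_succ_of_ne_zero (by rintro rfl; exact hkp hgp)
  have hψ0 : ∀ y ∈ Ω, g y = 0 → dirDeriv g v j y = 0 := fun y hy hgy => by
    by_contra hne
    exact hmin j j.lt_succ_self ⟨y, hy, hgy, hne⟩
  obtain ⟨w, hwd, hw⟩ := exists_implicit_curve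
    (contDiffAt_one_of_differentiableOn hΩ (differentiableOn_dirDeriv hΩ hg v j) hp) hkp e
  obtain ⟨r, hr, hrw⟩ := Metric.nhds_basis_ball.eventually_iff.1 hw
  refine ⟨p, w, ?_⟩
  filter_upwards [hwd, ball_mem_nhds 0 hr, eventually_exists_add_smul_eq_zero hΩ hg hp hgp
    (eventually_add_smul_ne_zero hΩ hg hp hkp) e hr] with t htd htr ⟨w', hw'r, hmem, hzero⟩
  have hwt : w t = w' := hrw (ball_prod_same (0 : ℂ) (0 : ℂ) r ▸ mk_mem_prod htr hw'r)
    ((hψ0 _ hmem hzero).trans (hψ0 p hp hgp).symm)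
  exact ⟨htd, by rwa [hwt], by rwa [hwt]⟩

end DirectionalDerivatives

section LocalLowerBounds

variable {E F : Type*} [NormedAddCommGroup E] [NormedAddCommGroup F] {f : E → F}

lemma exists_eventually_mul_norm_sub_le_of_ne {x y : E} (hx : ContinuousAt f x)
    (hy : ContinuousAt f y) (hne : f x ≠ f y) :
    ∃ c > 0, ∀ᶠ q : E × E in 𝓝 (x, y), c * ‖q.1 - q.2‖ ≤ ‖f q.1 - f q.2‖ := by
  have hpos : 0 < ‖f x - f y‖ := norm_sub_pos_iff.2 hne
  obtain ⟨c, hc, hlt⟩ : ∃ c > 0, c * ‖x - y‖ < ‖f x - f y‖ := by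
    simpa only [mul_comm] using exists_pos_mul_lt hpos ‖x - y‖
  refine ⟨c, hc, ?_⟩
  have hleft : ContinuousAt (fun q : E × E => c * ‖q.1 - q.2‖) (x, y) := by fun_prop
  have hright : ContinuousAt (fun q : E × E => ‖f q.1 - f q.2‖) (x, y) :=
    ((hx.comp' (f := Prod.fst) continuousAt_fst).sub
      (hy.comp' (f := Prod.snd) continuousAt_snd)).norm
  exact (hleft.eventually_lt hright hlt).mono fun q hq => hq.le

lemma exists_forall_mul_norm_sub_le {K : Set E} (hK : IsCompact K)
    (h : ∀ x ∈ K, ∀ y ∈ K, ∃ c > 0,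
      ∀ᶠ q : E × E in 𝓝 (x, y), c * ‖q.1 - q.2‖ ≤ ‖f q.1 - f q.2‖) :
    ∃ c > 0, ∀ x ∈ K, ∀ y ∈ K, c * ‖x - y‖ ≤ ‖f x - f y‖ := by
  let p : Set (E × E) → Prop := fun S => ∃ c > 0, ∀ q ∈ S, c * ‖q.1 - q.2‖ ≤ ‖f q.1 - f q.2‖
  have hp : p (K ×ˢ K) := by
    refine (hK.prod hK).induction_on (p := p) ⟨1, one_pos, by simp⟩
      (fun S T hST ⟨c, hc, hT⟩ => ⟨c, hc, fun q hq => hT q (hST hq)⟩) ?_ ?_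
    · rintro S T ⟨c, hc, hS⟩ ⟨c', hc', hT⟩
      refine ⟨min c c', lt_min hc hc', ?_⟩
      rintro q (hq | hq)
      · exact (by gcongr; exact min_le_left _ _ : _ ≤ c * ‖q.1 - q.2‖).trans (hS q hq)
      · exact (by gcongr; exact min_le_right _ _ : _ ≤ c' * ‖q.1 - q.2‖).trans (hT q hq)
    · rintro ⟨x, y⟩ ⟨hx, hy⟩
      obtain ⟨c, hc, hev⟩ := h x hx y hy
      exact ⟨_, mem_nhdsWithin_of_mem_nhds hev, c, hc, fun q hq => hq⟩
  obtain ⟨c, hc, hcK⟩ := hp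
  exact ⟨c, hc, fun x hx y hy => hcK (x, y) ⟨hx, hy⟩⟩

end LocalLowerBounds

section VanishingDerivative

variable {E F : Type*} [NormedAddCommGroup E] [NormedSpace ℂ E] [NormedAddCommGroup F]
  [NormedSpace ℂ F] {f : E → F} {Ω : Set E} {z : E}

lemma exists_fderiv_ne_zero_of_injOn [Nontrivial E] (hΩ : IsOpen Ω) (hconn : IsPreconnected Ω)
    (hf : DifferentiableOn ℂ f Ω) (hinj : InjOn f Ω) (hz : z ∈ Ω) :
    ∃ y ∈ Ω, fderiv ℂ f y ≠ 0 := by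
  by_contra! hzero
  have hsub : Ω.Subsingleton := fun x hx y hy =>
    hinj hx hy (hΩ.is_const_of_fderiv_eq_zero (𝕜 := ℂ) hconn hf hzero hx hy)
  have : (𝓝[≠] z).NeBot := Module.punctured_nhds_neBot ℂ E z
  obtain ⟨y, hy, hne⟩ := Filter.nonempty_of_mem (inter_mem_nhdsWithin {z}ᶜ (hΩ.mem_nhds hz))
  exact hy (hsub hne hz)

lemma mem_span_singleton_of_eventually_fderiv_eq_zero {p e v : E} {w : ℂ → ℂ}
    (hΩ : IsOpen Ω) (hf : DifferentiableOn ℂ f Ω) (hinj : InjOn f Ω)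
    (hw : ∀ᶠ t in 𝓝 0, DifferentiableAt ℂ w t ∧
      p + t • e + w t • v ∈ Ω ∧ fderiv ℂ f (p + t • e + w t • v) = 0) :
    e ∈ Submodule.span ℂ {v} := by
  obtain ⟨δ, hδ, h⟩ := Metric.eventually_nhds_iff_ball.1 hw
  have hderiv : ∀ t ∈ ball (0 : ℂ) δ, HasDerivAt (fun t => f (p + t • e + w t • v)) 0 t := by
    intro t ht
    obtain ⟨hwt, hmem, hzero⟩ := h t ht
    have hcurve : DifferentiableAt ℂ (fun t => p + t • e + w t • v) t := by fun_prop
    have hft := (hf.differentiableAt (hΩ.mem_nhds hmem)).hasFDerivAt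
    rw [hzero] at hft
    simpa [Function.comp_def] using hft.comp_hasDerivAt t hcurve.hasDerivAt
  obtain ⟨s, hs0, hsδ⟩ : ∃ s : ℂ, s ≠ 0 ∧ s ∈ ball (0 : ℂ) δ := by
    obtain ⟨s, hs, hsδ⟩ := NormedField.exists_norm_lt ℂ hδ
    exact ⟨s, norm_pos_iff.1 hs, by simpa using hsδ⟩
  have h0 := mem_ball_self (x := (0 : ℂ)) hδ
  have hconst := isOpen_ball.is_const_of_deriv_eq_zero (𝕜 := ℂ)
    (convex_ball (0 : ℂ) δ).isPreconnected
    (fun t ht => (hderiv t ht).differentiableAt.differentiableWithinAt)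
    (fun t ht => (hderiv t ht).deriv) hsδ h0
  have heq := hinj (h s hsδ).2.1 (h 0 h0).2.1 hconst
  refine Submodule.mem_span_singleton.2 ⟨s⁻¹ * (w 0 - w s), ?_⟩
  have hse : s • e = (w 0 - w s) • v := by
    rw [zero_smul, add_zero, add_assoc] at heq
    rw [sub_smul, ← add_left_cancel heq, add_sub_cancel_right]
  rw [mul_smul, ← hse, inv_smul_smul₀ hs0]

end VanishingDerivative

section Osgood

variable {E F : Type u} [NormedAddCommGroup E] [NormedSpace ℂ E] [FiniteDimensional ℂ E]
  [NormedAddCommGroup F] [NormedSpace ℂ F] [FiniteDimensional ℂ F] {f : E → F} {Ω : Set E} {z : E}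

lemma exists_jacobian (hΩ : IsOpen Ω) (hf : DifferentiableOn ℂ f Ω)
    (hEF : Module.finrank ℂ E = Module.finrank ℂ F) :
    ∃ g : E → ℂ, DifferentiableOn ℂ g Ω ∧ ∀ z, g z ≠ 0 ↔ Function.Injective (fderiv ℂ f z) := by
  have : CompleteSpace F := FiniteDimensional.complete ℂ F
  let bE := Module.finBasis ℂ E
  let bF := (Module.finBasis ℂ F).reindex (finCongr hEF.symm)
  refine ⟨fun z => (LinearMap.toMatrix bE bF (fderiv ℂ f z : E →ₗ[ℂ] F)).det, ?_,
    fun z => ⟨fun h => ?_, fun h => ?_⟩⟩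
  · simp only [Matrix.det_apply, LinearMap.toMatrix_apply]
    refine DifferentiableOn.fun_sum fun σ _ => DifferentiableOn.const_smul ?_ _
    have hentry : ∀ i, DifferentiableOn ℂ
        (fun z => bF.repr (fderiv ℂ f z (bE i)) (σ i)) Ω := fun i =>
      (LinearMap.toContinuousLinearMap (bF.coord (σ i))).differentiable.comp_differentiableOn
        (differentiableOn_fderiv_apply hΩ hf (bE i))
    exact fun z hz => (HasFDerivWithinAt.finsetProd fun i _ =>
      (hentry i z hz).hasFDerivWithinAt).differentiableWithinAt
  · exact (LinearEquiv.ofIsUnitDet (isUnit_iff_ne_zero.2 h)).injective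
  · exact (LinearEquiv.isUnit_det
      (LinearEquiv.ofInjectiveOfFinrankEq (fderiv ℂ f z : E →ₗ[ℂ] F) h hEF) bE bF).ne_zero

lemma osgoodInDim_zero : OsgoodInDim.{u} 0 := by
  intro E F _ _ _ _ _ _ hE _ Ω f _ _ _ z _ x y _
  have : Subsingleton E := Module.finrank_zero_iff.1 hE
  exact Subsingleton.elim x y

lemma osgoodInDim_one : OsgoodInDim.{u} 1 := by
  intro E F _ _ _ _ _ _ hE hF Ω f hΩ hf hinj z hz
  refine (OsgoodInDim.fderiv_eq_zero_or_injective (fun k hk => by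
    obtain rfl := Nat.lt_one_iff.1 hk; exact osgoodInDim_zero) hE hF hΩ hf hinj hz).resolve_left
    fun hzero => ?_
  have : Nontrivial E := Module.nontrivial_of_finrank_pos (R := ℂ) (by omega)
  obtain ⟨v, hv⟩ := exists_ne (0 : E)
  let l : F ≃L[ℂ] ℂ := ContinuousLinearEquiv.ofFinrankEq (by rw [hF, Module.finrank_self])
  have hz0 : (0 : ℂ) ∈ {t : ℂ | z + t • v ∈ Ω} := by simpa using hz
  have hφ : DifferentiableOn ℂ (fun t : ℂ => l (f (z + t • v))) {t : ℂ | z + t • v ∈ Ω} :=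
    l.differentiable.comp_differentiableOn (differentiableOn_comp_line hΩ hf z v)
  have hφinj : InjOn (fun t : ℂ => l (f (z + t • v))) {t : ℂ | z + t • v ∈ Ω} :=
    fun t ht t' ht' h =>
      smul_left_injective ℂ hv (add_left_cancel (hinj ht ht' (l.injective h)))
  refine deriv_ne_zero_of_injOn (isOpen_setOf_add_smul_mem hΩ z v) hφ hφinj hz0 ?_
  have hline := hasDerivAt_comp_line_zero (v := v) (hf.differentiableAt (hΩ.mem_nhds hz))
  simpa [hzero, Function.comp_def] using ((l : F →L[ℂ] ℂ).hasFDerivAt.comp_hasDerivAt 0 hline).deriv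

/-- If the derivative were not injective at `z`, a curve of zeros of the Jacobian determinant would
exist; by the dichotomy the derivative vanishes along it, so `f` is constant on the curve. -/
lemma OsgoodInDim.of_forall_lt {n : ℕ} (hn : 2 ≤ n) (ih : ∀ k < n, OsgoodInDim.{u} k) :
    OsgoodInDim.{u} n := by
  intro E F _ _ _ _ _ _ hE hF Ω' f hΩ' hf' hinj' z hz'
  by_contra hnot
  obtain ⟨r, hr, hrΩ⟩ := Metric.isOpen_iff.1 hΩ' z hz'
  set Ω := ball z r
  have hz : z ∈ Ω := mem_ball_self hr
  have hf : DifferentiableOn ℂ f Ω := hf'.mono hrΩ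
  have hinj : InjOn f Ω := hinj'.mono hrΩ
  have hdich : ∀ y ∈ Ω, fderiv ℂ f y = 0 ∨ Function.Injective (fderiv ℂ f y) := fun y hy =>
    OsgoodInDim.fderiv_eq_zero_or_injective ih hE hF isOpen_ball hf hinj hy
  have : Nontrivial E := Module.nontrivial_of_finrank_pos (R := ℂ) (by omega)
  obtain ⟨g, hg, hgiff⟩ := exists_jacobian isOpen_ball hf (hE.trans hF.symm)
  obtain ⟨y, hy, hy0⟩ := exists_fderiv_ne_zero_of_injOn isOpen_ball
    (convex_ball z r).isPreconnected hf hinj hz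
  have hgz : g z = 0 := not_not.1 (mt (hgiff z).1 hnot)
  have hgy : g y ≠ 0 := (hgiff y).2 ((hdich y hy).resolve_left hy0)
  obtain ⟨v, rfl⟩ : ∃ v, y = z + v := ⟨y - z, (add_sub_cancel z y).symm⟩
  obtain ⟨e, he⟩ : ∃ e : E, e ∉ Submodule.span ℂ {v} := by
    by_contra! hall
    have hle := finrank_le_one (R := ℂ) v fun e => Submodule.mem_span_singleton.1 (hall e)
    omega
  obtain ⟨p, w, hw⟩ := exists_zero_curve isOpen_ball (convex_ball z r) hg hz hy hgz hgy e
  refine he (mem_span_singleton_of_eventually_fderiv_eq_zero isOpen_ball hf hinj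
    (hw.mono fun t ⟨hwt, hmem, hzero⟩ => ⟨hwt, hmem, ?_⟩))
  exact (hdich _ hmem).resolve_right fun h => (hgiff _).2 h hzero

lemma osgoodInDim (n : ℕ) : OsgoodInDim.{u} n := by
  induction n using Nat.strong_induction_on with
  | _ n ih =>
    match n with
    | 0 => exact osgoodInDim_zero
    | 1 => exact osgoodInDim_one
    | n + 2 => exact OsgoodInDim.of_forall_lt (by omega) ih

theorem injective_fderiv_of_injOn (hEF : Module.finrank ℂ E = Module.finrank ℂ F)
    (hΩ : IsOpen Ω) (hf : DifferentiableOn ℂ f Ω) (hinj : InjOn f Ω) (hz : z ∈ Ω) :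
    Function.Injective (fderiv ℂ f z) :=
  osgoodInDim _ E F rfl hEF.symm Ω f hΩ hf hinj z hz

lemma exists_hasStrictFDerivAt_equiv (hEF : Module.finrank ℂ E = Module.finrank ℂ F)
    (hΩ : IsOpen Ω) (hf : DifferentiableOn ℂ f Ω) (hinj : InjOn f Ω) (hz : z ∈ Ω) :
    ∃ A : E ≃L[ℂ] F, HasStrictFDerivAt f (A : E →L[ℂ] F) z :=
  ⟨(LinearEquiv.ofInjectiveOfFinrankEq (fderiv ℂ f z : E →ₗ[ℂ] F)
    (injective_fderiv_of_injOn hEF hΩ hf hinj hz) hEF).toContinuousLinearEquiv,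
    hasStrictFDerivAt_of_differentiableOn hΩ hf hz⟩

lemma isOpen_image_of_injOn (hEF : Module.finrank ℂ E = Module.finrank ℂ F) (hΩ : IsOpen Ω)
    (hf : DifferentiableOn ℂ f Ω) (hinj : InjOn f Ω) : IsOpen (f '' Ω) := by
  have : CompleteSpace E := FiniteDimensional.complete ℂ E
  refine isOpen_iff_mem_nhds.2 ?_
  rintro _ ⟨z, hz, rfl⟩
  obtain ⟨A, hA⟩ := exists_hasStrictFDerivAt_equiv hEF hΩ hf hinj hz
  rw [← hA.map_nhds_eq_of_equiv]
  exact image_mem_map (hΩ.mem_nhds hz)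

lemma exists_antilipschitz (hEF : Module.finrank ℂ E = Module.finrank ℂ F) (hΩ : IsOpen Ω)
    (hf : DifferentiableOn ℂ f Ω) (hinj : InjOn f Ω) {K : Set E} (hK : IsCompact K)
    (hKΩ : K ⊆ Ω) : ∃ c > 0, ∀ x ∈ K, ∀ y ∈ K, c * ‖x - y‖ ≤ ‖f x - f y‖ := by
  refine exists_forall_mul_norm_sub_le hK fun x hx y hy => ?_
  rcases eq_or_ne x y with rfl | hne
  · exact exists_eventually_mul_norm_sub_le
      (hasStrictFDerivAt_of_differentiableOn hΩ hf (hKΩ hx))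
      (injective_fderiv_of_injOn hEF hΩ hf hinj (hKΩ hx))
  · exact exists_eventually_mul_norm_sub_le_of_ne
      (hf.continuousOn.continuousAt (hΩ.mem_nhds (hKΩ hx)))
      (hf.continuousOn.continuousAt (hΩ.mem_nhds (hKΩ hy))) (hinj.ne (hKΩ hx) (hKΩ hy) hne)

end Osgood

/-! ### First-order contact with a sphere -/

section PolarDecomposition

variable {𝕜 K E : Type*} [RCLike 𝕜] [NormedAddCommGroup K] [InnerProductSpace 𝕜 K]
  [FiniteDimensional 𝕜 K] [NormedAddCommGroup E] [InnerProductSpace 𝕜 E] [FiniteDimensional 𝕜 E]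

lemma inner_map_eigenvectorBasis (B : K →ₗ[𝕜] E) (i j : Fin (Module.finrank 𝕜 K)) :
    let hB := B.isPositive_adjoint_comp_self.isSymmetric
    inner 𝕜 (B (hB.eigenvectorBasis rfl i)) (B (hB.eigenvectorBasis rfl j)) =
      if i = j then (B.singularValues j : 𝕜) ^ 2 else 0 := by
  intro hB
  have hadj : inner 𝕜 (B (hB.eigenvectorBasis rfl i)) (B (hB.eigenvectorBasis rfl j)) =
      inner 𝕜 (hB.eigenvectorBasis rfl i)
        ((LinearMap.adjoint B ∘ₗ B) (hB.eigenvectorBasis rfl j)) :=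
    (LinearMap.adjoint_inner_right B _ _).symm
  rw [hadj, hB.apply_eigenvectorBasis, inner_smul_right,
    orthonormal_iff_ite.1 (hB.eigenvectorBasis rfl).orthonormal i j, mul_ite, mul_one, mul_zero,
    ← B.sq_singularValues_fin rfl j, RCLike.ofReal_pow]

lemma exists_singularValueDecomposition {B : K →ₗ[𝕜] E} (hB : Function.Injective B) :
    ∃ (b : OrthonormalBasis (Fin (Module.finrank 𝕜 K)) 𝕜 K) (w : Fin (Module.finrank 𝕜 K) → E)
      (r : Fin (Module.finrank 𝕜 K) → ℝ), Orthonormal 𝕜 w ∧ (∀ i, 0 < r i) ∧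
        ∀ i, B (b i) = (r i : 𝕜) • w i := by
  let b := B.isPositive_adjoint_comp_self.isSymmetric.eigenvectorBasis rfl
  have hr : ∀ i : Fin (Module.finrank 𝕜 K), 0 < B.singularValues i := fun i =>
    B.injective_iff_forall_lt_finrank_singularValues_pos.1 hB i i.2
  have hr0 : ∀ i : Fin (Module.finrank 𝕜 K), (B.singularValues i : 𝕜) ≠ 0 := fun i =>
    RCLike.ofReal_ne_zero.2 (hr i).ne'
  refine ⟨b, fun i => (B.singularValues i : 𝕜)⁻¹ • B (b i), fun i => B.singularValues i, ?_, hr,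
    fun i => (smul_inv_smul₀ (hr0 i) _).symm⟩
  rw [orthonormal_iff_ite]
  intro i j
  rw [inner_smul_left, inner_smul_right, inner_map_eigenvectorBasis B i j]
  split_ifs with hij
  · subst hij
    have := hr0 i
    simp only [map_inv₀, RCLike.conj_ofReal]
    field_simp
  · simp only [mul_zero]

/-- `T` is the isometric factor of the polar decomposition `B = T ∘ P`. Since `P` is positive,
`B + s • T = T ∘ (P + s)` dominates `B` as soon as `0 ≤ re s`. -/
lemma exists_polarDecomposition {B : K →ₗ[𝕜] E} (hB : Function.Injective B) :
    ∃ T : K →ₗᵢ[𝕜] E, (∀ k, T k ∈ LinearMap.range B) ∧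
      ∀ k (s : 𝕜), 0 ≤ RCLike.re s → ‖B k‖ ≤ ‖B k + s • T k‖ := by
  obtain ⟨b, w, r, hw, hr, hBb⟩ := exists_singularValueDecomposition hB
  let T₀ : K →ₗ[𝕜] E := b.toBasis.constr 𝕜 w
  have hT₀ : ∀ i, T₀ (b i) = w i := fun i => by
    simpa only [b.coe_toBasis] using b.toBasis.constr_basis 𝕜 w i
  let T := T₀.isometryOfOrthonormal (v := b.toBasis) (b.coe_toBasis ▸ b.orthonormal)
    (by simpa [Function.comp_def, hT₀] using hw)
  have hTk : ∀ k, T k = ∑ i, b.repr k i • w i := fun k => by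
    have hTT₀ : T k = T₀ (∑ i, b.repr k i • b i) := by rw [b.sum_repr]; rfl
    simp [hTT₀, hT₀]
  have hBk : ∀ k, B k = ∑ i, (b.repr k i * r i) • w i := fun k => by
    conv_lhs => rw [← b.sum_repr k]
    simp [hBb, mul_smul]
  have hnorm : ∀ c : Fin (Module.finrank 𝕜 K) → 𝕜, ‖∑ i, c i • w i‖ ^ 2 = ∑ i, ‖c i‖ ^ 2 :=
    fun c => hw.orthogonalFamily.norm_sum c Finset.univ
  refine ⟨T, fun k => ?_, fun k s hs => ?_⟩
  · rw [hTk]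
    refine Submodule.sum_mem _ fun i _ => Submodule.smul_mem _ _ ⟨((r i)⁻¹ : 𝕜) • b i, ?_⟩
    rw [map_smul, hBb, inv_smul_smul₀ (RCLike.ofReal_ne_zero.2 (hr i).ne')]
  · have hsum : B k + s • T k = ∑ i, (b.repr k i * (r i + s)) • w i := by
      simp only [hBk, hTk, Finset.smul_sum, ← Finset.sum_add_distrib, smul_smul, ← add_smul]
      simp only [mul_add, mul_comm s]
    rw [← sq_le_sq₀ (norm_nonneg _) (norm_nonneg _), hsum, hBk, hnorm, hnorm]
    refine Finset.sum_le_sum fun i _ => ?_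
    have hre : ‖(r i : 𝕜)‖ ≤ ‖(r i : 𝕜) + s‖ := by
      rw [RCLike.norm_of_nonneg (hr i).le]
      refine le_trans ?_ (RCLike.re_le_norm _)
      simpa using hs
    rw [norm_mul, norm_mul]
    gcongr

lemma exists_tangential_isometry {M : K →L[𝕜] E} (hM : Function.Injective M) {e : K}
    (he : ‖e‖ = 1) :
    ∃ T : K →L[𝕜] E, (∀ z, ‖T z‖ ^ 2 = ‖z‖ ^ 2 - ‖inner 𝕜 e z‖ ^ 2) ∧
      (∀ z, ∃ k, inner 𝕜 e k = 0 ∧ T z = M k) ∧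
      ∀ z (s : 𝕜), inner 𝕜 e z = 0 → 0 ≤ RCLike.re s → ‖M z‖ ≤ ‖M z + s • T z‖ := by
  let L : Submodule 𝕜 K := (𝕜 ∙ e)ᗮ
  obtain ⟨T, hTrange, hTle⟩ := exists_polarDecomposition (B := (M : K →ₗ[𝕜] E) ∘ₗ L.subtype)
    (hM.comp L.injective_subtype)
  have hP : ∀ z, (L.orthogonalProjectionOnto z : K) = z - inner 𝕜 e z • e := fun z =>
    (Submodule.starProjection_orthogonal_val z).trans
      (by rw [Submodule.starProjection_unit_singleton 𝕜 he])
  refine ⟨T.toContinuousLinearMap ∘L L.orthogonalProjectionOnto, fun z => ?_, fun z => ?_,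
    fun z s hz hs => ?_⟩
  · have hsymm : RCLike.re (inner 𝕜 e z * inner 𝕜 z e) = ‖inner 𝕜 e z‖ ^ 2 := by
      rw [inner_mul_symm_re_eq_norm, norm_mul, norm_inner_symm z e, sq]
    simp only [ContinuousLinearMap.comp_apply, LinearIsometry.coe_toContinuousLinearMap,
      T.norm_map, Submodule.coe_norm, hP]
    rw [norm_sub_sq (𝕜 := 𝕜), inner_smul_right, norm_smul, he, hsymm]
    ring
  · obtain ⟨k, hk⟩ := hTrange (L.orthogonalProjectionOnto z)
    exact ⟨k, Submodule.mem_orthogonal_singleton_iff_inner_right.1 k.2, hk.symm⟩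
  · have hPz : (L.orthogonalProjectionOnto z : K) = z := by rw [hP, hz, zero_smul, sub_zero]
    simpa [hPz] using hTle (L.orthogonalProjectionOnto z) s hs

end PolarDecomposition

section Touching

variable {E E' : Type*} [NormedAddCommGroup E] [InnerProductSpace ℂ E] [NormedAddCommGroup E']
  [InnerProductSpace ℂ E'] {F : E → E'} {M : E →L[ℂ] E'} {e : E} {p : E'}

lemma re_inner_fderiv_le_of_isMinOn (he : ‖e‖ = 1) (hM : HasFDerivAt F M e)
    (hmin : IsMinOn (fun z => ‖F z - p‖) (closedBall 0 1) e) {z : E} (hz : ‖z‖ ≤ 1) :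
    (inner ℂ (p - F e) (M z)).re ≤ (inner ℂ (p - F e) (M e)).re := by
  let : InnerProductSpace ℝ E' := InnerProductSpace.rclikeToReal ℂ E'
  have hmin_sq : IsMinOn (fun z => ‖F z - p‖ ^ 2) (closedBall 0 1) e := fun y hy =>
    pow_le_pow_left₀ (norm_nonneg _) (hmin hy) 2
  have hdir : z - e ∈ posTangentConeAt (closedBall (0 : E) 1) e :=
    sub_mem_posTangentConeAt_of_segment_subset ((convex_closedBall 0 1).segment_subset
      (by simpa using he.le) (by simpa using hz))
  have hderiv := ((hM.restrictScalars ℝ).sub_const p).norm_sq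
  have hnonneg := hmin_sq.localize.hasFDerivWithinAt_nonneg hderiv.hasFDerivWithinAt hdir
  have hre : 0 ≤ (inner ℂ (F e - p) (M (z - e))).re := by
    rw [smul_apply, two_nsmul, ← two_mul] at hnonneg
    exact nonneg_of_mul_nonneg_right hnonneg two_pos
  have hle : (inner ℂ (p - F e) (M (z - e))).re ≤ 0 := by
    rwa [← neg_sub (F e), inner_neg_left, Complex.neg_re, neg_nonpos]
  rwa [map_sub, inner_sub_right, Complex.sub_re, sub_nonpos] at hle

lemma eq_norm_smul_of_forall_re_inner_le {w : E} (he : ‖e‖ = 1)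
    (h : ∀ z, ‖z‖ ≤ 1 → (inner ℂ w z).re ≤ (inner ℂ w e).re) : w = (‖w‖ : ℂ) • e := by
  have hle : ‖w‖ ≤ (inner ℂ w e).re := by
    rcases eq_or_ne w 0 with rfl | hw
    · simp
    · have hw' : (‖w‖ : ℂ) ≠ 0 := by simpa using hw
      have := h ((‖w‖⁻¹ : ℂ) • w) (by simp [norm_smul, hw])
      rwa [inner_smul_right, inner_self_eq_norm_sq_to_K, sq, RCLike.ofReal_eq_complex_ofReal,
        inv_mul_cancel_left₀ hw', Complex.ofReal_re] at this
  have hsq : ‖w - (‖w‖ : ℂ) • e‖ ^ 2 ≤ 0 := by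
    rw [norm_sub_sq (𝕜 := ℂ), inner_smul_right, norm_smul, he]
    simp only [RCLike.re_to_complex, Complex.re_ofReal_mul, Complex.norm_real, norm_norm]
    nlinarith [norm_nonneg w]
  exact sub_eq_zero.1 (norm_eq_zero.1 (sq_eq_zero_iff.1 (hsq.antisymm (sq_nonneg _))))

/-- The functional `⟪p - F e, M ·⟫` attains its maximum over the unit ball at `e`, so it is a
positive multiple of `⟪e, ·⟫`. -/
lemma exists_inner_fderiv_eq_of_isMinOn [CompleteSpace E] [CompleteSpace E'] (he : ‖e‖ = 1)
    (hM : HasFDerivAt F M e) (hsurj : Function.Surjective M) (hp : F e ≠ p)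
    (hmin : IsMinOn (fun z => ‖F z - p‖) (closedBall 0 1) e) :
    ∃ a : ℝ, 0 < a ∧ ∀ z, inner ℂ (p - F e) (M z) = a * inner ℂ e z := by
  let w := ContinuousLinearMap.adjoint M (p - F e)
  have hw : ∀ z, inner ℂ w z = inner ℂ (p - F e) (M z) := fun z =>
    ContinuousLinearMap.adjoint_inner_left M z (p - F e)
  have hwe : w = (‖w‖ : ℂ) • e := eq_norm_smul_of_forall_re_inner_le he fun z hz => by
    simpa only [hw] using re_inner_fderiv_le_of_isMinOn he hM hmin hz
  refine ⟨‖w‖, norm_pos_iff.2 fun hw0 => ?_, fun z => ?_⟩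
  · obtain ⟨z, hz⟩ := hsurj (p - F e)
    have := hw z
    rw [hw0, inner_zero_left, hz, eq_comm, inner_self_eq_zero, sub_eq_zero] at this
    exact hp this.symm
  · rw [← hw, hwe, inner_smul_left, Complex.conj_ofReal]
    simp [norm_smul, he]

end Touching

/-! ### Square roots in the right half-plane -/

section SquareRoot

/-- The principal branch of the square root on `ℂ`. -/
noncomputable def csqrt (u : ℂ) : ℂ := u ^ (2⁻¹ : ℂ)

lemma csqrt_sq (u : ℂ) : csqrt u ^ 2 = u := by
  simp [csqrt]

lemma norm_csqrt_sq (u : ℂ) : ‖csqrt u‖ ^ 2 = ‖u‖ := by rw [← norm_pow, csqrt_sq]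

variable {u : ℂ}

lemma csqrt_re_pos (hu : 0 < u.re) : 0 < (csqrt u).re := by
  rw [csqrt, Complex.cpow_inv_two_re]
  exact Real.sqrt_pos.2 (by positivity)

lemma abs_im_csqrt_le_re (hu : 0 < u.re) : |(csqrt u).im| ≤ (csqrt u).re := by
  have hsq : 0 < (csqrt u ^ 2).re := by rwa [csqrt_sq]
  rw [pow_two, Complex.mul_re] at hsq
  exact abs_le_of_sq_le_sq (by nlinarith) (csqrt_re_pos hu).le

lemma ne_zero_of_re_pos (hu : 0 < u.re) : u ≠ 0 := by
  rintro rfl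
  simp at hu

lemma csqrt_ne_zero (hu : 0 < u.re) : csqrt u ≠ 0 := ne_zero_of_re_pos (csqrt_re_pos hu)

end SquareRoot

section Sector

variable {y y' : ℂ}

lemma mul_norm_le_re_of_abs_im_le_re (hy : |y.im| ≤ y.re) : 7 / 10 * ‖y‖ ≤ y.re := by
  have hre : 0 ≤ y.re := (abs_nonneg _).trans hy
  have him : y.im ^ 2 ≤ y.re ^ 2 := sq_le_sq.2 (hy.trans (le_abs_self _))
  have hnorm : ‖y‖ ^ 2 = y.re ^ 2 + y.im ^ 2 := by
    rw [← Complex.normSq_eq_norm_sq, Complex.normSq_apply]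
    ring
  exact le_of_sq_le_sq (by nlinarith) hre

lemma re_inv_nonneg (hy : 0 ≤ y.re) : 0 ≤ (y⁻¹).re := by
  rw [Complex.inv_re]
  exact div_nonneg hy (Complex.normSq_nonneg _)

lemma abs_im_add_le_re (hy : |y.im| ≤ y.re) (hy' : |y'.im| ≤ y'.re) :
    |(y + y').im| ≤ (y + y').re := by
  rw [Complex.add_im, Complex.add_re]
  exact (abs_add_le _ _).trans (add_le_add hy hy')

lemma re_mul_nonneg_of_abs_im_le_re (hy : |y.im| ≤ y.re) (hy' : |y'.im| ≤ y'.re) :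
    0 ≤ (y * y').re := by
  have him : |y.im * y'.im| ≤ y.re * y'.re := by
    rw [abs_mul]
    exact mul_le_mul hy hy' (abs_nonneg _) ((abs_nonneg _).trans hy)
  rw [Complex.mul_re]
  linarith [le_abs_self (y.im * y'.im)]

lemma norm_le_two_mul_norm_add (hy : |y.im| ≤ y.re) (hy' : 0 ≤ y'.re) :
    ‖y‖ ≤ 2 * ‖y + y'‖ := by
  have hre : y.re + y'.re ≤ ‖y + y'‖ := Complex.re_le_norm (y + y')
  linarith [mul_norm_le_re_of_abs_im_le_re hy, norm_nonneg y]

lemma norm_le_norm_add_of_abs_im_le_re (hy : |y.im| ≤ y.re) (hy' : |y'.im| ≤ y'.re) :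
    ‖y‖ ≤ ‖y + y'‖ := by
  have hcross : 0 ≤ (y * (starRingEnd ℂ) y').re :=
    re_mul_nonneg_of_abs_im_le_re hy (by simpa using hy')
  rw [← sq_le_sq₀ (norm_nonneg _) (norm_nonneg _), ← Complex.normSq_eq_norm_sq,
    ← Complex.normSq_eq_norm_sq, Complex.normSq_add]
  linarith [Complex.normSq_nonneg y']

variable {a κ : ℝ}

-- Divided by `y' - y`, the two terms on the right become `a (y + y')` and `κ (y y')⁻¹`. Both have
-- nonnegative real part, so they cannot cancel.
lemma mul_norm_sq_sub_sq_le (ha : 0 ≤ a) (hκ : 0 ≤ κ) (hy : |y.im| ≤ y.re) (hy' : |y'.im| ≤ y'.re)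
    (hy0 : y ≠ 0) (hy0' : y' ≠ 0) :
    a * ‖y ^ 2 - y' ^ 2‖ ≤ 2 * ‖-(a * (y ^ 2 - y' ^ 2)) + κ * (y⁻¹ - y'⁻¹)‖ := by
  have hsector : |(a * (y + y')).im| ≤ (a * (y + y')).re := by
    rw [Complex.im_ofReal_mul, Complex.re_ofReal_mul, abs_mul, abs_of_nonneg ha]
    exact mul_le_mul_of_nonneg_left (abs_im_add_le_re hy hy') ha
  have hre : 0 ≤ (κ * (y * y')⁻¹ : ℂ).re := by
    rw [Complex.re_ofReal_mul]
    exact mul_nonneg hκ (re_inv_nonneg (re_mul_nonneg_of_abs_im_le_re hy hy'))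
  have hfactor : -(a * (y ^ 2 - y' ^ 2)) + κ * (y⁻¹ - y'⁻¹) =
      -((y - y') * (a * (y + y') + κ * (y * y')⁻¹)) := by
    field_simp
    ring
  calc a * ‖y ^ 2 - y' ^ 2‖
      = ‖y - y'‖ * ‖a * (y + y')‖ := by
        rw [← norm_mul, ← Complex.norm_of_nonneg ha, ← norm_mul, Complex.norm_of_nonneg ha]
        ring_nf
    _ ≤ ‖y - y'‖ * (2 * ‖a * (y + y') + κ * (y * y')⁻¹‖) := by
        gcongr
        exact norm_le_two_mul_norm_add hsector hre
    _ = _ := by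
        rw [hfactor, norm_neg, norm_mul]
        ring

lemma mul_norm_inv_sub_inv_le (ha : 0 ≤ a) (hκ : 0 ≤ κ) (hy : |y.im| ≤ y.re)
    (hy' : |y'.im| ≤ y'.re) (hy0 : y ≠ 0) (hy0' : y' ≠ 0) :
    κ * ‖y⁻¹ - y'⁻¹‖ ≤ 3 * ‖-(a * (y ^ 2 - y' ^ 2)) + κ * (y⁻¹ - y'⁻¹)‖ := by
  have hsq := mul_norm_sq_sub_sq_le ha hκ hy hy' hy0 hy0'
  have htri := norm_add_le (-(a * (y ^ 2 - y' ^ 2)) + κ * (y⁻¹ - y'⁻¹)) (a * (y ^ 2 - y' ^ 2))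
  rw [neg_add_cancel_comm, norm_mul, norm_mul, Complex.norm_of_nonneg ha,
    Complex.norm_of_nonneg hκ] at htri
  linarith

lemma norm_inv_sq_sub_inv_sq_le (hy0 : y ≠ 0) (hyy' : ‖y‖ ≤ ‖y'‖) :
    ‖(y ^ 2)⁻¹ - (y' ^ 2)⁻¹‖ ≤ ‖y⁻¹ - y'⁻¹‖ * (2 * ‖y‖⁻¹) := by
  rw [← inv_pow, ← inv_pow, sq_sub_sq, norm_mul, mul_comm]
  gcongr
  have hinv : ‖y'‖⁻¹ ≤ ‖y‖⁻¹ := inv_anti₀ (norm_pos_iff.2 hy0) hyy'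
  rw [← norm_inv, ← norm_inv] at hinv
  linarith [norm_add_le y⁻¹ y'⁻¹, norm_inv y]

end Sector

section LipschitzInverse

variable {u u' : ℂ} {ρ : ℝ}

lemma norm_inv_sub_inv_le {𝕜 : Type*} [NormedField 𝕜] {x x' : 𝕜} (hρ : 0 < ρ) (hx : ρ ≤ ‖x‖)
    (hx' : ρ ≤ ‖x'‖) : ‖x⁻¹ - x'⁻¹‖ ≤ ‖x - x'‖ / ρ ^ 2 := by
  have hx0 : x ≠ 0 := norm_pos_iff.1 (hρ.trans_le hx)
  have hx0' : x' ≠ 0 := norm_pos_iff.1 (hρ.trans_le hx')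
  rw [inv_sub_inv hx0 hx0', norm_div, norm_mul, norm_sub_rev, pow_two]
  gcongr

lemma le_norm_csqrt (hρu : ρ ^ 2 ≤ ‖u‖) : ρ ≤ ‖csqrt u‖ := by
  rw [← norm_csqrt_sq] at hρu
  exact le_of_sq_le_sq hρu (norm_nonneg _)

lemma norm_csqrt_sub_le (hρ : 0 < ρ) (hu : 0 < u.re) (hu' : 0 < u'.re) (hρu : ρ ^ 2 ≤ ‖u‖) :
    ‖csqrt u - csqrt u'‖ ≤ ‖u - u'‖ / ρ := by
  have hadd : ρ ≤ ‖csqrt u + csqrt u'‖ := (le_norm_csqrt hρu).trans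
    (norm_le_norm_add_of_abs_im_le_re (abs_im_csqrt_le_re hu) (abs_im_csqrt_le_re hu'))
  have hsub : ‖u - u'‖ = ‖csqrt u + csqrt u'‖ * ‖csqrt u - csqrt u'‖ := by
    rw [← norm_mul, ← sq_sub_sq, csqrt_sq, csqrt_sq]
  rw [le_div_iff₀ hρ, hsub, mul_comm]
  gcongr

lemma norm_inv_csqrt_sub_le (hρ : 0 < ρ) (hu : 0 < u.re) (hu' : 0 < u'.re) (hρu : ρ ^ 2 ≤ ‖u‖)
    (hρu' : ρ ^ 2 ≤ ‖u'‖) : ‖(csqrt u)⁻¹ - (csqrt u')⁻¹‖ ≤ ‖u - u'‖ / ρ ^ 3 :=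
  calc ‖(csqrt u)⁻¹ - (csqrt u')⁻¹‖
      ≤ ‖csqrt u - csqrt u'‖ / ρ ^ 2 :=
        norm_inv_sub_inv_le hρ (le_norm_csqrt hρu) (le_norm_csqrt hρu')
    _ ≤ ‖u - u'‖ / ρ / ρ ^ 2 := by
        gcongr
        exact norm_csqrt_sub_le hρ hu hu' hρu
    _ = ‖u - u'‖ / ρ ^ 3 := by rw [div_div, ← pow_succ']

end LipschitzInverse

/-! ### The pole -/

section Frame

variable {E : Type*} [NormedAddCommGroup E] [InnerProductSpace ℂ E]

/-- Linear data of a map touching a ball: `M` is its derivative at the touching point `e` of the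
unit sphere, `n` is the unit normal of the target ball, and `T` maps the tangent space of the source
sphere at `e` isometrically to the tangent space of the target sphere. The isometry is aligned with
`M`, so that no multiple `s • T` with `0 ≤ re s` shortens `M` in tangential directions. -/
structure TangentFrame (M : E ≃L[ℂ] E) (T : E →L[ℂ] E) (e n : E) (a : ℝ) : Prop where
  norm_e : ‖e‖ = 1
  norm_n : ‖n‖ = 1
  a_pos : 0 < a
  inner_M : ∀ z, inner ℂ n (M z) = a * inner ℂ e z
  norm_T_sq : ∀ z, ‖T z‖ ^ 2 = ‖z‖ ^ 2 - ‖inner ℂ e z‖ ^ 2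
  inner_T : ∀ z, inner ℂ n (T z) = 0
  le_norm_add : ∀ z (s : ℂ), inner ℂ e z = 0 → 0 ≤ s.re → ‖M z‖ ≤ ‖M z + s • T z‖

/-- The coordinate `1 - ⟨e, z⟩` normal to the unit sphere at `e`, which has positive real part on
the unit ball. -/
noncomputable def normalCoord (e z : E) : ℂ := 1 - inner ℂ e z

/-- The normal component `κ (1 - ⟨e, z⟩) ^ (-1/2)` of the pole added at `e`. -/
noncomputable def poleCoord (e : E) (κ : ℝ) (z : E) : ℂ := κ * (csqrt (normalCoord e z))⁻¹

/-- A map with a pole at `e`, of size `O(κ)` away from `e`. For small `κ` the region of the unit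
ball where it is not small is mapped to the ball around `d • n` of radius `d`. -/
noncomputable def pole (T : E →L[ℂ] E) (e n : E) (κ : ℝ) (z : E) : E :=
  poleCoord e κ z • n + (κ / 4 * (normalCoord e z)⁻¹) • T z

/-- The map `F` with a pole added at `e`. -/
noncomputable def addPole (F : E → E) (T : E →L[ℂ] E) (e n : E) (κ : ℝ) (z : E) : E :=
  F z + pole T e n κ z

lemma normalCoord_sub (e z z' : E) :
    normalCoord e z - normalCoord e z' = -inner ℂ e (z - z') := by
  rw [inner_sub_right, normalCoord, normalCoord]
  ring

lemma pole_sub_eq (T : E →L[ℂ] E) (e n : E) (κ : ℝ) (z z' : E) :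
    pole T e n κ z - pole T e n κ z' =
      (κ : ℂ) • (((csqrt (normalCoord e z))⁻¹ - (csqrt (normalCoord e z'))⁻¹) • n +
        (4⁻¹ : ℂ) • ((normalCoord e z')⁻¹ • T (z - z') +
          ((normalCoord e z)⁻¹ - (normalCoord e z')⁻¹) • T z)) := by
  rw [pole, pole, poleCoord, poleCoord, map_sub]
  module

variable {T : E →L[ℂ] E} {e n : E} {κ : ℝ} {z : E}

lemma poleCoord_sq_mul_normalCoord (hre : 0 < (normalCoord e z).re) :
    poleCoord e κ z ^ 2 * normalCoord e z = κ ^ 2 := by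
  rw [poleCoord, mul_pow, inv_pow, csqrt_sq, inv_mul_cancel_right₀ (ne_zero_of_re_pos hre)]

lemma norm_poleCoord_sq_mul (hre : 0 < (normalCoord e z).re) :
    ‖poleCoord e κ z‖ ^ 2 * ‖normalCoord e z‖ = κ ^ 2 := by
  rw [← norm_pow, ← norm_mul, poleCoord_sq_mul_normalCoord hre, norm_pow, Complex.norm_real,
    Real.norm_eq_abs, sq_abs]

lemma norm_poleCoord_pos (hκ : 0 < κ) (hre : 0 < (normalCoord e z).re) :
    0 < ‖poleCoord e κ z‖ :=
  norm_pos_iff.2 (mul_ne_zero (Complex.ofReal_ne_zero.2 hκ.ne') (inv_ne_zero (csqrt_ne_zero hre)))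

lemma abs_im_poleCoord_le_re (hκ : 0 ≤ κ) (hre : 0 < (normalCoord e z).re) :
    |(poleCoord e κ z).im| ≤ (poleCoord e κ z).re := by
  rw [poleCoord, Complex.im_ofReal_mul, Complex.re_ofReal_mul, Complex.inv_im, Complex.inv_re,
    abs_mul, abs_div, abs_neg, abs_of_nonneg hκ, abs_of_nonneg (Complex.normSq_nonneg _)]
  gcongr
  · exact Complex.normSq_nonneg _
  · exact abs_im_csqrt_le_re hre

lemma differentiableAt_normalCoord (e z : E) : DifferentiableAt ℂ (normalCoord e) z :=
  (differentiableAt_const (1 : ℂ)).sub (innerSL ℂ e).differentiableAt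

lemma differentiableAt_pole (hre : 0 < (normalCoord e z).re) :
    DifferentiableAt ℂ (pole T e n κ) z := by
  have hcoord := differentiableAt_normalCoord e z
  have hroot : DifferentiableAt ℂ (fun z => csqrt (normalCoord e z)) z :=
    hcoord.cpow (differentiableAt_const _) (Or.inl hre)
  have hnormal : DifferentiableAt ℂ (poleCoord e κ) z :=
    (hroot.inv (csqrt_ne_zero hre)).const_mul _
  exact (hnormal.smul_const n).add
    (((hcoord.inv (ne_zero_of_re_pos hre)).const_mul _).smul T.differentiableAt)

end Frame

namespace TangentFrame

variable {E : Type*} [NormedAddCommGroup E] [InnerProductSpace ℂ E]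
  {M : E ≃L[ℂ] E} {T : E →L[ℂ] E} {e n : E} {a κ d : ℝ} {z : E}

lemma inner_e_self (D : TangentFrame M T e n a) : inner ℂ e e = (1 : ℂ) :=
  inner_self_eq_one_of_norm_eq_one D.norm_e

lemma T_e (D : TangentFrame M T e n a) : T e = 0 := by
  simpa [D.inner_e_self, D.norm_e] using D.norm_T_sq e

lemma norm_sq_eq (D : TangentFrame M T e n a) (z : E) :
    ‖z‖ ^ 2 = 1 - 2 * (normalCoord e z).re + ‖normalCoord e z‖ ^ 2 + ‖T z‖ ^ 2 := by
  have hinner : inner ℂ e z = 1 - normalCoord e z := (sub_sub_cancel 1 _).symm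
  rw [D.norm_T_sq, hinner]
  simp only [← Complex.normSq_eq_norm_sq, Complex.normSq_apply, Complex.sub_re, Complex.sub_im,
    Complex.one_re, Complex.one_im]
  ring

lemma norm_sub_e_sq_eq (D : TangentFrame M T e n a) (z : E) :
    ‖z - e‖ ^ 2 = ‖normalCoord e z‖ ^ 2 + ‖T z‖ ^ 2 := by
  have hre : RCLike.re (inner ℂ z e) = 1 - (normalCoord e z).re := by
    rw [inner_re_symm]
    simp [normalCoord]
  rw [norm_sub_sq (𝕜 := ℂ), D.norm_sq_eq z, D.norm_e, hre]
  ring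

lemma norm_sub_e_sq_lt (D : TangentFrame M T e n a) (hz : ‖z‖ < 1) :
    ‖z - e‖ ^ 2 < 2 * (normalCoord e z).re := by
  have hsq : ‖z‖ ^ 2 < 1 := by nlinarith [norm_nonneg z]
  linarith [D.norm_sub_e_sq_eq z, D.norm_sq_eq z]

lemma normalCoord_re_pos (D : TangentFrame M T e n a) (hz : ‖z‖ < 1) :
    0 < (normalCoord e z).re := by
  linarith [D.norm_sub_e_sq_lt hz, sq_nonneg ‖z - e‖]

lemma norm_normalCoord_pos (D : TangentFrame M T e n a) (hz : ‖z‖ < 1) :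
    0 < ‖normalCoord e z‖ :=
  norm_pos_iff.2 (ne_zero_of_re_pos (D.normalCoord_re_pos hz))

lemma norm_sub_e_sq_le (D : TangentFrame M T e n a) (hz : ‖z‖ < 1) :
    ‖z - e‖ ^ 2 ≤ 2 * ‖normalCoord e z‖ := by
  linarith [D.norm_sub_e_sq_lt hz, Complex.re_le_norm (normalCoord e z)]

lemma norm_T_sq_le (D : TangentFrame M T e n a) (hz : ‖z‖ < 1) :
    ‖T z‖ ^ 2 ≤ 2 * ‖normalCoord e z‖ := by
  linarith [D.norm_sub_e_sq_le hz, D.norm_sub_e_sq_eq z, sq_nonneg ‖normalCoord e z‖]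

lemma norm_T_le (D : TangentFrame M T e n a) (hz : ‖z‖ < 1) :
    ‖T z‖ ≤ 3 / 2 * ‖csqrt (normalCoord e z)‖ := by
  refine le_of_sq_le_sq ?_ (by positivity)
  nlinarith [D.norm_T_sq_le hz, norm_csqrt_sq (normalCoord e z),
    sq_nonneg ‖csqrt (normalCoord e z)‖]

lemma inner_pole (D : TangentFrame M T e n a) (κ : ℝ) (z : E) :
    inner ℂ n (pole T e n κ z) = poleCoord e κ z := by
  rw [pole, inner_add_right, inner_smul_right, inner_smul_right, D.inner_T,
    inner_self_eq_one_of_norm_eq_one D.norm_n]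
  simp

lemma norm_pole_sub_sq (D : TangentFrame M T e n a) (κ d : ℝ) (z : E) :
    ‖pole T e n κ z - (d : ℂ) • n‖ ^ 2 =
      ‖poleCoord e κ z - d‖ ^ 2 + (κ / 4 * ‖normalCoord e z‖⁻¹ * ‖T z‖) ^ 2 := by
  have hsplit : pole T e n κ z - (d : ℂ) • n =
      (poleCoord e κ z - d) • n + (κ / 4 * (normalCoord e z)⁻¹) • T z := by
    rw [pole, sub_smul]
    abel
  rw [hsplit, norm_add_sq (𝕜 := ℂ), inner_smul_left, inner_smul_right, D.inner_T, norm_smul,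
    norm_smul, D.norm_n]
  simp [mul_pow, div_pow]

lemma norm_pole_sq_le (D : TangentFrame M T e n a) (κ : ℝ) (hz : ‖z‖ < 1) :
    ‖pole T e n κ z‖ ^ 2 ≤ 9 / 8 * ‖poleCoord e κ z‖ ^ 2 := by
  have hu := D.norm_normalCoord_pos hz
  have hsq := D.norm_pole_sub_sq κ 0 z
  have htangential : (κ / 4 * ‖normalCoord e z‖⁻¹ * ‖T z‖) ^ 2 ≤ 1 / 8 * ‖poleCoord e κ z‖ ^ 2 :=
    calc (κ / 4 * ‖normalCoord e z‖⁻¹ * ‖T z‖) ^ 2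
        = κ ^ 2 / 16 * (‖normalCoord e z‖ ^ 2)⁻¹ * ‖T z‖ ^ 2 := by ring
      _ ≤ κ ^ 2 / 16 * (‖normalCoord e z‖ ^ 2)⁻¹ * (2 * ‖normalCoord e z‖) := by
        gcongr
        exact D.norm_T_sq_le hz
      _ = 1 / 8 * ‖poleCoord e κ z‖ ^ 2 := by
        rw [← norm_poleCoord_sq_mul (D.normalCoord_re_pos hz)]
        field_simp
        ring
  simp only [Complex.ofReal_zero, zero_smul, sub_zero] at hsq
  linarith

lemma norm_pole_le (D : TangentFrame M T e n a) (κ : ℝ) (hz : ‖z‖ < 1) :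
    ‖pole T e n κ z‖ ≤ 11 / 10 * ‖poleCoord e κ z‖ := by
  refine le_of_sq_le_sq ?_ (by positivity)
  nlinarith [D.norm_pole_sq_le κ hz, sq_nonneg ‖poleCoord e κ z‖]

lemma norm_pole_le_of_le_norm_sub (D : TangentFrame M T e n a) (hκ : 0 < κ) {ρ : ℝ} (hρ : 0 < ρ)
    (hz : ‖z‖ < 1) (hze : ρ ≤ ‖z - e‖) : ‖pole T e n κ z‖ ≤ 2 * κ / ρ := by
  have hu := D.norm_normalCoord_pos hz
  have hρu : ρ ^ 2 ≤ 2 * ‖normalCoord e z‖ :=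
    (by gcongr : ρ ^ 2 ≤ ‖z - e‖ ^ 2).trans (D.norm_sub_e_sq_le hz)
  have hcoord : ‖poleCoord e κ z‖ ^ 2 = κ ^ 2 / ‖normalCoord e z‖ :=
    eq_div_of_mul_eq hu.ne' (norm_poleCoord_sq_mul (D.normalCoord_re_pos hz))
  refine le_of_sq_le_sq ((D.norm_pole_sq_le κ hz).trans ?_) (by positivity)
  calc 9 / 8 * ‖poleCoord e κ z‖ ^ 2
      ≤ 9 / 8 * (κ ^ 2 / (ρ ^ 2 / 2)) := by
        rw [hcoord]
        gcongr
        linarith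
    _ ≤ (2 * κ / ρ) ^ 2 := by
        field_simp
        norm_num

lemma eventually_norm_pole_lt (D : TangentFrame M T e n a) {ρ η : ℝ} (hρ : 0 < ρ) (hη : 0 < η) :
    ∀ᶠ κ in 𝓝[>] (0 : ℝ), ∀ z, ‖z‖ < 1 → ρ ≤ ‖z - e‖ → ‖pole T e n κ z‖ < η := by
  filter_upwards [Ioo_mem_nhdsGT (by positivity : 0 < η * ρ / 2)] with κ ⟨hκ, hκη⟩ z hz hze
  refine (D.norm_pole_le_of_le_norm_sub hκ hρ hz hze).trans_lt ?_
  rw [div_lt_iff₀ hρ]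
  linarith

lemma norm_sub_e_le_of_le_norm_poleCoord (D : TangentFrame M T e n a) (hκ : 0 ≤ κ) {σ : ℝ}
    (hσ : 0 < σ) (hz : ‖z‖ < 1) (hσz : σ ≤ ‖poleCoord e κ z‖) : ‖z - e‖ ≤ 2 * κ / σ := by
  have hκσ : σ ^ 2 * ‖normalCoord e z‖ ≤ κ ^ 2 := by
    rw [← norm_poleCoord_sq_mul (κ := κ) (D.normalCoord_re_pos hz)]
    gcongr
  refine le_of_sq_le_sq ?_ (by positivity)
  rw [div_pow, le_div_iff₀ (by positivity)]
  nlinarith [D.norm_sub_e_sq_le hz, sq_nonneg σ]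

lemma norm_poleCoord_le (D : TangentFrame M T e n a) (hd : 0 < d)
    (hz : ‖z‖ ^ 2 < 1 - 5 / 3 * (κ ^ 2 / d ^ 2)) : ‖poleCoord e κ z‖ ≤ 11 / 10 * d := by
  have hz1 : ‖z‖ < 1 := by
    have : 0 ≤ κ ^ 2 / d ^ 2 := by positivity
    nlinarith [norm_nonneg z]
  have hu := D.norm_normalCoord_pos hz1
  have hκu : 5 / 3 * (κ ^ 2 / d ^ 2) < 2 * ‖normalCoord e z‖ := by
    linarith [D.norm_sq_eq z, Complex.re_le_norm (normalCoord e z),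
      sq_nonneg ‖normalCoord e z‖, sq_nonneg ‖T z‖]
  rw [← norm_poleCoord_sq_mul (D.normalCoord_re_pos hz1), mul_div_right_comm, ← mul_assoc] at hκu
  have hratio : ‖poleCoord e κ z‖ ^ 2 / d ^ 2 < 6 / 5 := by
    linarith [lt_of_mul_lt_mul_right hκu hu.le]
  rw [div_lt_iff₀ (by positivity)] at hratio
  refine le_of_sq_le_sq ?_ (by positivity)
  nlinarith [sq_nonneg d]

lemma norm_pole_sub_le (D : TangentFrame M T e n a) (hκ : 0 < κ) (hz : ‖z‖ < 1)
    (hd : ‖poleCoord e κ z‖ ≤ 11 / 10 * d) :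
    ‖pole T e n κ z - (d : ℂ) • n‖ ≤ d - 8 / 100 * ‖poleCoord e κ z‖ := by
  have hre := D.normalCoord_re_pos hz
  have hpos := norm_poleCoord_pos hκ hre
  have hsector := mul_norm_le_re_of_abs_im_le_re (abs_im_poleCoord_le_re hκ.le hre)
  have hexpand : ‖pole T e n κ z - (d : ℂ) • n‖ ^ 2 =
      ‖pole T e n κ z‖ ^ 2 - 2 * d * (poleCoord e κ z).re + d ^ 2 := by
    rw [norm_sub_sq (𝕜 := ℂ), inner_re_symm, inner_smul_left, D.inner_pole, norm_smul, D.norm_n]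
    simp
    ring
  refine le_of_sq_le_sq ?_ (by linarith)
  rw [hexpand]
  nlinarith [D.norm_pole_sq_le κ hz]

end TangentFrame

namespace TangentFrame

variable {E : Type*} [NormedAddCommGroup E] [InnerProductSpace ℂ E]
  {M : E ≃L[ℂ] E} {T : E →L[ℂ] E} {e n : E} {a κ : ℝ} {z z' : E}

section ModelMap

lemma inner_addPole_sub (D : TangentFrame M T e n a) (κ : ℝ) (z z' : E) :
    inner ℂ n (addPole M T e n κ z - addPole M T e n κ z') =
      -(a * (csqrt (normalCoord e z) ^ 2 - csqrt (normalCoord e z') ^ 2)) +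
        κ * ((csqrt (normalCoord e z))⁻¹ - (csqrt (normalCoord e z'))⁻¹) := by
  simp only [addPole, inner_sub_right, inner_add_right, D.inner_M, D.inner_pole, csqrt_sq,
    poleCoord, normalCoord]
  ring

lemma norm_inner_n_le (D : TangentFrame M T e n a) (v : E) : ‖inner ℂ n v‖ ≤ ‖v‖ := by
  simpa [D.norm_n] using norm_inner_le_norm (𝕜 := ℂ) n v

lemma mul_norm_normalCoord_sub_le (D : TangentFrame M T e n a) (hκ : 0 ≤ κ) (hz : ‖z‖ < 1)
    (hz' : ‖z'‖ < 1) : a * ‖normalCoord e z - normalCoord e z'‖ ≤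
      2 * ‖addPole M T e n κ z - addPole M T e n κ z'‖ := by
  have hu := D.normalCoord_re_pos hz
  have hu' := D.normalCoord_re_pos hz'
  have hnormal := mul_norm_sq_sub_sq_le D.a_pos.le hκ (abs_im_csqrt_le_re hu)
    (abs_im_csqrt_le_re hu') (csqrt_ne_zero hu) (csqrt_ne_zero hu')
  rw [← D.inner_addPole_sub, csqrt_sq, csqrt_sq] at hnormal
  linarith [D.norm_inner_n_le (addPole M T e n κ z - addPole M T e n κ z')]

lemma norm_poleCoord_sub_le (D : TangentFrame M T e n a) (hκ : 0 ≤ κ) (hz : ‖z‖ < 1)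
    (hz' : ‖z'‖ < 1) : κ * ‖(csqrt (normalCoord e z))⁻¹ - (csqrt (normalCoord e z'))⁻¹‖ ≤
      3 * ‖addPole M T e n κ z - addPole M T e n κ z'‖ := by
  have hu := D.normalCoord_re_pos hz
  have hu' := D.normalCoord_re_pos hz'
  have hnormal := mul_norm_inv_sub_inv_le D.a_pos.le hκ (abs_im_csqrt_le_re hu)
    (abs_im_csqrt_le_re hu') (csqrt_ne_zero hu) (csqrt_ne_zero hu')
  rw [← D.inner_addPole_sub] at hnormal
  linarith [D.norm_inner_n_le (addPole M T e n κ z - addPole M T e n κ z')]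

lemma norm_inv_normalCoord_sub_smul_le (D : TangentFrame M T e n a) (hκ : 0 ≤ κ) (hz : ‖z‖ < 1)
    (hz' : ‖z'‖ < 1) (hzz' : ‖csqrt (normalCoord e z)‖ ≤ ‖csqrt (normalCoord e z')‖) :
    ‖(κ / 4 * ((normalCoord e z)⁻¹ - (normalCoord e z')⁻¹) : ℂ) • T z‖ ≤
      3 * ‖addPole M T e n κ z - addPole M T e n κ z'‖ := by
  have hy := csqrt_ne_zero (D.normalCoord_re_pos hz)
  have hinv := norm_inv_sq_sub_inv_sq_le hy hzz'
  rw [csqrt_sq, csqrt_sq] at hinv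
  rw [norm_smul, norm_mul, norm_div, Complex.norm_of_nonneg hκ, Complex.norm_ofNat]
  calc κ / 4 * ‖(normalCoord e z)⁻¹ - (normalCoord e z')⁻¹‖ * ‖T z‖
      ≤ κ / 4 * (‖(csqrt (normalCoord e z))⁻¹ - (csqrt (normalCoord e z'))⁻¹‖ *
          (2 * ‖csqrt (normalCoord e z)‖⁻¹)) * (3 / 2 * ‖csqrt (normalCoord e z)‖) := by
        gcongr
        exact D.norm_T_le hz
    _ = 3 / 4 * (κ * ‖(csqrt (normalCoord e z))⁻¹ - (csqrt (normalCoord e z'))⁻¹‖) := by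
        have := norm_ne_zero_iff.2 hy
        field_simp
    _ ≤ 3 * ‖addPole M T e n κ z - addPole M T e n κ z'‖ := by
        linarith [D.norm_poleCoord_sub_le hκ hz hz',
          norm_nonneg (addPole M T e n κ z - addPole M T e n κ z')]

/-- The component of `z - z'` tangent to the unit sphere at `e`, when `‖e‖ = 1`. -/
noncomputable def tangentialDiff (e z z' : E) : E :=
  z - z' + (normalCoord e z - normalCoord e z') • e

lemma inner_e_tangentialDiff (D : TangentFrame M T e n a) (z z' : E) :
    inner ℂ e (tangentialDiff e z z') = 0 := by
  rw [tangentialDiff, inner_add_right, inner_smul_right, D.inner_e_self, mul_one, normalCoord_sub,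
    add_neg_cancel]

lemma map_tangentialDiff_add (D : TangentFrame M T e n a) (κ : ℝ) (z z' : E) :
    M (tangentialDiff e z z') + (κ / 4 * (normalCoord e z')⁻¹ : ℂ) • T (tangentialDiff e z z') =
      addPole M T e n κ z - addPole M T e n κ z' +
        (normalCoord e z - normalCoord e z') • M e -
        (κ * ((csqrt (normalCoord e z))⁻¹ - (csqrt (normalCoord e z'))⁻¹) : ℂ) • n -
        (κ / 4 * ((normalCoord e z)⁻¹ - (normalCoord e z')⁻¹) : ℂ) • T z := by
  simp only [tangentialDiff, map_add, map_sub, map_smul, D.T_e, addPole, pole, poleCoord]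
  module

-- In the tangential direction `D.le_norm_add` prevents the pole from cancelling `M`.
lemma norm_map_tangentialDiff_le (D : TangentFrame M T e n a) (hκ : 0 ≤ κ) (hz : ‖z‖ < 1)
    (hz' : ‖z'‖ < 1) (hzz' : ‖csqrt (normalCoord e z)‖ ≤ ‖csqrt (normalCoord e z')‖) :
    ‖M (tangentialDiff e z z')‖ ≤
      (7 + 2 / a * ‖M e‖) * ‖addPole M T e n κ z - addPole M T e n κ z'‖ := by
  have ha := D.a_pos
  have hre : 0 ≤ (κ / 4 * (normalCoord e z')⁻¹ : ℂ).re := by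
    rw [← Complex.ofReal_ofNat, ← Complex.ofReal_div, Complex.re_ofReal_mul]
    exact mul_nonneg (by positivity) (re_inv_nonneg (D.normalCoord_re_pos hz').le)
  have hnormal : ‖(normalCoord e z - normalCoord e z') • M e‖ ≤
      2 / a * ‖addPole M T e n κ z - addPole M T e n κ z'‖ * ‖M e‖ := by
    rw [norm_smul, div_mul_eq_mul_div]
    gcongr
    rw [le_div_iff₀' ha]
    exact D.mul_norm_normalCoord_sub_le hκ hz hz'
  have hpole : ‖(κ * ((csqrt (normalCoord e z))⁻¹ - (csqrt (normalCoord e z'))⁻¹) : ℂ) • n‖ ≤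
      3 * ‖addPole M T e n κ z - addPole M T e n κ z'‖ := by
    rw [norm_smul, norm_mul, Complex.norm_of_nonneg hκ, D.norm_n, mul_one]
    exact D.norm_poleCoord_sub_le hκ hz hz'
  calc ‖M (tangentialDiff e z z')‖
      ≤ ‖M (tangentialDiff e z z') +
          (κ / 4 * (normalCoord e z')⁻¹ : ℂ) • T (tangentialDiff e z z')‖ :=
        D.le_norm_add _ _ (D.inner_e_tangentialDiff z z') hre
    _ ≤ ‖addPole M T e n κ z - addPole M T e n κ z'‖ +
          2 / a * ‖addPole M T e n κ z - addPole M T e n κ z'‖ * ‖M e‖ +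
          3 * ‖addPole M T e n κ z - addPole M T e n κ z'‖ +
          3 * ‖addPole M T e n κ z - addPole M T e n κ z'‖ := by
        rw [D.map_tangentialDiff_add]
        exact norm_sub_le_of_le (norm_sub_le_of_le (norm_add_le_of_le le_rfl hnormal) hpole)
          (D.norm_inv_normalCoord_sub_smul_le hκ hz hz' hzz')
    _ = _ := by ring

lemma norm_sub_le_mul_norm_addPole_sub (D : TangentFrame M T e n a) (hκ : 0 ≤ κ) (hz : ‖z‖ < 1)
    (hz' : ‖z'‖ < 1) (hzz' : ‖csqrt (normalCoord e z)‖ ≤ ‖csqrt (normalCoord e z')‖) :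
    ‖z - z'‖ ≤ (‖(M.symm : E →L[ℂ] E)‖ * (7 + 2 / a * ‖M e‖) + 2 / a) *
      ‖addPole M T e n κ z - addPole M T e n κ z'‖ := by
  have htangential : ‖tangentialDiff e z z'‖ ≤ ‖(M.symm : E →L[ℂ] E)‖ *
      ((7 + 2 / a * ‖M e‖) * ‖addPole M T e n κ z - addPole M T e n κ z'‖) := by
    have hM := (M.symm : E →L[ℂ] E).le_opNorm_of_le
      (D.norm_map_tangentialDiff_le hκ hz hz' hzz')
    rwa [ContinuousLinearEquiv.coe_coe, M.symm_apply_apply] at hM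
  have hnormal : ‖(normalCoord e z - normalCoord e z') • e‖ ≤
      2 / a * ‖addPole M T e n κ z - addPole M T e n κ z'‖ := by
    rw [norm_smul, D.norm_e, mul_one, div_mul_eq_mul_div, le_div_iff₀' D.a_pos]
    exact D.mul_norm_normalCoord_sub_le hκ hz hz'
  calc ‖z - z'‖
      = ‖tangentialDiff e z z' - (normalCoord e z - normalCoord e z') • e‖ := by
        rw [tangentialDiff, add_sub_cancel_right]
    _ ≤ _ := (norm_sub_le_of_le htangential hnormal).trans_eq (by ring)

lemma exists_forall_mul_norm_sub_le (D : TangentFrame M T e n a) : ∃ c > 0, ∀ κ : ℝ, 0 ≤ κ →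
    ∀ z z' : E, ‖z‖ < 1 → ‖z'‖ < 1 →
      c * ‖z - z'‖ ≤ ‖addPole M T e n κ z - addPole M T e n κ z'‖ := by
  have ha := D.a_pos
  refine ⟨(‖(M.symm : E →L[ℂ] E)‖ * (7 + 2 / a * ‖M e‖) + 2 / a)⁻¹, by positivity,
    fun κ hκ z z' hz hz' => ?_⟩
  rw [inv_mul_le_iff₀ (by positivity)]
  rcases le_total ‖csqrt (normalCoord e z)‖ ‖csqrt (normalCoord e z')‖ with h | h
  · exact D.norm_sub_le_mul_norm_addPole_sub hκ hz hz' h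
  · rw [norm_sub_rev z z', norm_sub_rev (addPole M T e n κ z)]
    exact D.norm_sub_le_mul_norm_addPole_sub hκ hz' hz h

end ModelMap

section Lipschitz

variable {ρ : ℝ}

lemma norm_normalCoord_sub_le (D : TangentFrame M T e n a) (z z' : E) :
    ‖normalCoord e z - normalCoord e z'‖ ≤ ‖z - z'‖ := by
  rw [normalCoord_sub, norm_neg]
  simpa only [D.norm_e, one_mul] using norm_inner_le_norm (𝕜 := ℂ) e (z - z')

lemma norm_pole_sub_pole_le (D : TangentFrame M T e n a) (hκ : 0 ≤ κ) (hρ : 0 < ρ)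
    (hz : ‖z‖ < 1) (hz' : ‖z'‖ < 1) (hρz : ρ ^ 2 ≤ ‖normalCoord e z‖)
    (hρz' : ρ ^ 2 ≤ ‖normalCoord e z'‖) : ‖pole T e n κ z - pole T e n κ z'‖ ≤
      κ * (1 / ρ ^ 3 + ‖T‖ / ρ ^ 2 + ‖T‖ / ρ ^ 4) * ‖z - z'‖ := by
  have hcoord := D.norm_normalCoord_sub_le z z'
  have hroot : ‖((csqrt (normalCoord e z))⁻¹ - (csqrt (normalCoord e z'))⁻¹) • n‖ ≤
      ‖z - z'‖ / ρ ^ 3 := by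
    rw [norm_smul, D.norm_n, mul_one]
    refine (norm_inv_csqrt_sub_le hρ (D.normalCoord_re_pos hz) (D.normalCoord_re_pos hz')
      hρz hρz').trans ?_
    gcongr
  have hlin : ‖(normalCoord e z')⁻¹ • T (z - z')‖ ≤ (ρ ^ 2)⁻¹ * (‖T‖ * ‖z - z'‖) := by
    rw [norm_smul, norm_inv]
    gcongr
    exact T.le_opNorm _
  have hinv : ‖((normalCoord e z)⁻¹ - (normalCoord e z')⁻¹) • T z‖ ≤
      ‖z - z'‖ / (ρ ^ 2) ^ 2 * ‖T‖ := by
    rw [norm_smul]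
    gcongr
    · exact (norm_inv_sub_inv_le (by positivity) hρz hρz').trans (by gcongr)
    · exact T.unit_le_opNorm z hz.le
  have htangential := norm_add_le_of_le hlin hinv
  rw [pole_sub_eq, norm_smul, Complex.norm_of_nonneg hκ, mul_assoc κ]
  gcongr
  refine (norm_add_le_of_le hroot (norm_smul_le _ _)).trans ?_
  rw [norm_inv, Complex.norm_ofNat]
  calc _ ≤ ‖z - z'‖ / ρ ^ 3 + ((ρ ^ 2)⁻¹ * (‖T‖ * ‖z - z'‖) + ‖z - z'‖ / (ρ ^ 2) ^ 2 * ‖T‖) := by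
        linarith [(norm_nonneg _).trans htangential]
    _ = _ := by ring

end Lipschitz

end TangentFrame

/-! ### Adding the pole to a map -/

/-- The radius of the ball on which `addPole F T e n κ` is used. It is chosen so that the pole has
size at most `1.1 d` on this ball, while values close to `d • n` are still attained. -/
noncomputable def domRadius (d κ : ℝ) : ℝ := √(1 - 5 / 3 * (κ ^ 2 / d ^ 2))

section DomRadius

variable {E : Type*} [NormedAddCommGroup E] {d κ : ℝ} {z : E}

lemma mem_ball_domRadius_iff :
    z ∈ ball 0 (domRadius d κ) ↔ ‖z‖ ^ 2 < 1 - 5 / 3 * (κ ^ 2 / d ^ 2) := by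
  rw [mem_ball_zero_iff, domRadius, Real.lt_sqrt (norm_nonneg z)]

lemma domRadius_lt_one (hd : 0 < d) (hκ : 0 < κ) : domRadius d κ < 1 := by
  have : 0 < κ ^ 2 / d ^ 2 := by positivity
  rw [domRadius, Real.sqrt_lt' one_pos]
  linarith

lemma norm_lt_one_of_mem_ball_domRadius (hz : z ∈ ball 0 (domRadius d κ)) : ‖z‖ < 1 := by
  have : 0 ≤ κ ^ 2 / d ^ 2 := by positivity
  nlinarith [mem_ball_domRadius_iff.1 hz, norm_nonneg z]

lemma eventually_lt_domRadius (d : ℝ) {r : ℝ} (hr : r < 1) :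
    ∀ᶠ κ in 𝓝[>] (0 : ℝ), r < domRadius d κ := by
  have hcont : Continuous (domRadius d) := by
    unfold domRadius
    fun_prop
  refine nhdsWithin_le_nhds (hcont.continuousAt.eventually_const_lt ?_)
  simpa [domRadius] using hr

end DomRadius

/-- The injective holomorphic map `F`, defined on the ball of radius `R > 1`, maps the closed unit
ball outside the ball of radius `d` around `p`, and touches it at the image of the boundary
point `e`. The frame `M`, `T`, `n`, `a` describes the derivative of `F` at `e`. -/
structure OuterContact {E : Type*} [NormedAddCommGroup E] [InnerProductSpace ℂ E] (F : E → E)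
    (R : ℝ) (M : E ≃L[ℂ] E) (T : E →L[ℂ] E) (e n p : E) (a d : ℝ) : Prop where
  frame : TangentFrame M T e n a
  one_lt : 1 < R
  differentiableOn : DifferentiableOn ℂ F (ball 0 R)
  injOn : InjOn F (ball 0 R)
  p_eq : p = F e + (d : ℂ) • n
  d_pos : 0 < d
  le_norm_sub : ∀ z ∈ closedBall (0 : E) 1, d ≤ ‖F z - p‖
  hasStrictFDerivAt : HasStrictFDerivAt F (M : E →L[ℂ] E) e

namespace OuterContact

variable {E : Type u} [NormedAddCommGroup E] [InnerProductSpace ℂ E]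
  {F : E → E} {R : ℝ} {M : E ≃L[ℂ] E} {T : E →L[ℂ] E} {e n p : E} {a d : ℝ}

lemma continuousOn_closedBall (C : OuterContact F R M T e n p a d) :
    ContinuousOn F (closedBall 0 1) :=
  C.differentiableOn.continuousOn.mono (closedBall_subset_ball C.one_lt)

lemma addPole_sub_eq (C : OuterContact F R M T e n p a d) (κ : ℝ) (z : E) :
    addPole F T e n κ z - p = (F z - F e) + (pole T e n κ z - (d : ℂ) • n) := by
  rw [addPole, C.p_eq]
  abel

lemma eventually_norm_map_sub_lt (C : OuterContact F R M T e n p a d) {σ η : ℝ} (hσ : 0 < σ)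
    (hη : 0 < η) : ∀ᶠ κ in 𝓝[>] (0 : ℝ), ∀ z, ‖z‖ < 1 → σ ≤ ‖poleCoord e κ z‖ →
      ‖F z - F e‖ < η := by
  obtain ⟨δ, hδ, hF⟩ := Metric.continuousAt_iff.1 C.hasStrictFDerivAt.continuousAt η hη
  filter_upwards [Ioo_mem_nhdsGT (by positivity : 0 < δ * σ / 2)] with κ ⟨hκ, hκδ⟩ z hz hσz
  rw [← dist_eq_norm]
  refine hF ?_
  rw [dist_eq_norm]
  refine (C.frame.norm_sub_e_le_of_le_norm_poleCoord hκ.le hσ hz hσz).trans_lt ?_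
  rw [div_lt_iff₀ hσ]
  linarith

lemma eventually_norm_addPole_sub_lt (C : OuterContact F R M T e n p a d) {σ : ℝ} (hσ : 0 < σ) :
    ∀ᶠ κ in 𝓝[>] (0 : ℝ), ∀ z ∈ ball 0 (domRadius d κ), σ ≤ ‖poleCoord e κ z‖ →
      ‖addPole F T e n κ z - p‖ < d - 4 / 100 * σ := by
  filter_upwards [self_mem_nhdsWithin,
    C.eventually_norm_map_sub_lt hσ (by positivity : 0 < 4 / 100 * σ)] with κ hκ hF z hz hσz
  have hz1 := norm_lt_one_of_mem_ball_domRadius hz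
  have hpole := C.frame.norm_pole_sub_le hκ hz1
    (C.frame.norm_poleCoord_le C.d_pos (mem_ball_domRadius_iff.1 hz))
  rw [C.addPole_sub_eq]
  linarith [norm_add_le (F z - F e) (pole T e n κ z - (d : ℂ) • n), hF z hz1 hσz]

-- Near `e` the map is a small Lipschitz perturbation of the model map `addPole M`.
lemma exists_injOn_inter_ball (C : OuterContact F R M T e n p a d) :
    ∃ ρ > 0, ∀ κ : ℝ, 0 ≤ κ → InjOn (addPole F T e n κ) (ball 0 1 ∩ ball e ρ) := by
  obtain ⟨c, hc, hmodel⟩ := C.frame.exists_forall_mul_norm_sub_le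
  obtain ⟨ρ, hρ, hlin⟩ := Metric.eventually_nhds_iff.1
    (C.hasStrictFDerivAt.isLittleO.def (by positivity : 0 < c / 2))
  refine ⟨ρ, hρ, fun κ hκ z hz z' hz' heq => ?_⟩
  have hlow := hmodel κ hκ z z' (mem_ball_zero_iff.1 hz.1) (mem_ball_zero_iff.1 hz'.1)
  have hup : ‖F z - F z' - (M : E →L[ℂ] E) (z - z')‖ ≤ c / 2 * ‖z - z'‖ :=
    hlin (y := (z, z')) (max_lt hz.2 hz'.2)
  have hdiff : addPole M T e n κ z - addPole M T e n κ z' =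
      -(F z - F z' - (M : E →L[ℂ] E) (z - z')) :=
    calc addPole M T e n κ z - addPole M T e n κ z'
        = (addPole F T e n κ z - addPole F T e n κ z') - (F z - F z' - M (z - z')) := by
          simp only [addPole, map_sub]
          abel
      _ = -(F z - F z' - (M : E →L[ℂ] E) (z - z')) := by
          rw [heq, sub_self, zero_sub, ContinuousLinearEquiv.coe_coe]
  rw [hdiff, norm_neg] at hlow
  refine sub_eq_zero.1 (norm_le_zero_iff.1 ?_)
  nlinarith

variable [FiniteDimensional ℂ E]

lemma eventually_mapsTo (C : OuterContact F R M T e n p a d) {W : Set E} (hW : IsOpen W)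
    (hFW : F '' closedBall 0 1 ⊆ W) (hpW : ball p d ⊆ W) :
    ∀ᶠ κ in 𝓝[>] (0 : ℝ), MapsTo (addPole F T e n κ) (ball 0 (domRadius d κ)) W := by
  have : ProperSpace E := FiniteDimensional.proper ℂ E
  obtain ⟨η, hη, hηW⟩ := ((isCompact_closedBall (0 : E) 1).image_of_continuousOn
    C.continuousOn_closedBall).exists_thickening_subset_open hW hFW
  filter_upwards [C.eventually_norm_addPole_sub_lt (by positivity : 0 < η / 2)] with κ hin z hz
  have hz1 := norm_lt_one_of_mem_ball_domRadius hz
  rcases le_or_gt (η / 2) ‖poleCoord e κ z‖ with hlarge | hsmall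
  · apply hpW
    rw [mem_ball_iff_norm]
    linarith [hin z hz hlarge]
  · apply hηW
    refine mem_thickening_iff.2 ⟨F z, mem_image_of_mem F (mem_closedBall_zero_iff.2 hz1.le), ?_⟩
    rw [dist_eq_norm, addPole, add_sub_cancel_left]
    linarith [C.frame.norm_pole_le κ hz1]

lemma exists_mul_norm_sub_le (C : OuterContact F R M T e n p a d) :
    ∃ c > 0, ∀ z ∈ closedBall (0 : E) 1, ∀ z' ∈ closedBall (0 : E) 1,
      c * ‖z - z'‖ ≤ ‖F z - F z'‖ :=
  have : ProperSpace E := FiniteDimensional.proper ℂ E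
  exists_antilipschitz rfl isOpen_ball C.differentiableOn C.injOn (isCompact_closedBall 0 1)
    (closedBall_subset_ball C.one_lt)

lemma eventually_injOn_diff_ball (C : OuterContact F R M T e n p a d) {ρ : ℝ} (hρ : 0 < ρ) :
    ∀ᶠ κ in 𝓝[>] (0 : ℝ), InjOn (addPole F T e n κ) (ball 0 1 \ ball e ρ) := by
  obtain ⟨c, hc, hanti⟩ := C.exists_mul_norm_sub_le
  set L := 1 / (ρ / 2) ^ 3 + ‖T‖ / (ρ / 2) ^ 2 + ‖T‖ / (ρ / 2) ^ 4
  have hL : 0 < L := by positivity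
  have hfar : ∀ z ∈ ball (0 : E) 1 \ ball e ρ, (ρ / 2) ^ 2 ≤ ‖normalCoord e z‖ := by
    rintro z ⟨hz, hze⟩
    rw [mem_ball_iff_norm, not_lt] at hze
    nlinarith [C.frame.norm_sub_e_sq_le (mem_ball_zero_iff.1 hz)]
  filter_upwards [Ioo_mem_nhdsGT (by positivity : 0 < c / L)] with κ ⟨hκ, hκL⟩ z hz z' hz' heq
  have hF : F z - F z' = -(pole T e n κ z - pole T e n κ z') := by
    rw [addPole, addPole, ← sub_eq_zero] at heq
    rw [eq_neg_iff_add_eq_zero, ← heq]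
    abel
  have hlow := hanti z (ball_subset_closedBall hz.1) z' (ball_subset_closedBall hz'.1)
  have hup := C.frame.norm_pole_sub_pole_le hκ.le (half_pos hρ) (mem_ball_zero_iff.1 hz.1)
    (mem_ball_zero_iff.1 hz'.1) (hfar z hz) (hfar z' hz')
  rw [hF, norm_neg] at hlow
  rw [lt_div_iff₀ hL] at hκL
  refine sub_eq_zero.1 (norm_le_zero_iff.1 ?_)
  nlinarith

-- If the pole is small at `z`, the lower bound for `F` separates the values; otherwise the value at
-- `z` is well inside the ball around `p`, which `F` avoids.
lemma eventually_addPole_ne (C : OuterContact F R M T e n p a d) {ρ : ℝ} (hρ : 0 < ρ) :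
    ∀ᶠ κ in 𝓝[>] (0 : ℝ), ∀ z ∈ ball 0 (domRadius d κ), ∀ z' ∈ ball 0 (domRadius d κ),
      ‖z - e‖ < ρ / 2 → ρ ≤ ‖z' - e‖ → addPole F T e n κ z ≠ addPole F T e n κ z' := by
  obtain ⟨c, hc, hanti⟩ := C.exists_mul_norm_sub_le
  have hσ : 0 < c * ρ / 10 := by positivity
  filter_upwards [C.eventually_norm_addPole_sub_lt hσ,
    C.frame.eventually_norm_pole_lt hρ (by positivity : 0 < 4 / 100 * (c * ρ / 10))]
    with κ hin hfar z hz z' hz' hze hze' heq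
  have hz1 := norm_lt_one_of_mem_ball_domRadius hz
  have hz1' := norm_lt_one_of_mem_ball_domRadius hz'
  have hpole' := hfar z' hz1' hze'
  rcases le_or_gt (c * ρ / 10) ‖poleCoord e κ z‖ with hlarge | hsmall
  · have hinside := hin z hz hlarge
    have houtside := C.le_norm_sub z' (mem_closedBall_zero_iff.2 hz1'.le)
    rw [heq, addPole, add_sub_right_comm] at hinside
    linarith [norm_sub_le_norm_add (F z' - p) (pole T e n κ z')]
  · have hF : F z - F z' = pole T e n κ z' - pole T e n κ z := by
      rw [sub_eq_sub_iff_add_eq_add, ← addPole, heq, addPole, add_comm]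
    have hlow := hanti z (mem_closedBall_zero_iff.2 hz1.le) z' (mem_closedBall_zero_iff.2 hz1'.le)
    have hsep : ρ / 2 ≤ ‖z - z'‖ := by
      linarith [norm_sub_le_norm_sub_add_norm_sub z' z e, norm_sub_rev z' z]
    rw [hF] at hlow
    have hup := norm_sub_le (pole T e n κ z') (pole T e n κ z)
    nlinarith [C.frame.norm_pole_le κ hz1]

lemma eventually_injOn (C : OuterContact F R M T e n p a d) :
    ∀ᶠ κ in 𝓝[>] (0 : ℝ), InjOn (addPole F T e n κ) (ball 0 (domRadius d κ)) := by
  obtain ⟨ρ, hρ, hnear⟩ := C.exists_injOn_inter_ball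
  filter_upwards [self_mem_nhdsWithin, C.eventually_injOn_diff_ball (half_pos hρ),
    C.eventually_addPole_ne hρ] with κ hκ hdiff hne
  have hone : ∀ z ∈ ball (0 : E) (domRadius d κ), z ∈ ball (0 : E) 1 := fun z hz =>
    mem_ball_zero_iff.2 (norm_lt_one_of_mem_ball_domRadius hz)
  have hfar : ∀ z ∈ ball 0 (domRadius d κ), ∀ z' ∈ ball 0 (domRadius d κ),
      addPole F T e n κ z = addPole F T e n κ z' → ρ ≤ ‖z' - e‖ → z = z' := by
    intro z hz z' hz' heq hze'
    have hze : ρ / 2 ≤ ‖z - e‖ := not_lt.1 fun hze => hne z hz z' hz' hze hze' heq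
    exact hdiff ⟨hone z hz, by simpa [dist_eq_norm] using hze⟩
      ⟨hone z' hz', by simpa [dist_eq_norm] using (half_le_self hρ.le).trans hze'⟩ heq
  intro z hz z' hz' heq
  rcases le_or_gt ρ ‖z' - e‖ with hze' | hze'
  · exact hfar z hz z' hz' heq hze'
  rcases le_or_gt ρ ‖z - e‖ with hze | hze
  · exact (hfar z' hz' z hz heq.symm hze).symm
  · exact hnear κ (le_of_lt hκ) ⟨hone z hz, mem_ball_iff_norm.2 hze⟩
      ⟨hone z' hz', mem_ball_iff_norm.2 hze'⟩ heq

end OuterContact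

lemma subset_image_of_isPreconnected {X Y : Type*} [TopologicalSpace X] [TopologicalSpace Y]
    [T2Space Y] {g : X → Y} {P : Set Y} {V K : Set X} (hP : IsPreconnected P) (hK : IsCompact K)
    (hVK : V ⊆ K) (hg : ContinuousOn g K) (hV : IsOpen (g '' V))
    (hKV : ∀ z ∈ K, g z ∈ P → z ∈ V) (hne : (P ∩ g '' V).Nonempty) : P ⊆ g '' V := by
  refine hP.subset_of_closure_inter_subset hV hne ?_
  rintro y ⟨hy, hyP⟩
  obtain ⟨z, hz, rfl⟩ := closure_minimal (image_mono hVK) (hK.image_of_continuousOn hg).isClosed hy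
  exact ⟨z, hKV z hz hyP, rfl⟩

lemma norm_sub_ofReal_le {w u : ℂ} {q : ℝ} (hw : ‖w - 1‖ ≤ 1 / 50) (hq : 0 ≤ q)
    (hwu : w ^ 2 * u = q) : ‖u - q‖ ≤ 1 / 20 * q := by
  have hdiff : u - q = -((w - 1) * (w - 1 + 2) * u) := by
    rw [← hwu]
    ring
  have hsum : ‖w - 1 + 2‖ ≤ 1 / 50 + 2 :=
    (norm_add_le _ _).trans (by simpa using hw)
  have hsmall : ‖u - q‖ ≤ 1 / 50 * (1 / 50 + 2) * ‖u‖ := by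
    rw [hdiff, norm_neg, norm_mul, norm_mul]
    gcongr
  have hu : ‖u‖ ≤ ‖u - q‖ + q := by
    simpa [abs_of_nonneg hq] using norm_add_le (u - q) q
  linarith

namespace TangentFrame

variable {E : Type*} [NormedAddCommGroup E] [InnerProductSpace ℂ E]
  {M : E ≃L[ℂ] E} {T : E →L[ℂ] E} {e n : E} {a κ d : ℝ} {z : E}

lemma norm_poleCoord_sub_le_norm_pole_sub (D : TangentFrame M T e n a) (κ d : ℝ) (z : E) :
    ‖poleCoord e κ z - d‖ ≤ ‖pole T e n κ z - (d : ℂ) • n‖ := by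
  refine le_of_sq_le_sq ?_ (norm_nonneg _)
  linarith [D.norm_pole_sub_sq κ d z, sq_nonneg (κ / 4 * ‖normalCoord e z‖⁻¹ * ‖T z‖)]

lemma mul_norm_T_le_norm_pole_sub (D : TangentFrame M T e n a) (κ d : ℝ) (z : E) :
    κ / 4 * ‖normalCoord e z‖⁻¹ * ‖T z‖ ≤ ‖pole T e n κ z - (d : ℂ) • n‖ := by
  refine le_of_sq_le_sq ?_ (norm_nonneg _)
  linarith [D.norm_pole_sub_sq κ d z, sq_nonneg ‖poleCoord e κ z - d‖]

lemma half_le_norm_poleCoord (D : TangentFrame M T e n a)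
    (hpole : ‖pole T e n κ z - (d : ℂ) • n‖ ≤ d / 50) : d / 2 ≤ ‖poleCoord e κ z‖ := by
  have hd : d ≤ ‖(d : ℂ)‖ := by simpa using le_abs_self d
  have hnonneg := (norm_nonneg _).trans hpole
  linarith [D.norm_poleCoord_sub_le_norm_pole_sub κ d z, norm_sub_norm_le (d : ℂ) (poleCoord e κ z),
    norm_sub_rev (d : ℂ) (poleCoord e κ z)]

lemma norm_normalCoord_sub_ofReal_le (D : TangentFrame M T e n a) (hd : 0 < d) (hz : ‖z‖ < 1)
    (hpole : ‖pole T e n κ z - (d : ℂ) • n‖ ≤ d / 50) :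
    ‖normalCoord e z - (κ ^ 2 / d ^ 2 : ℝ)‖ ≤ 1 / 20 * (κ ^ 2 / d ^ 2) := by
  have hd' : (d : ℂ) ≠ 0 := Complex.ofReal_ne_zero.2 hd.ne'
  refine norm_sub_ofReal_le (w := poleCoord e κ z / d) ?_ (by positivity) ?_
  · rw [div_sub_one hd', norm_div, Complex.norm_of_nonneg hd.le, div_le_iff₀ hd]
    linarith [D.norm_poleCoord_sub_le_norm_pole_sub κ d z]
  · rw [div_pow, div_mul_eq_mul_div, poleCoord_sq_mul_normalCoord (D.normalCoord_re_pos hz)]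
    push_cast
    rfl

lemma norm_T_le_of_norm_pole_sub_le (D : TangentFrame M T e n a) (hκ : 0 < κ) (hd : 0 < d)
    (hz : ‖z‖ < 1) (hpole : ‖pole T e n κ z - (d : ℂ) • n‖ ≤ d / 50)
    (hu : ‖normalCoord e z‖ ≤ 21 / 20 * (κ ^ 2 / d ^ 2)) : ‖T z‖ ≤ 1 / 10 * (κ / d) := by
  have hupos := D.norm_normalCoord_pos hz
  have htangential := (D.mul_norm_T_le_norm_pole_sub κ d z).trans hpole
  have hT : κ * ‖T z‖ ≤ d * (1 / 10 * (κ ^ 2 / d ^ 2)) :=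
    calc κ * ‖T z‖ = 4 * (κ / 4 * ‖normalCoord e z‖⁻¹ * ‖T z‖) * ‖normalCoord e z‖ := by
          field_simp
      _ ≤ 4 * (d / 50) * (21 / 20 * (κ ^ 2 / d ^ 2)) := by gcongr
      _ ≤ d * (1 / 10 * (κ ^ 2 / d ^ 2)) := by
          have : 0 ≤ d * (κ ^ 2 / d ^ 2) := by positivity
          linarith
  refine le_of_mul_le_mul_left (hT.trans_eq ?_) hκ
  field_simp

lemma mem_ball_domRadius (D : TangentFrame M T e n a) (hκ : 0 < κ) (hκd : κ ≤ d / 10)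
    (hz : ‖z‖ < 1) (hpole : ‖pole T e n κ z - (d : ℂ) • n‖ ≤ d / 50) :
    z ∈ ball 0 (domRadius d κ) := by
  have hd : 0 < d := by linarith
  have hclose := D.norm_normalCoord_sub_ofReal_le hd hz hpole
  have hre : 19 / 20 * (κ ^ 2 / d ^ 2) ≤ (normalCoord e z).re := by
    have := (abs_le.1 ((Complex.abs_re_le_norm _).trans hclose)).1
    rw [Complex.sub_re, Complex.ofReal_re] at this
    linarith
  have hu : ‖normalCoord e z‖ ≤ 21 / 20 * (κ ^ 2 / d ^ 2) := by
    have := norm_le_norm_add_norm_sub' (normalCoord e z) (κ ^ 2 / d ^ 2 : ℝ)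
    rw [Complex.norm_of_nonneg (by positivity)] at this
    linarith
  have hT := D.norm_T_le_of_norm_pole_sub_le hκ hd hz hpole hu
  have hTsq : ‖T z‖ ^ 2 ≤ 1 / 100 * (κ ^ 2 / d ^ 2) :=
    calc ‖T z‖ ^ 2 ≤ (1 / 10 * (κ / d)) ^ 2 := by gcongr
      _ = 1 / 100 * (κ ^ 2 / d ^ 2) := by ring
  have hq : 0 < κ ^ 2 / d ^ 2 := by positivity
  have hq' : κ ^ 2 / d ^ 2 ≤ 1 / 100 := by
    rw [div_le_iff₀ (by positivity)]
    nlinarith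
  rw [mem_ball_domRadius_iff, D.norm_sq_eq]
  nlinarith [norm_nonneg (normalCoord e z)]

lemma pole_one_sub_sq_smul (D : TangentFrame M T e n a) (hκ : 0 < κ) (hd : 0 < d) :
    pole T e n κ ((1 - (κ / d) ^ 2 : ℂ) • e) = (d : ℂ) • n := by
  have hcoord : normalCoord e ((1 - (κ / d) ^ 2 : ℂ) • e) = ((κ / d : ℝ) : ℂ) ^ 2 := by
    rw [normalCoord, inner_smul_right, D.inner_e_self]
    push_cast
    ring
  have hκ' : (κ : ℂ) ≠ 0 := Complex.ofReal_ne_zero.2 hκ.ne'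
  have hroot : csqrt (((κ / d : ℝ) : ℂ) ^ 2) = (κ / d : ℝ) :=
    Complex.sq_cpow_two_inv (by rw [Complex.ofReal_re]; positivity)
  rw [pole, poleCoord, hcoord, hroot, map_smul, D.T_e, smul_zero, smul_zero, add_zero]
  congr 1
  push_cast
  field_simp

lemma exists_pole_eq (D : TangentFrame M T e n a) (hκ : 0 < κ) (hκd : κ ≤ d / 10) :
    ∃ z ∈ ball 0 (domRadius d κ), pole T e n κ z = (d : ℂ) • n := by
  have hd : 0 < d := by linarith
  have hval := D.pole_one_sub_sq_smul hκ hd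
  have hratio : κ / d ≤ 1 / 10 := by
    rw [div_le_iff₀ hd]
    linarith
  have hpos : 0 < κ / d := by positivity
  refine ⟨_, D.mem_ball_domRadius hκ hκd ?_ ?_, hval⟩
  · rw [norm_smul, D.norm_e, mul_one, ← Complex.ofReal_div, ← Complex.ofReal_pow,
      ← Complex.ofReal_one, ← Complex.ofReal_sub, Complex.norm_of_nonneg (by nlinarith)]
    nlinarith
  · rw [hval, sub_self, norm_zero]
    positivity

end TangentFrame

namespace OuterContact

variable {E : Type u} [NormedAddCommGroup E] [InnerProductSpace ℂ E]
  {F : E → E} {R : ℝ} {M : E ≃L[ℂ] E} {T : E →L[ℂ] E} {e n p : E} {a d κ : ℝ}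

lemma differentiableAt_addPole (C : OuterContact F R M T e n p a d) (κ : ℝ) {z : E}
    (hz : ‖z‖ < 1) : DifferentiableAt ℂ (addPole F T e n κ) z :=
  (C.differentiableOn.differentiableAt
    (isOpen_ball.mem_nhds (mem_ball_zero_iff.2 (hz.trans C.one_lt)))).add
    (differentiableAt_pole (C.frame.normalCoord_re_pos hz))

lemma differentiableOn_addPole (C : OuterContact F R M T e n p a d) (κ : ℝ) :
    DifferentiableOn ℂ (addPole F T e n κ) (ball 0 (domRadius d κ)) := fun _ hz =>
  (C.differentiableAt_addPole κ (norm_lt_one_of_mem_ball_domRadius hz)).differentiableWithinAt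

variable [FiniteDimensional ℂ E]

lemma isOpen_image_addPole (C : OuterContact F R M T e n p a d)
    (hinj : InjOn (addPole F T e n κ) (ball 0 (domRadius d κ))) {V : Set E} (hV : IsOpen V)
    (hVd : V ⊆ ball 0 (domRadius d κ)) : IsOpen (addPole F T e n κ '' V) :=
  isOpen_image_of_injOn rfl hV ((C.differentiableOn_addPole κ).mono hVd) (hinj.mono hVd)

lemma eventually_addPole_zero_mem (C : OuterContact F R M T e n p a d) {s : ℝ} (hs0 : 0 < s)
    (hs1 : s < 1) : ∀ᶠ κ in 𝓝[>] (0 : ℝ), addPole F T e n κ 0 ∈ F '' ball 0 s := by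
  have hsub : ball (0 : E) s ⊆ ball 0 R := ball_subset_ball (hs1.trans C.one_lt).le
  have hopen : IsOpen (F '' ball 0 s) :=
    isOpen_image_of_injOn rfl isOpen_ball (C.differentiableOn.mono hsub) (C.injOn.mono hsub)
  have hzero : ∀ κ : ℝ, addPole F T e n κ 0 = F 0 + (κ : ℂ) • n := fun κ => by
    simp [addPole, pole, poleCoord, normalCoord, csqrt]
  have hcont : Continuous fun κ : ℝ => F 0 + (κ : ℂ) • n := by fun_prop
  simp only [hzero]
  refine nhdsWithin_le_nhds (hcont.continuousAt.eventually_mem (hopen.mem_nhds ?_))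
  rw [Complex.ofReal_zero, zero_smul, add_zero]
  exact mem_image_of_mem F (mem_ball_self hs0)

lemma eventually_image_closedBall_subset (C : OuterContact F R M T e n p a d) {s : ℝ}
    (hs0 : 0 < s) (hs1 : s < 1) :
    ∀ᶠ κ in 𝓝[>] (0 : ℝ),
      F '' closedBall 0 s ⊆ addPole F T e n κ '' ball 0 (domRadius d κ) := by
  have : ProperSpace E := FiniteDimensional.proper ℂ E
  obtain ⟨c, hc, hanti⟩ := C.exists_mul_norm_sub_le
  obtain ⟨s', hss', hs'1⟩ := exists_between hs1
  filter_upwards [C.eventually_injOn, C.eventually_addPole_zero_mem hs0 hs1,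
    eventually_lt_domRadius d hs'1, C.frame.eventually_norm_pole_lt (sub_pos.2 hs'1)
      (mul_pos hc (sub_pos.2 hss'))] with κ hinj hzero hrad hpole
  have hsub : closedBall (0 : E) s' ⊆ ball 0 (domRadius d κ) := closedBall_subset_ball hrad
  have hP : IsPreconnected (F '' closedBall 0 s) :=
    (convex_closedBall (0 : E) s).isPreconnected.image F
      (C.continuousOn_closedBall.mono (closedBall_subset_closedBall hs1.le))
  refine (subset_image_of_isPreconnected hP (isCompact_closedBall (0 : E) s')
    ball_subset_closedBall ((C.differentiableOn_addPole κ).continuousOn.mono hsub)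
    (C.isOpen_image_addPole hinj isOpen_ball (ball_subset_closedBall.trans hsub)) ?_ ?_).trans
    (image_mono (ball_subset_closedBall.trans hsub))
  · rintro z hz ⟨w, hw, hwz⟩
    rw [mem_closedBall_zero_iff] at hz hw
    have hze : 1 - s' ≤ ‖z - e‖ := by
      linarith [norm_sub_norm_le e z, norm_sub_rev e z, C.frame.norm_e]
    have hlow := hanti w (mem_closedBall_zero_iff.2 (hw.trans hs1.le)) z
      (mem_closedBall_zero_iff.2 (hz.trans hs'1.le))
    rw [hwz, addPole, add_sub_cancel_left] at hlow
    have hwz' : ‖w - z‖ < s' - s :=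
      lt_of_mul_lt_mul_left (hlow.trans_lt (hpole z (hz.trans_lt hs'1) hze)) hc.le
    rw [mem_ball_zero_iff]
    linarith [norm_sub_norm_le z w, norm_sub_rev z w]
  · exact ⟨_, image_mono ball_subset_closedBall hzero,
      mem_image_of_mem _ (mem_ball_self (hs0.trans hss'))⟩

-- Where the pole is within `d / 50` of `d • n`, the map `F` is almost constant, so this region is
-- mapped properly over the small ball.
lemma eventually_closedBall_subset_image (C : OuterContact F R M T e n p a d) :
    ∀ᶠ κ in 𝓝[>] (0 : ℝ),
      closedBall p (d / 100) ⊆ addPole F T e n κ '' ball 0 (domRadius d κ) := by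
  have : ProperSpace E := FiniteDimensional.proper ℂ E
  have hd := C.d_pos
  filter_upwards [C.eventually_injOn, Ioo_mem_nhdsGT (by positivity : 0 < d / 10),
    C.eventually_norm_map_sub_lt (half_pos hd) (by positivity : 0 < d / 100)]
    with κ hinj ⟨hκ, hκd⟩ hF
  have hclosed : ∀ z ∈ closedBall (0 : E) (domRadius d κ), ‖z‖ < 1 := fun z hz =>
    (mem_closedBall_zero_iff.1 hz).trans_lt (domRadius_lt_one hd hκ)
  have hFe : ∀ z, ‖z‖ < 1 → ‖pole T e n κ z - (d : ℂ) • n‖ ≤ d / 50 → ‖F z - F e‖ < d / 100 :=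
    fun z hz hpole => hF z hz (C.frame.half_le_norm_poleCoord hpole)
  have hcont : ContinuousOn (fun z => ‖pole T e n κ z - (d : ℂ) • n‖)
      (closedBall 0 (domRadius d κ)) := fun z hz =>
    ((differentiableAt_pole (C.frame.normalCoord_re_pos (hclosed z hz))).continuousAt.sub
      continuousAt_const).norm.continuousWithinAt
  have hcompact := (isCompact_closedBall (0 : E) (domRadius d κ)).of_isClosed_subset
    (hcont.preimage_isClosed_of_isClosed isClosed_closedBall (isClosed_Iic (a := d / 50)))
    inter_subset_left
  have hopen := (hcont.mono ball_subset_closedBall).isOpen_inter_preimage isOpen_ball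
    (isOpen_Iio (a := d / 50))
  refine (subset_image_of_isPreconnected (convex_closedBall _ _).isPreconnected hcompact
    (inter_subset_inter ball_subset_closedBall (preimage_mono Iio_subset_Iic_self))
    (fun z hz => (C.differentiableAt_addPole κ (hclosed z hz.1)).continuousAt.continuousWithinAt)
    (C.isOpen_image_addPole hinj hopen inter_subset_left) ?_ ?_).trans
    (image_mono inter_subset_left)
  · rintro z ⟨hz, hpole⟩ hzp
    refine ⟨C.frame.mem_ball_domRadius hκ hκd.le (hclosed z hz) hpole, ?_⟩
    rw [mem_closedBall_iff_norm, C.addPole_sub_eq] at hzp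
    rw [mem_preimage, mem_Iio]
    linarith [hFe z (hclosed z hz) hpole,
      norm_le_add_norm_add' (F z - F e) (pole T e n κ z - (d : ℂ) • n)]
  · obtain ⟨z, hz, hval⟩ := C.frame.exists_pole_eq hκ hκd.le
    have hzero : ‖pole T e n κ z - (d : ℂ) • n‖ = 0 := by rw [hval, sub_self, norm_zero]
    refine ⟨_, ?_, mem_image_of_mem _ ⟨hz, ?_⟩⟩
    · rw [mem_closedBall_iff_norm, C.addPole_sub_eq, hval, sub_self, add_zero]
      exact (hFe z (norm_lt_one_of_mem_ball_domRadius hz) (by linarith)).le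
    · rw [mem_preimage, mem_Iio, hzero]
      positivity

end OuterContact

section Contact

variable {E : Type u} [NormedAddCommGroup E] [InnerProductSpace ℂ E] [FiniteDimensional ℂ E]
  {F : E → E} {R d : ℝ} {e p : E}

lemma exists_outerContact (hR : 1 < R) (hF : DifferentiableOn ℂ F (ball 0 R))
    (hinj : InjOn F (ball 0 R)) (he : ‖e‖ = 1) (hd : 0 < d) (hep : ‖F e - p‖ = d)
    (hmin : ∀ z ∈ closedBall (0 : E) 1, d ≤ ‖F z - p‖) :
    ∃ (M : E ≃L[ℂ] E) (T : E →L[ℂ] E) (n : E) (a : ℝ), OuterContact F R M T e n p a d := by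
  have heR : e ∈ ball (0 : E) R := mem_ball_zero_iff.2 (he.trans_lt hR)
  obtain ⟨M, hM⟩ := exists_hasStrictFDerivAt_equiv rfl isOpen_ball hF hinj heR
  have hne : F e ≠ p := fun h => hd.ne' (by rw [← hep, h, sub_self, norm_zero])
  obtain ⟨a, ha, hnormal⟩ := exists_inner_fderiv_eq_of_isMinOn he hM.hasFDerivAt M.surjective hne
    (fun z hz => hep.trans_le (hmin z hz))
  obtain ⟨T, hTsq, hTM, hTadd⟩ :=
    exists_tangential_isometry (M := (M : E →L[ℂ] E)) M.injective he
  have hd' : (d : ℂ) ≠ 0 := Complex.ofReal_ne_zero.2 hd.ne'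
  have hinner : ∀ z, inner ℂ ((d : ℂ)⁻¹ • (p - F e)) (M z) = (a / d : ℝ) * inner ℂ e z :=
    fun z => by
      rw [inner_smul_left, ← ContinuousLinearEquiv.coe_coe, hnormal, map_inv₀, Complex.conj_ofReal]
      push_cast
      ring
  refine ⟨M, T, (d : ℂ)⁻¹ • (p - F e), a / d,
    ⟨he, ?_, div_pos ha hd, hinner, hTsq, fun z => ?_, hTadd⟩, hR, hF, hinj, ?_, hd, hmin, hM⟩
  · rw [norm_smul, norm_inv, Complex.norm_of_nonneg hd.le, norm_sub_rev, hep,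
      inv_mul_cancel₀ hd.ne']
  · obtain ⟨k, hk, hTk⟩ := hTM z
    rw [hTk, ContinuousLinearEquiv.coe_coe, hinner, hk, mul_zero]
  · rw [smul_inv_smul₀ hd', add_sub_cancel]

end Contact

/-! ### Filling balls in a connected open set -/

section Rescaling

variable {E : Type*} [NormedAddCommGroup E] [NormedSpace ℂ E] {α : Type*} {r R : ℝ}

lemma smul_mem_ball_mul_iff (hr : 0 < r) {z : E} :
    (r : ℂ) • z ∈ ball (0 : E) (r * R) ↔ z ∈ ball 0 R := by
  rw [mem_ball_zero_iff, mem_ball_zero_iff, norm_smul, Complex.norm_of_nonneg hr.le,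
    mul_lt_mul_iff_right₀ hr]

lemma differentiableOn_comp_smul_ball {F : Type*} [NormedAddCommGroup F] [NormedSpace ℂ F]
    {f : E → F} (hr : 0 < r) (hf : DifferentiableOn ℂ f (ball 0 (r * R))) :
    DifferentiableOn ℂ (fun z => f ((r : ℂ) • z)) (ball 0 R) :=
  hf.comp (differentiable_id.const_smul (r : ℂ)).differentiableOn
    fun _ hz => (smul_mem_ball_mul_iff hr).2 hz

lemma injOn_comp_smul_ball {f : E → α} (hr : 0 < r) (hf : InjOn f (ball 0 (r * R))) :
    InjOn (fun z => f ((r : ℂ) • z)) (ball 0 R) := fun _ hz _ hz' h =>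
  smul_right_injective E (Complex.ofReal_ne_zero.2 hr.ne')
    (hf ((smul_mem_ball_mul_iff hr).2 hz) ((smul_mem_ball_mul_iff hr).2 hz') h)

lemma image_comp_smul_ball (f : E → α) (hr : 0 < r) (R : ℝ) :
    (fun z => f ((r : ℂ) • z)) '' ball 0 R = f '' ball 0 (r * R) := by
  have h := smul_ball (Complex.ofReal_ne_zero.2 hr.ne') (0 : E) R
  rw [smul_zero, Complex.norm_of_nonneg hr.le] at h
  rw [← h, ← image_smul, image_image]

lemma image_comp_smul_closedBall (f : E → α) (hr : 0 < r) (R : ℝ) :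
    (fun z => f ((r : ℂ) • z)) '' closedBall 0 R = f '' closedBall 0 (r * R) := by
  have h := smul_closedBall' (Complex.ofReal_ne_zero.2 hr.ne') (0 : E) R
  rw [smul_zero, Complex.norm_of_nonneg hr.le] at h
  rw [← h, ← image_smul, image_image]

end Rescaling

/-- `f` is injective and holomorphic on the unit ball, which it maps into `W`. -/
structure IsBallEmbedding {E : Type*} [NormedAddCommGroup E] [NormedSpace ℂ E] (f : E → E)
    (W : Set E) : Prop where
  differentiableOn : DifferentiableOn ℂ f (ball 0 1)
  injOn : InjOn f (ball 0 1)
  image_subset : f '' ball 0 1 ⊆ W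

lemma IsBallEmbedding.mono {E : Type*} [NormedAddCommGroup E] [NormedSpace ℂ E] {f : E → E}
    {W W' : Set E} (hf : IsBallEmbedding f W) (hWW' : W ⊆ W') : IsBallEmbedding f W' :=
  ⟨hf.differentiableOn, hf.injOn, hf.image_subset.trans hWW'⟩

lemma IsBallEmbedding.comp_smul {E : Type*} [NormedAddCommGroup E] [NormedSpace ℂ E] {f : E → E}
    {W : Set E} {r : ℝ} (hr : 0 < r) (hf : DifferentiableOn ℂ f (ball 0 r))
    (hinj : InjOn f (ball 0 r)) (hfW : f '' ball 0 r ⊆ W) :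
    IsBallEmbedding (fun z => f ((r : ℂ) • z)) W := by
  rw [← mul_one r] at hf hinj hfW
  refine ⟨differentiableOn_comp_smul_ball hr hf, injOn_comp_smul_ball hr hinj, ?_⟩
  rwa [image_comp_smul_ball f hr]

lemma eq_of_isLocalMin_dist {E : Type*} [NormedAddCommGroup E] [NormedSpace ℝ E] {x p : E}
    (h : IsLocalMin (fun y => dist y p) x) : x = p := by
  have hmin := IsMinOn.of_isLocalMin_of_convex_univ h (convexOn_univ_dist p)
  simpa using hmin p

section Filling

variable {E : Type u} [NormedAddCommGroup E] [InnerProductSpace ℂ E] [FiniteDimensional ℂ E]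
  {F : E → E} {W K : Set E} {p q : E} {s δ R : ℝ}

lemma IsBallEmbedding.isOpen_image {f : E → E} (hf : IsBallEmbedding f W) :
    IsOpen (f '' ball 0 1) :=
  isOpen_image_of_injOn rfl isOpen_ball hf.differentiableOn hf.injOn

lemma IsBallEmbedding.exists_radius {f : E → E} (hf : IsBallEmbedding f W) (hK : IsCompact K)
    (hKf : K ⊆ f '' ball 0 1) : ∃ s, 0 < s ∧ s < 1 ∧ K ⊆ f '' ball 0 s := by
  have : Nonempty (Ioo (0 : ℝ) 1) := ⟨⟨1 / 2, by norm_num, by norm_num⟩⟩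
  have hopen (s : Ioo (0 : ℝ) 1) : IsOpen (f '' ball 0 (s : ℝ)) :=
    have hs := ball_subset_ball s.2.2.le
    isOpen_image_of_injOn rfl isOpen_ball (hf.differentiableOn.mono hs) (hf.injOn.mono hs)
  have hcover : K ⊆ ⋃ s : Ioo (0 : ℝ) 1, f '' ball 0 (s : ℝ) := by
    rintro _ hx
    obtain ⟨z, hz, rfl⟩ := hKf hx
    obtain ⟨s, hzs, hs1⟩ := exists_between (mem_ball_zero_iff.1 hz)
    exact mem_iUnion.2 ⟨⟨s, (norm_nonneg z).trans_lt hzs, hs1⟩, z, mem_ball_zero_iff.2 hzs, rfl⟩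
  obtain ⟨s, hs⟩ := hK.elim_directed_cover _ hopen hcover
    (Monotone.directed_le fun _ _ hab => image_mono (ball_subset_ball hab))
  exact ⟨s, s.2.1, s.2.2, hs⟩

lemma exists_norm_eq_one_forall_dist_le (hR : 1 < R) (hF : DifferentiableOn ℂ F (ball 0 R))
    (hinj : InjOn F (ball 0 R)) (hp : p ∉ F '' closedBall 0 1) :
    ∃ e, ‖e‖ = 1 ∧ ∀ z ∈ closedBall 0 1, dist (F e) p ≤ dist (F z) p := by
  have : ProperSpace E := FiniteDimensional.proper ℂ E
  have hcont : ContinuousOn (fun z => dist (F z) p) (closedBall 0 1) :=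
    (continuous_id.dist continuous_const).comp_continuousOn
      (hF.continuousOn.mono (closedBall_subset_ball hR))
  obtain ⟨e, he, hmin⟩ := (isCompact_closedBall (0 : E) 1).exists_isMinOn
    ⟨0, mem_closedBall_self zero_le_one⟩ hcont
  refine ⟨e, (mem_closedBall_zero_iff.1 he).antisymm (not_lt.1 fun hlt => hp ⟨e, he, ?_⟩), hmin⟩
  have hopen : IsOpen (F '' ball 0 1) :=
    have hsub := ball_subset_ball hR.le
    isOpen_image_of_injOn rfl isOpen_ball (hF.mono hsub) (hinj.mono hsub)
  refine eq_of_isLocalMin_dist ?_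
  filter_upwards [hopen.mem_nhds (mem_image_of_mem F (mem_ball_zero_iff.2 hlt))]
  rintro _ ⟨z, hz, rfl⟩
  exact hmin (ball_subset_closedBall hz)

lemma exists_isBallEmbedding_closedBall_subset (hR : 1 < R)
    (hF : DifferentiableOn ℂ F (ball 0 R)) (hinj : InjOn F (ball 0 R)) (hW : IsOpen W)
    (hFW : F '' closedBall 0 1 ⊆ W) (hp : p ∉ F '' closedBall 0 1) (hq : q ∈ F '' closedBall 0 1)
    (hpW : ball p (dist q p) ⊆ W) (hs0 : 0 < s) (hs1 : s < 1) :
    ∃ Φ, IsBallEmbedding Φ W ∧ F '' closedBall 0 s ⊆ Φ '' ball 0 1 ∧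
      ∃ y ∈ F '' closedBall 0 1, closedBall p (dist y p / 100) ⊆ Φ '' ball 0 1 := by
  obtain ⟨e, he, hmin⟩ := exists_norm_eq_one_forall_dist_le hR hF hinj hp
  have heF : F e ∈ F '' closedBall 0 1 :=
    mem_image_of_mem F (mem_closedBall_zero_iff.2 he.le)
  have hd : 0 < dist (F e) p := dist_pos.2 fun h => hp (h ▸ heF)
  have hdq : dist (F e) p ≤ dist q p := by
    obtain ⟨z, hz, rfl⟩ := hq
    exact hmin z hz
  obtain ⟨M, T, n, a, C⟩ := exists_outerContact hR hF hinj he hd (dist_eq_norm _ _).symm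
    fun z hz => (hmin z hz).trans_eq (dist_eq_norm _ _)
  obtain ⟨κ, hr, hmaps, hinj', hold, hnew⟩ :=
    ((eventually_lt_domRadius (dist (F e) p) one_pos).and
      ((C.eventually_mapsTo hW hFW ((ball_subset_ball hdq).trans hpW)).and
        (C.eventually_injOn.and ((C.eventually_image_closedBall_subset hs0 hs1).and
          C.eventually_closedBall_subset_image)))).exists
  refine ⟨_, .comp_smul hr (C.differentiableOn_addPole κ) hinj' hmaps.image_subset, ?_,
    F e, heF, ?_⟩
  · rwa [image_comp_smul_ball _ hr, mul_one]
  · rwa [image_comp_smul_ball _ hr, mul_one]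

lemma IsBallEmbedding.exists_fill {f : E → E} (hf : IsBallEmbedding f W) (hW : IsOpen W)
    (hK : IsCompact K) (hKf : K ⊆ f '' ball 0 1) (hp : p ∉ f '' ball 0 1)
    (hq : q ∈ f '' ball 0 1) (hqp : dist q p < δ) (hpW : ball p δ ⊆ W) :
    ∃ Φ, IsBallEmbedding Φ W ∧ K ⊆ Φ '' ball 0 1 ∧
      ∃ y ∈ f '' ball 0 1, closedBall p (dist y p / 100) ⊆ Φ '' ball 0 1 := by
  obtain ⟨s, hs0, hs1, hKs⟩ := hf.exists_radius (hK.insert q) (insert_subset hq hKf)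
  obtain ⟨r, hsr, hr1⟩ := exists_between hs1
  have hr0 := hs0.trans hsr
  have hrr : r * r⁻¹ = 1 := mul_inv_cancel₀ hr0.ne'
  have hsub : f '' closedBall 0 r ⊆ f '' ball 0 1 := image_mono (closedBall_subset_ball hr1)
  have himage := image_comp_smul_closedBall f hr0 1
  rw [mul_one] at himage
  have hqr : q ∈ f '' closedBall 0 r :=
    image_mono ((ball_subset_ball hsr.le).trans ball_subset_closedBall) (hKs (mem_insert q K))
  obtain ⟨Φ, hΦ, hold, y, hy, hnew⟩ := exists_isBallEmbedding_closedBall_subset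
    (F := fun z => f ((r : ℂ) • z)) (s := s / r) ((one_lt_inv₀ hr0).2 hr1)
    (differentiableOn_comp_smul_ball hr0 (by rw [hrr]; exact hf.differentiableOn))
    (injOn_comp_smul_ball hr0 (by rw [hrr]; exact hf.injOn)) hW
    (himage ▸ hsub.trans hf.image_subset) (himage ▸ fun h => hp (hsub h)) (himage ▸ hqr)
    ((ball_subset_ball hqp.le).trans hpW) (by positivity) ((div_lt_one hr0).2 hsr)
  rw [image_comp_smul_closedBall f hr0, mul_div_cancel₀ s hr0.ne'] at hold
  rw [himage] at hy
  have hKΦ := (hKs.trans (image_mono ball_subset_closedBall)).trans hold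
  exact ⟨Φ, hΦ, (subset_insert q K).trans hKΦ, y, hsub hy, hnew⟩

end Filling

lemma isPreconnected_sdiff_of_subset {X : Type*} [TopologicalSpace X] {W N C : Set X}
    (hW : IsPreconnected W) (hWo : IsOpen W) (hN : IsOpen N) (hC : IsClosed C) (hCN : C ⊆ N)
    (hNW : N ⊆ W) (hNC : IsPreconnected (N \ C)) : IsPreconnected (W \ C) := by
  rw [isPreconnected_iff_subset_of_disjoint] at hNC ⊢
  intro u v hu hv huv hdisj
  have hdisjN : N \ C ∩ (u ∩ v) = ∅ :=
    subset_empty_iff.1 (hdisj ▸ inter_subset_inter_left _ (sdiff_subset_sdiff_left hNW))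
  wlog hNu : N \ C ⊆ u generalizing u v
  · have hNv := (hNC u v hu hv ((sdiff_subset_sdiff_left hNW).trans huv) hdisjN).resolve_left hNu
    rw [union_comm] at huv
    rw [inter_comm u v] at hdisj hdisjN
    exact (this v u hv hu huv hdisj hdisjN hNv).symm
  have hWC : IsOpen (W \ C) := hWo.sdiff hC
  have hcover : W ⊆ (W \ C ∩ u ∪ N) ∪ (W \ C ∩ v) := fun x hx => by
    by_cases hxC : x ∈ C
    · exact .inl (.inr (hCN hxC))
    · exact (huv ⟨hx, hxC⟩).imp (fun h => .inl ⟨⟨hx, hxC⟩, h⟩) fun h => ⟨⟨hx, hxC⟩, h⟩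
  have hempty : W ∩ ((W \ C ∩ u ∪ N) ∩ (W \ C ∩ v)) = ∅ := by
    refine eq_empty_iff_forall_notMem.2 fun x hx => eq_empty_iff_forall_notMem.1 hdisj x ?_
    obtain ⟨-, hxu | hxN, hxWC, hxv⟩ := hx
    · exact ⟨hxWC, hxu.2, hxv⟩
    · exact ⟨hxWC, hNu ⟨hxN, hxWC.2⟩, hxv⟩
  refine (isPreconnected_iff_subset_of_disjoint.1 hW _ _ ((hWC.inter hu).union hN) (hWC.inter hv)
    hcover hempty).imp (fun h x hx => ?_) fun h x hx => (h hx.1).2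
  exact (h hx.1).elim (·.2) fun hxN => hNu ⟨hxN, hx.2⟩

lemma isPreconnected_ball_sdiff_closedBall {E : Type*} [NormedAddCommGroup E] [NormedSpace ℝ E]
    (hE : 1 < Module.rank ℝ E) (p : E) {ρ : ℝ} (hρ : 0 ≤ ρ) (ρ' : ℝ) :
    IsPreconnected (ball p ρ' \ closedBall p ρ) := by
  have hpolar : ball p ρ' \ closedBall p ρ =
      (fun x : E × ℝ => p + x.2 • x.1) '' (sphere 0 1 ×ˢ Ioo ρ ρ') := by
    ext x
    rw [Set.mem_sdiff, mem_ball, mem_closedBall, not_le, dist_eq_norm]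
    constructor
    · rintro ⟨hlt, hgt⟩
      have hne : ‖x - p‖ ≠ 0 := (hρ.trans_lt hgt).ne'
      refine ⟨(‖x - p‖⁻¹ • (x - p), ‖x - p‖), ⟨?_, hgt, hlt⟩, ?_⟩
      · rw [mem_sphere_zero_iff_norm, norm_smul, norm_inv, norm_norm, inv_mul_cancel₀ hne]
      · simp only [smul_inv_smul₀ hne, add_sub_cancel]
    · rintro ⟨⟨y, t⟩, ⟨hy, hgt, hlt⟩, rfl⟩
      rw [add_sub_cancel_left, norm_smul, mem_sphere_zero_iff_norm.1 hy,
        Real.norm_of_nonneg (hρ.trans hgt.le), mul_one]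
      exact ⟨hlt, hgt⟩
  rw [hpolar]
  exact ((isPreconnected_sphere hE 0 1).prod isPreconnected_Ioo).image _ (by fun_prop)

lemma exists_ball_superset {E : Type*} [NormedAddCommGroup E] [NormedSpace ℝ E] [ProperSpace E]
    {W : Set E} (hW : IsOpen W) {p : E} {ρ : ℝ} (hρ : 0 ≤ ρ) (h : closedBall p ρ ⊆ W) :
    ∃ ρ', ρ < ρ' ∧ ball p ρ' ⊆ W := by
  obtain ⟨δ, hδ, hδW⟩ := (isCompact_closedBall p ρ).exists_thickening_subset_open hW h
  rw [thickening_closedBall hδ hρ] at hδW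
  exact ⟨δ + ρ, lt_add_of_pos_left ρ hδ, hδW⟩

lemma one_lt_rank_real (E : Type*) [AddCommGroup E] [Module ℂ E] [Nontrivial E] :
    1 < Module.rank ℝ E := by
  rw [rank_real_of_complex]
  calc (1 : Cardinal) < 2 * 1 := by norm_num
    _ ≤ 2 * Module.rank ℂ E := by gcongr; exact Cardinal.one_le_iff_pos.2 rank_pos

section Filling

variable {E : Type u} [NormedAddCommGroup E] [InnerProductSpace ℂ E] [FiniteDimensional ℂ E]
  {W K : Set E} {f : E → E} {p q : E} {ρ : ℝ}

lemma isPreconnected_sdiff_closedBall [Nontrivial E] (hWo : IsOpen W) (hW : IsPreconnected W)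
    (hρ : 0 ≤ ρ) (hpW : closedBall p ρ ⊆ W) : IsPreconnected (W \ closedBall p ρ) := by
  have : ProperSpace E := FiniteDimensional.proper ℂ E
  obtain ⟨ρ', hρ', hρ'W⟩ := exists_ball_superset hWo hρ hpW
  exact isPreconnected_sdiff_of_subset hW hWo isOpen_ball isClosed_closedBall
    (closedBall_subset_ball hρ') hρ'W
    (isPreconnected_ball_sdiff_closedBall (one_lt_rank_real E) p hρ ρ')

lemma IsBallEmbedding.exists_mem_image (hf : IsBallEmbedding f W) (hWo : IsOpen W)
    (hW : IsPreconnected W) (hK : IsCompact K) (hKf : K ⊆ f '' ball 0 1) (hq : q ∈ W) :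
    ∃ Φ, IsBallEmbedding Φ W ∧ K ⊆ Φ '' ball 0 1 ∧ q ∈ Φ '' ball 0 1 := by
  let reachable : Set E := {q | ∃ Φ, IsBallEmbedding Φ W ∧ K ⊆ Φ '' ball 0 1 ∧ q ∈ Φ '' ball 0 1}
  have hopen : IsOpen reachable := by
    refine isOpen_iff_mem_nhds.2 ?_
    rintro x ⟨Φ, hΦ, hKΦ, hx⟩
    filter_upwards [hΦ.isOpen_image.mem_nhds hx] with y hy using ⟨Φ, hΦ, hKΦ, hy⟩
  have hzero : f 0 ∈ f '' ball 0 1 := mem_image_of_mem _ (mem_ball_self one_pos)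
  refine hW.subset_of_closure_inter_subset hopen
    ⟨f 0, hf.image_subset hzero, f, hf, hKf, hzero⟩ ?_ hq
  rintro x ⟨hx, hxW⟩
  obtain ⟨δ, hδ, hδW⟩ := Metric.isOpen_iff.1 hWo x hxW
  obtain ⟨y, ⟨Φ, hΦ, hKΦ, hy⟩, hxy⟩ := Metric.mem_closure_iff.1 hx δ hδ
  by_cases hxΦ : x ∈ Φ '' ball 0 1
  · exact ⟨Φ, hΦ, hKΦ, hxΦ⟩
  · obtain ⟨Ψ, hΨ, hKΨ, y', -, hball⟩ :=
      hΦ.exists_fill hWo hK hKΦ hxΦ hy (dist_comm x y ▸ hxy) hδW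
    exact ⟨Ψ, hΨ, hKΨ, hball (mem_closedBall_self (by positivity))⟩

lemma IsBallEmbedding.exists_fill_closedBall [Nontrivial E]
    (hf : IsBallEmbedding f (W \ closedBall p ρ)) (hWo : IsOpen W) (hW : IsPreconnected W)
    (hρ : 0 ≤ ρ) (hpW : closedBall p ρ ⊆ W) (hK : IsCompact K) (hKf : K ⊆ f '' ball 0 1) :
    ∃ Φ, IsBallEmbedding Φ W ∧ K ⊆ Φ '' ball 0 1 ∧ closedBall p (ρ / 100) ⊆ Φ '' ball 0 1 := by
  have : ProperSpace E := FiniteDimensional.proper ℂ E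
  obtain ⟨ρ', hρ', hρ'W⟩ := exists_ball_superset hWo hρ hpW
  obtain ⟨σ, hρσ, hσρ'⟩ := exists_between hρ'
  obtain ⟨v, hv⟩ := exists_norm_eq E (hρ.trans hρσ.le)
  have hdist : dist (p + v) p = σ := by rw [dist_self_add_left, hv]
  have hq : p + v ∈ W \ closedBall p ρ :=
    ⟨hρ'W (hdist.trans_lt hσρ'), fun h => hρσ.not_ge (hdist ▸ h)⟩
  obtain ⟨Φ, hΦ, hKΦ, hqΦ⟩ := hf.exists_mem_image (hWo.sdiff isClosed_closedBall)
    (isPreconnected_sdiff_closedBall hWo hW hρ hpW) hK hKf hq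
  obtain ⟨Ψ, hΨ, hKΨ, y, hy, hball⟩ := (hΦ.mono sdiff_subset).exists_fill hWo hK hKΦ
    (fun h => (hΦ.image_subset h).2 (mem_closedBall_self hρ)) hqΦ (hdist.trans_lt hσρ') hρ'W
  have hρy : ρ ≤ dist y p := (not_le.1 (hΦ.image_subset hy).2).le
  exact ⟨Ψ, hΨ, hKΨ, (closedBall_subset_closedBall (by linarith)).trans hball⟩

lemma IsBallEmbedding.exists_fill_finset [Nontrivial E] {ι : Type*} {t : Finset ι} {c : ι → E}
    {r : ι → ℝ} (hf : IsBallEmbedding f (W \ ⋃ i ∈ t, closedBall (c i) (r i))) (hWo : IsOpen W)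
    (hW : IsPreconnected W) (hr : ∀ i ∈ t, 0 ≤ r i)
    (hdisj : (t : Set ι).PairwiseDisjoint fun i => closedBall (c i) (r i))
    (htW : ∀ i ∈ t, closedBall (c i) (r i) ⊆ W) (hK : IsCompact K) (hKf : K ⊆ f '' ball 0 1) :
    ∃ Φ, IsBallEmbedding Φ W ∧ K ⊆ Φ '' ball 0 1 ∧
      ∀ i ∈ t, closedBall (c i) (r i / 100) ⊆ Φ '' ball 0 1 := by
  classical
  have : ProperSpace E := FiniteDimensional.proper ℂ E
  induction t using Finset.induction_on generalizing W with
  | empty => exact ⟨f, hf.mono sdiff_subset, hKf, by simp⟩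
  | insert j t hj ih =>
    simp only [Finset.mem_insert, forall_eq_or_imp] at hr htW ⊢
    rw [Finset.coe_insert, pairwiseDisjoint_insert_of_notMem hj] at hdisj
    rw [Finset.set_biUnion_insert, ← sdiff_sdiff] at hf
    obtain ⟨Φ, hΦ, hKΦ, htΦ⟩ := ih hf (hWo.sdiff isClosed_closedBall)
      (isPreconnected_sdiff_closedBall hWo hW hr.1 htW.1) hr.2 hdisj.1
      fun i hi => subset_sdiff.2 ⟨htW.2 i hi, (hdisj.2 i hi).symm⟩
    obtain ⟨Ψ, hΨ, hKΨ, hjΨ⟩ := hΦ.exists_fill_closedBall hWo hW hr.1 htW.1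
      (hK.union (t.isCompact_biUnion fun i _ => isCompact_closedBall (c i) (r i / 100)))
      (union_subset hKΦ (iUnion₂_subset htΦ))
    rw [union_subset_iff, iUnion₂_subset_iff] at hKΨ
    exact ⟨Ψ, hΨ, hKΨ.1, hjΨ, hKΨ.2⟩

end Filling

/-! ### Exhausting the volume -/

lemma exists_finset_half_le_sum {ι : Type*} {f : ι → ENNReal} {a : ENNReal} (ha : a ≠ ⊤)
    (h : a ≤ ∑' i, f i) : ∃ t : Finset ι, a / 2 ≤ ∑ i ∈ t, f i := by
  rcases eq_or_ne a 0 with rfl | h0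
  · exact ⟨∅, by simp⟩
  · have hlt := (ENNReal.half_lt_self h0 ha).trans_le h
    rw [ENNReal.tsum_eq_iSup_sum, lt_iSup_iff] at hlt
    exact hlt.imp fun _ => le_of_lt

lemma exists_finset_half_measureReal_le_sum {X : Type*} [MetricSpace X]
    [SecondCountableTopology X] [MeasurableSpace X] [OpensMeasurableSpace X]
    [HasBesicovitchCovering X] (μ : Measure X) [SFinite μ] {G : Set X} (hG : IsOpen G)
    (hfin : μ G ≠ ⊤) :
    ∃ (t : Finset X) (r : X → ℝ), (∀ x ∈ t, 0 < r x) ∧ (∀ x ∈ t, closedBall x (r x) ⊆ G) ∧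
      ((t : Set X).PairwiseDisjoint fun x => closedBall x (r x)) ∧
      μ.real G / 2 ≤ ∑ x ∈ t, μ.real (closedBall x (r x)) := by
  have hsmall : ∀ x ∈ G, ∀ δ > 0, ({r | closedBall x r ⊆ G} ∩ Ioo 0 δ).Nonempty := by
    intro x hx δ hδ
    obtain ⟨η, hη, hηG⟩ := Metric.isOpen_iff.1 hG x hx
    obtain ⟨r, hr0, hr⟩ := exists_between (lt_min hδ hη)
    exact ⟨r, (closedBall_subset_ball (hr.trans_le (min_le_right _ _))).trans hηG, hr0,
      hr.trans_le (min_le_left _ _)⟩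
  obtain ⟨T, r, hT, -, hTr, hcov, hdisj⟩ := Besicovitch.exists_disjoint_closedBall_covering_ae μ
    (fun x => {r | closedBall x r ⊆ G}) G hsmall (fun _ => 1) fun _ _ => one_pos
  have hle : μ G ≤ ∑' x : T, μ (closedBall (x : X) (r x)) :=
    calc μ G ≤ μ (⋃ x ∈ T, closedBall x (r x)) := measure_mono_ae (ae_le_set.2 hcov)
      _ ≤ _ := measure_biUnion_le μ hT _
  obtain ⟨t, ht⟩ := exists_finset_half_le_sum hfin hle
  refine ⟨t.map (Function.Embedding.subtype _), r, ?_, ?_, hdisj.subset (by simp), ?_⟩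
  · simpa using fun x hx _ => (hTr x hx).2.1
  · simpa using fun x hx _ => (hTr x hx).1
  · have hne (x : T) : μ (closedBall (x : X) (r x)) ≠ ⊤ :=
      ne_top_of_le_ne_top hfin (measure_mono (hTr x x.2).1)
    have hreal := ENNReal.toReal_mono (ENNReal.sum_ne_top.2 fun x _ => hne x) ht
    rw [ENNReal.toReal_div, ENNReal.toReal_sum fun x _ => hne x, ENNReal.toReal_ofNat] at hreal
    simpa [Measure.real] using hreal

lemma exists_isCompact_measureReal_sub_lt {X : Type*} [TopologicalSpace X] [T2Space X]
    [MeasurableSpace X] [OpensMeasurableSpace X] {μ : Measure X} [μ.InnerRegularCompactLTTop]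
    {A : Set X} (hA : MeasurableSet A) (hfin : μ A ≠ ⊤) {ε : ℝ} (hε : 0 < ε) :
    ∃ K ⊆ A, IsCompact K ∧ μ.real A - ε < μ.real K := by
  obtain ⟨K, hKA, hK, hlt⟩ := hA.exists_isCompact_sdiff_lt hfin (ENNReal.ofReal_pos.2 hε).ne'
  refine ⟨K, hKA, hK, ?_⟩
  have hreal := (ENNReal.lt_ofReal_iff_toReal_lt hlt.ne_top).1 hlt
  have hsub := measureReal_sdiff (μ := μ) hKA hK.measurableSet hfin
  rw [Measure.real] at hsub
  linarith

lemma measureReal_add_sum_le {E : Type*} [NormedAddCommGroup E] [NormedSpace ℝ E]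
    [FiniteDimensional ℝ E] [MeasurableSpace E] [BorelSpace E] (μ : Measure E)
    [μ.IsAddHaarMeasure] {K O : Set E} {t : Finset E} {r : E → ℝ} (hr : ∀ x ∈ t, 0 ≤ r x)
    (hdisj : (t : Set E).PairwiseDisjoint fun x => closedBall x (r x))
    (hKt : ∀ x ∈ t, Disjoint K (closedBall x (r x))) (hKO : K ⊆ O)
    (htO : ∀ x ∈ t, closedBall x (r x / 100) ⊆ O) (hO : μ O ≠ ⊤) :
    μ.real K + (1 / 100) ^ Module.finrank ℝ E * ∑ x ∈ t, μ.real (closedBall x (r x)) ≤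
      μ.real O := by
  have : ProperSpace E := FiniteDimensional.proper ℝ E
  have hsub : ∀ x ∈ t, closedBall x (r x / 100) ⊆ closedBall x (r x) := fun x hx =>
    closedBall_subset_closedBall (div_le_self (hr x hx) (by norm_num))
  have hscale : ∀ x ∈ t, μ.real (closedBall x (r x / 100)) =
      (1 / 100) ^ Module.finrank ℝ E * μ.real (closedBall x (r x)) := fun x hx => by
    rw [Measure.addHaar_real_closedBall μ x (div_nonneg (hr x hx) (by norm_num)),
      Measure.addHaar_real_closedBall μ x (hr x hx), ← mul_assoc, ← mul_pow, one_div_mul_eq_div]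
  have hdisj' : Disjoint K (⋃ x ∈ t, closedBall x (r x / 100)) :=
    disjoint_iUnion₂_right.2 fun x hx => (hKt x hx).mono_right (hsub x hx)
  have hUO : K ∪ ⋃ x ∈ t, closedBall x (r x / 100) ⊆ O :=
    union_subset hKO (iUnion₂_subset htO)
  rw [Finset.mul_sum, ← Finset.sum_congr rfl hscale, ← measureReal_biUnion_finset
      (fun x hx y hy hxy => (hdisj hx hy hxy).mono (hsub x hx) (hsub y hy))
      (fun _ _ => measurableSet_closedBall) fun _ _ => measure_closedBall_lt_top.ne,
    ← measureReal_union hdisj' (t.measurableSet_biUnion fun _ _ => measurableSet_closedBall)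
      (ne_top_of_le_ne_top hO (measure_mono hKO))
      (ne_top_of_le_ne_top hO (measure_mono (subset_union_right.trans hUO)))]
  exact measureReal_mono hUO hO

section Exhaustion

variable {E : Type u} [NormedAddCommGroup E] [InnerProductSpace ℂ E] [FiniteDimensional ℂ E]
  [Nontrivial E] [MeasurableSpace E] [BorelSpace E] (μ : Measure E) [μ.IsAddHaarMeasure]
  {U K : Set E} {f : E → E}

lemma IsBallEmbedding.exists_measureReal_add_mul_le (hf : IsBallEmbedding f U) (hU : IsOpen U)
    (hconn : IsPreconnected U) (hfin : μ U ≠ ⊤) (hK : IsCompact K) (hKf : K ⊆ f '' ball 0 1) :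
    ∃ Φ, IsBallEmbedding Φ U ∧ K ⊆ Φ '' ball 0 1 ∧
      μ.real K + (1 / 100) ^ Module.finrank ℝ E / 2 * (μ.real U - μ.real (f '' ball 0 1)) ≤
        μ.real (Φ '' ball 0 1) := by
  have : FiniteDimensional ℝ E := FiniteDimensional.complexToReal E
  have : ProperSpace E := FiniteDimensional.proper ℂ E
  have hffin : μ (f '' ball 0 1) ≠ ⊤ := ne_top_of_le_ne_top hfin (measure_mono hf.image_subset)
  obtain ⟨s, hs0, hs1, hKs⟩ := hf.exists_radius hK hKf
  have hball : ball (0 : E) s ⊆ ball 0 1 := ball_subset_ball hs1.le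
  have hcball : closedBall (0 : E) s ⊆ ball 0 1 := closedBall_subset_ball hs1
  have hcompact : IsCompact (f '' closedBall 0 s) :=
    (isCompact_closedBall 0 s).image_of_continuousOn (hf.differentiableOn.continuousOn.mono hcball)
  obtain ⟨t, r, hr, htU, hdisj, hvol⟩ := exists_finset_half_measureReal_le_sum μ
    (hU.sdiff hcompact.isClosed) (ne_top_of_le_ne_top hfin (measure_mono sdiff_subset))
  have havoid : ∀ x ∈ t, Disjoint (f '' ball 0 s) (closedBall x (r x)) := fun x hx =>
    ((subset_sdiff.1 (htU x hx)).2.mono_right (image_mono ball_subset_closedBall)).symm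
  have hshrunk : IsBallEmbedding (fun z => f ((s : ℂ) • z)) (U \ ⋃ x ∈ t, closedBall x (r x)) :=
    .comp_smul hs0 (hf.differentiableOn.mono hball) (hf.injOn.mono hball) <|
      subset_sdiff.2 ⟨(image_mono hball).trans hf.image_subset, disjoint_iUnion₂_right.2 havoid⟩
  obtain ⟨Φ, hΦ, hKΦ, htΦ⟩ := hshrunk.exists_fill_finset hU hconn (fun x hx => (hr x hx).le) hdisj
    (fun x hx => (htU x hx).trans sdiff_subset) hK (by rwa [image_comp_smul_ball f hs0, mul_one])
  refine ⟨Φ, hΦ, hKΦ, le_trans ?_ (measureReal_add_sum_le μ (fun x hx => (hr x hx).le) hdisj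
    (fun x hx => (havoid x hx).mono_left hKs) hKΦ htΦ
    (ne_top_of_le_ne_top hfin (measure_mono hΦ.image_subset)))⟩
  have hcompl : μ.real U - μ.real (f '' ball 0 1) ≤ μ.real (U \ f '' closedBall 0 s) :=
    (sub_le_sub_left (measureReal_mono (image_mono hcball) hffin) _).trans
      (le_measureReal_sdiff hcompact.measure_lt_top.ne)
  rw [div_mul_eq_mul_div, mul_div_assoc]
  gcongr
  linarith

/-- The supremum of the measures of the images is `μ U`, since otherwise a nearly optimal image
could be enlarged by more than its distance to the supremum. -/
lemma IsBallEmbedding.exists_measureReal_sub_le (hf : IsBallEmbedding f U) (hU : IsOpen U)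
    (hconn : IsPreconnected U) (hfin : μ U ≠ ⊤) (hK : IsCompact K) (hKf : K ⊆ f '' ball 0 1)
    {ε : ℝ} (hε : 0 < ε) :
    ∃ Φ, IsBallEmbedding Φ U ∧ K ⊆ Φ '' ball 0 1 ∧ μ.real U - ε ≤ μ.real (Φ '' ball 0 1) := by
  have : ProperSpace E := FiniteDimensional.proper ℂ E
  by_contra! hlt
  let volumes : Set ℝ :=
    {v | ∃ Φ, IsBallEmbedding Φ U ∧ K ⊆ Φ '' ball 0 1 ∧ μ.real (Φ '' ball 0 1) = v}
  have hbdd : BddAbove volumes := by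
    refine ⟨μ.real U, ?_⟩
    rintro _ ⟨Φ, hΦ, -, rfl⟩
    exact measureReal_mono hΦ.image_subset hfin
  let c : ℝ := (1 / 100) ^ Module.finrank ℝ E / 2
  have hc : 0 < c := by positivity
  have hcε : 0 < c * ε / 2 := half_pos (mul_pos hc hε)
  obtain ⟨_, ⟨Φ, hΦ, hKΦ, rfl⟩, hsup⟩ := exists_lt_of_lt_csSup (s := volumes)
    ⟨_, f, hf, hKf, rfl⟩ (sub_lt_self (sSup volumes) hcε)
  obtain ⟨L, hLΦ, hL, hμL⟩ := exists_isCompact_measureReal_sub_lt (μ := μ)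
    hΦ.isOpen_image.measurableSet
    (ne_top_of_le_ne_top hfin (measure_mono hΦ.image_subset)) hcε
  obtain ⟨Ψ, hΨ, hKΨ, (hgain : μ.real (K ∪ L) + c * _ ≤ _)⟩ :=
    hΦ.exists_measureReal_add_mul_le μ hU hconn hfin (hK.union hL) (union_subset hKΦ hLΦ)
  have hΨsup : μ.real (Ψ '' ball 0 1) ≤ sSup volumes :=
    le_csSup hbdd ⟨Ψ, hΨ, subset_union_left.trans hKΨ, rfl⟩
  have hμKL : μ.real L ≤ μ.real (K ∪ L) :=
    measureReal_mono subset_union_right (hK.union hL).measure_lt_top.ne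
  have hdeficit : c * ε < c * (μ.real U - μ.real (Φ '' ball 0 1)) :=
    mul_lt_mul_of_pos_left (by linarith [hlt Φ hΦ hKΦ]) hc
  linarith

end Exhaustion

lemma volume_ball_half_le_one {E : Type*} [NormedAddCommGroup E] [InnerProductSpace ℝ E]
    [FiniteDimensional ℝ E] [MeasurableSpace E] [BorelSpace E] (x : E) :
    volume (ball x (1 / 2)) ≤ 1 := by
  let b := stdOrthonormalBasis ℝ E
  let coords : E → Fin (Module.finrank ℝ E) → ℝ := fun y => (b.repr y).ofLp
  have hcoords : MeasurePreserving coords :=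
    (PiLp.volume_preserving_ofLp _).comp b.measurePreserving_repr
  have hsub : ball x (1 / 2) ⊆ coords ⁻¹' closedBall (coords x) (1 / 2) := fun y hy => by
    refine (dist_pi_le_iff (by norm_num)).2 fun i => ?_
    calc dist (b.repr y i) (b.repr x i) = ‖b.repr (y - x) i‖ := by
          rw [dist_eq_norm, map_sub, PiLp.sub_apply]
      _ ≤ ‖b.repr (y - x)‖ := PiLp.norm_apply_le _ i
      _ = dist y x := by rw [LinearIsometryEquiv.norm_map, dist_eq_norm]
      _ ≤ 1 / 2 := (mem_ball.1 hy).le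
  calc volume (ball x (1 / 2)) ≤ volume (coords ⁻¹' closedBall (coords x) (1 / 2)) :=
        measure_mono hsub
    _ = volume (closedBall (coords x) (1 / 2)) :=
        hcoords.measure_preimage measurableSet_closedBall.nullMeasurableSet
    _ = 1 := by rw [Real.volume_pi_closedBall _ (by norm_num)]; norm_num

lemma rhoConst_le_one (m : ℕ) : rhoConst m ≤ 1 := by
  have : FiniteDimensional ℝ (EuclideanSpace ℂ (Fin m)) := FiniteDimensional.complexToReal _
  exact ENNReal.toReal_mono ENNReal.one_ne_top (volume_ball_half_le_one _)

end BallFilling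

theorem exists_injective_holomorphic_ball_volume_increase_general {E : Type*}
    [NormedAddCommGroup E] [InnerProductSpace ℂ E] [FiniteDimensional ℂ E] [MeasurableSpace E]
    [BorelSpace E] (μ : Measure E) [μ.IsAddHaarMeasure] {U K : Set E} (hU : IsOpen U)
    (hconn : IsPreconnected U) (hfin : μ U ≠ ⊤) {F : E → E} (hF : DifferentiableOn ℂ F (ball 0 1))
    (hinj : Set.InjOn F (ball 0 1)) (hFU : F '' ball 0 1 ⊆ U) (hK : IsCompact K)
    (hKF : K ⊆ F '' ball 0 1) {ε : ℝ} (hε : 0 < ε) :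
    ∃ F' : E → E, DifferentiableOn ℂ F' (ball 0 1) ∧ Set.InjOn F' (ball 0 1) ∧
      F' '' ball 0 1 ⊆ U ∧ K ⊆ F' '' ball 0 1 ∧ μ.real U - ε ≤ μ.real (F' '' ball 0 1) := by
  rcases subsingleton_or_nontrivial E with hE | hE
  · have hUF : F '' ball 0 1 = U :=
      hFU.antisymm fun x _ => ⟨0, mem_ball_self one_pos, Subsingleton.elim _ _⟩
    exact ⟨F, hF, hinj, hFU, hKF, hUF ▸ sub_le_self _ hε.le⟩
  · obtain ⟨Φ, hΦ, hKΦ, hvol⟩ := BallFilling.IsBallEmbedding.exists_measureReal_sub_le μ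
      ⟨hF, hinj, hFU⟩ hU hconn hfin hK hKF hε
    exact ⟨Φ, hΦ.differentiableOn, hΦ.injOn, hΦ.image_subset, hKΦ, hvol⟩

/-- **Lemma 2.4.** Given an injective holomorphic map `F : B^m(0,1) → U` into a bounded
connected open set `U ⊆ ℂ^m`, `0 < s < 1` and `ε > 0`, there is an injective holomorphic
map `F' : B^m(0,1) → U` with `F'(B^m(0,1)) ⊇ F(B^m(0,s))` and
`vol(F'(B^m(0,1))) ≥ vol(F(B^m(0,1))) + ρ_m/(2·32^{2m})·(vol(U) − vol(F(B^m(0,1)))) − ε`. -/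
theorem exists_injective_holomorphic_ball_volume_increase {m : ℕ}
    (U : Set (EuclideanSpace ℂ (Fin m))) (hUopen : IsOpen U) (hUconn : IsConnected U)
    (hUbdd : Bornology.IsBounded U)
    (F : EuclideanSpace ℂ (Fin m) → EuclideanSpace ℂ (Fin m))
    (hF : DifferentiableOn ℂ F (ball 0 1)) (hFinj : Set.InjOn F (ball 0 1))
    (hFU : F '' ball 0 1 ⊆ U)
    (s ε : ℝ) (hs0 : 0 < s) (hs1 : s < 1) (hε : 0 < ε) :
    ∃ F' : EuclideanSpace ℂ (Fin m) → EuclideanSpace ℂ (Fin m),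
      DifferentiableOn ℂ F' (ball 0 1) ∧ Set.InjOn F' (ball 0 1) ∧
      F' '' ball 0 1 ⊆ U ∧ F '' ball 0 s ⊆ F' '' ball 0 1 ∧
      (volume (F' '' ball 0 1)).toReal ≥
        (volume (F '' ball 0 1)).toReal +
          rhoConst m / (2 * 32 ^ (2 * m)) *
            ((volume U).toReal - (volume (F '' ball 0 1)).toReal) - ε := by
  have hfin : volume U ≠ ⊤ := hUbdd.measure_lt_top.ne
  have hK : IsCompact (F '' closedBall 0 s) := (isCompact_closedBall 0 s).image_of_continuousOn
    (hF.continuousOn.mono (closedBall_subset_ball hs1))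
  obtain ⟨F', hF', hinj, hF'U, hKF', hvol⟩ :=
    exists_injective_holomorphic_ball_volume_increase_general volume hUopen hUconn.isPreconnected
      hfin hF hFinj hFU hK (Set.image_mono (closedBall_subset_ball hs1)) hε
  refine ⟨F', hF', hinj, hF'U, (Set.image_mono ball_subset_closedBall).trans hKF', ?_⟩
  have hdeficit : 0 ≤ volume.real U - volume.real (F '' ball 0 1) :=
    sub_nonneg.2 (measureReal_mono hFU hfin)
  have hcoeff : rhoConst m / (2 * 32 ^ (2 * m)) ≤ 1 := by
    refine div_le_one_of_le₀ ((BallFilling.rhoConst_le_one m).trans ?_) (by positivity)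
    linarith [one_le_pow₀ (n := 2 * m) (by norm_num : (1 : ℝ) ≤ 32)]
  have hgain := mul_le_of_le_one_left hdeficit hcoeff
  simp only [Measure.real] at hgain hvol
  linarith
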